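/- For a finite-dimensional H_m-module M and a finite-dimensional H_n-module N there is an isomorphism of H_{m+n}-modules (ind^{m+n}_{m,n} M ⊠ N)^τ ≅ ind^{m+n}_{n,m} (N^τ ⊠ M^τ). -/

import Mathlib

set_option maxHeartbeats 1000000

namespace HC

/-- Generators of the affine Hecke–Clifford superalgebra `H_n`. -/
inductive Gen (n : ℕ) : Type
  | X : Fin n → Gen n
  | Xinv : Fin n → Gen n
  | C : Fin n → Gen n
  | T : Fin (n - 1) → Gen n

/-- The node `i` of `Fin n`, for `i : Fin (n-1)` (1-based: the node `i`). -/
def lo {n : ℕ} (i : Fin (n - 1)) : Fin n :=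
  ⟨i.val, by have := i.isLt; omega⟩

/-- The node `i+1` of `Fin n`, for `i : Fin (n-1)`. -/
def hi {n : ℕ} (i : Fin (n - 1)) : Fin n :=
  ⟨i.val + 1, by have := i.isLt; omega⟩

variable (F : Type) [Field F]

/-- The free algebra on the generators. -/
abbrev FA (n : ℕ) : Type := FreeAlgebra F (Gen n)

noncomputable def fx {n : ℕ} (i : Fin n) : FA F n := FreeAlgebra.ι F (Gen.X i)
noncomputable def fxinv {n : ℕ} (i : Fin n) : FA F n := FreeAlgebra.ι F (Gen.Xinv i)
noncomputable def fc {n : ℕ} (i : Fin n) : FA F n := FreeAlgebra.ι F (Gen.C i)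
noncomputable def ft {n : ℕ} (i : Fin (n - 1)) : FA F n := FreeAlgebra.ι F (Gen.T i)

/-- The defining relations of the affine Hecke–Clifford superalgebra, with parameter
`q` and `ξ = q - q⁻¹`. -/
inductive Rel (q : F) (n : ℕ) : FA F n → FA F n → Prop
  | XXinv (i : Fin n) : Rel q n (fx F i * fxinv F i) 1
  | XinvX (i : Fin n) : Rel q n (fxinv F i * fx F i) 1
  | XX (i j : Fin n) : Rel q n (fx F i * fx F j) (fx F j * fx F i)
  | XiXi (i j : Fin n) : Rel q n (fxinv F i * fxinv F j) (fxinv F j * fxinv F i)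
  | XXi (i j : Fin n) (h : i ≠ j) : Rel q n (fx F i * fxinv F j) (fxinv F j * fx F i)
  | CC (i : Fin n) : Rel q n (fc F i * fc F i) 1
  | Canti (i j : Fin n) (h : i ≠ j) : Rel q n (fc F i * fc F j) (-(fc F j * fc F i))
  | CX (i : Fin n) : Rel q n (fc F i * fx F i) (fxinv F i * fc F i)
  | CXi (i : Fin n) : Rel q n (fc F i * fxinv F i) (fx F i * fc F i)
  | CXo (i j : Fin n) (h : i ≠ j) : Rel q n (fc F i * fx F j) (fx F j * fc F i)
  | CXio (i j : Fin n) (h : i ≠ j) : Rel q n (fc F i * fxinv F j) (fxinv F j * fc F i)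
  | Tquad (i : Fin (n - 1)) : Rel q n (ft F i * ft F i) ((q - q⁻¹) • ft F i + 1)
  | Tbraid (i j : Fin (n - 1)) (h : (j : ℕ) = (i : ℕ) + 1) :
      Rel q n (ft F i * ft F j * ft F i) (ft F j * ft F i * ft F j)
  | TTfar (i j : Fin (n - 1)) (h : (i : ℕ) + 1 < (j : ℕ)) :
      Rel q n (ft F i * ft F j) (ft F j * ft F i)
  | TC (i : Fin (n - 1)) : Rel q n (ft F i * fc F (lo i)) (fc F (hi i) * ft F i)
  | TCo (i : Fin (n - 1)) (j : Fin n) (h1 : j ≠ lo i) (h2 : j ≠ hi i) :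
      Rel q n (ft F i * fc F j) (fc F j * ft F i)
  | TXo (i : Fin (n - 1)) (j : Fin n) (h1 : j ≠ lo i) (h2 : j ≠ hi i) :
      Rel q n (ft F i * fx F j) (fx F j * ft F i)
  | TXio (i : Fin (n - 1)) (j : Fin n) (h1 : j ≠ lo i) (h2 : j ≠ hi i) :
      Rel q n (ft F i * fxinv F j) (fxinv F j * ft F i)
  | cross (i : Fin (n - 1)) :
      Rel q n ((ft F i + (q - q⁻¹) • (fc F (lo i) * fc F (hi i))) * fx F (lo i) * ft F i)
        (fx F (hi i))

/-- The affine Hecke–Clifford superalgebra `H_n` over `F` with parameter `q`. -/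
abbrev H (q : F) (n : ℕ) : Type := RingQuot (Rel F q n)

noncomputable def X (q : F) {n : ℕ} (i : Fin n) : H F q n :=
  RingQuot.mkAlgHom F (Rel F q n) (fx F i)

noncomputable def Xinv (q : F) {n : ℕ} (i : Fin n) : H F q n :=
  RingQuot.mkAlgHom F (Rel F q n) (fxinv F i)

noncomputable def C (q : F) {n : ℕ} (i : Fin n) : H F q n :=
  RingQuot.mkAlgHom F (Rel F q n) (fc F i)

noncomputable def T (q : F) {n : ℕ} (i : Fin (n - 1)) : H F q n :=
  RingQuot.mkAlgHom F (Rel F q n) (ft F i)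

/-- `q` is either a primitive root of unity of odd order (including `q = 1`)
or not a root of unity at all (and `q ≠ 0`). -/
def GoodParam (q : F) : Prop :=
  q ≠ 0 ∧ ((∃ m : ℕ, Odd m ∧ IsPrimitiveRoot q m) ∨ ∀ m : ℕ, 0 < m → q ^ m ≠ 1)

/-- `X_i^a` for an integer exponent `a ∈ ℤ`. -/
noncomputable def XZ (q : F) {n : ℕ} (i : Fin n) (a : ℤ) : H F q n :=
  if 0 ≤ a then X F q i ^ a.toNat else Xinv F q i ^ (-a).toNat

/-- The monomial `X^α = X_1^{α_1} ⋯ X_n^{α_n}` for `α ∈ ℤ^n`. -/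
noncomputable def Xmon (q : F) {n : ℕ} (α : Fin n → ℤ) : H F q n :=
  ((List.finRange n).map fun i => XZ F q i (α i)).prod

/-- The monomial `C^β = C_1^{β_1} ⋯ C_n^{β_n}` for `β ∈ {0,1}^n`. -/
noncomputable def Cmon (q : F) {n : ℕ} (β : Fin n → Bool) : H F q n :=
  ((List.finRange n).map fun i => if β i then C F q i else 1).prod

/-- The basic transposition `s_i = (i, i+1)` of `S_n`. -/
def s {n : ℕ} (i : Fin (n - 1)) : Equiv.Perm (Fin n) := Equiv.swap (lo i) (hi i)

/-- The Coxeter length (number of inversions) of a permutation of `Fin n`. -/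
def len {n : ℕ} (w : Equiv.Perm (Fin n)) : ℕ :=
  ((Finset.univ : Finset (Fin n × Fin n)).filter fun p => p.1 < p.2 ∧ w p.2 < w p.1).card

/-- `Tw` is the family of standard basis elements `T_w`, `w ∈ S_n`: it satisfies
`T_1 = 1`, `T_{s_i} = T_i`, and `T_{s_i w} = T_i T_w` whenever `ℓ(s_i w) = ℓ(w) + 1`.
These conditions determine the family uniquely. -/
def IsTFam (q : F) {n : ℕ} (Tw : Equiv.Perm (Fin n) → H F q n) : Prop :=
  Tw 1 = 1 ∧ (∀ i : Fin (n - 1), Tw (s i) = T F q i) ∧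
    ∀ (i : Fin (n - 1)) (w : Equiv.Perm (Fin n)),
      len (s i * w) = len w + 1 → Tw (s i * w) = T F q i * Tw w

/-- `h` is the quantum characteristic of `q`:  the smallest positive integer with
`q^{1-h} + q^{3-h} + ⋯ + q^{h-1} = 0`. -/
def qcharEq (q : F) (h : ℕ) : Prop :=
  0 < h ∧ (∑ k ∈ Finset.range h, q ^ (1 - (h : ℤ) + 2 * (k : ℤ))) = 0 ∧
    ∀ h' : ℕ, 0 < h' → h' < h →
      (∑ k ∈ Finset.range h', q ^ (1 - (h' : ℤ) + 2 * (k : ℤ))) ≠ 0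

/-- `i ∈ I = {0, 1, …, ℓ}` where `ℓ = (h-1)/2` (no condition if the quantum
characteristic is infinite). -/
def memI (q : F) (i : ℕ) : Prop := ∀ h : ℕ, qcharEq F q h → 2 * i + 1 ≤ h

/-- `q(i) = 2(q^{2i+1} + q^{-2i-1})/(q + q⁻¹)`. -/
noncomputable def qres (q : F) (i : ℕ) : F :=
  2 * (q ^ (2 * i + 1) + q⁻¹ ^ (2 * i + 1)) / (q + q⁻¹)

/-- Index of the block containing position `k` (0-based), for a composition given as a
list of parts. -/
def blk : List ℕ → ℕ → ℕ
  | [], _ => 0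
  | a :: rest, k => if k < a then 0 else blk rest (k - a) + 1

/-- Membership in the Young subgroup `S_μ ⊆ S_n`. -/
def InYoung {n : ℕ} (μ : List ℕ) (w : Equiv.Perm (Fin n)) : Prop :=
  ∀ k : Fin n, blk μ (w k).val = blk μ k.val

/-- `μ` is a composition of `n`. -/
def IsComposition (μ : List ℕ) (n : ℕ) : Prop := (∀ a ∈ μ, 0 < a) ∧ μ.sum = n

/-- The parabolic subalgebra generated by all `X_i^{±1}`, `C_i`, and the `T_j` with
`j` in a set `J` of admissible indices. -/
def parabolicJ (q : F) {n : ℕ} (J : Set (Fin (n - 1))) : Subalgebra F (H F q n) :=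
  Algebra.adjoin F
    ((Set.range fun i : Fin n => X F q i) ∪ (Set.range fun i : Fin n => Xinv F q i) ∪
      (Set.range fun i : Fin n => C F q i) ∪ {h | ∃ j ∈ J, h = T F q j})

/-- The parabolic subalgebra `H_μ` for a composition `μ`. -/
def parabolicC (q : F) {n : ℕ} (μ : List ℕ) : Subalgebra F (H F q n) :=
  parabolicJ F q {j | InYoung μ (s j)}

/-- The classical parabolic subalgebra `H^cl_μ`, generated by the `T_j` with `s_j ∈ S_μ`. -/
def clparC (q : F) {n : ℕ} (μ : List ℕ) : Subalgebra F (H F q n) :=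
  Algebra.adjoin F {h | ∃ j : Fin (n - 1), InYoung μ (s j) ∧ h = T F q j}

/-- The finite Hecke–Clifford subalgebra `H^fn_n`, generated by all `C_i` and `T_j`. -/
def Hfin (q : F) (n : ℕ) : Subalgebra F (H F q n) :=
  Algebra.adjoin F
    ((Set.range fun i : Fin n => C F q i) ∪ {h | ∃ j : Fin (n - 1), h = T F q j})

/-- `x` is a minimal length `(S_μ, S_ν)`-double coset representative. -/
def IsMinDC {n : ℕ} (μ ν : List ℕ) (x : Equiv.Perm (Fin n)) : Prop :=
  ∀ u v : Equiv.Perm (Fin n), InYoung μ u → InYoung ν v → len x ≤ len (u * x * v)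

/-- `w ∈ S_μ x S_ν`. -/
def InDC {n : ℕ} (μ ν : List ℕ) (x w : Equiv.Perm (Fin n)) : Prop :=
  ∃ u v : Equiv.Perm (Fin n), InYoung μ u ∧ InYoung ν v ∧ w = u * x * v

/-- A covering step in the Bruhat order: multiplication by a reflection increasing length. -/
def BruhatStep {n : ℕ} (v w : Equiv.Perm (Fin n)) : Prop :=
  ∃ a b : Fin n, a ≠ b ∧ w = Equiv.swap a b * v ∧ len v < len w

/-- The Bruhat order on `S_n`. -/
def BruhatLE {n : ℕ} : Equiv.Perm (Fin n) → Equiv.Perm (Fin n) → Prop :=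
  Relation.ReflTransGen BruhatStep

/-- The space of `A`-equivariant linear maps between two representations of the
`F`-algebra `A`. -/
def eqvHoms {A : Type} [Ring A] [Algebra F A] {M N : Type}
    [AddCommGroup M] [Module F M] [AddCommGroup N] [Module F N]
    (ρM : A →ₐ[F] Module.End F M) (ρN : A →ₐ[F] Module.End F N) :
    Submodule F (M →ₗ[F] N) where
  carrier := {f | ∀ (x : A) (m : M), f (ρM x m) = ρN x (f m)}
  add_mem' := by
    intro f g hf hg x m
    simp only [LinearMap.add_apply, hf x m, hg x m, map_add]
  zero_mem' := by
    intro x m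
    simp only [LinearMap.zero_apply, map_zero]
  smul_mem' := by
    intro c f hf x m
    simp only [LinearMap.smul_apply, hf x m, map_smul]

/-- `(E, ρE, ι)` is the module induced along the algebra morphism `φ : B →ₐ A` from
the `B`-representation `(M, ρ)`, i.e. `E = A ⊗_B M`, characterized by its universal
property. -/
def IsInducedAlong {A B : Type} [Ring A] [Ring B] [Algebra F A] [Algebra F B]
    (φ : B →ₐ[F] A) {M : Type} [AddCommGroup M] [Module F M]
    (ρ : B →ₐ[F] Module.End F M) {E : Type} [AddCommGroup E] [Module F E]
    (ρE : A →ₐ[F] Module.End F E) (ι : M →ₗ[F] E) : Prop :=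
  (∀ (b : B) (m : M), ι (ρ b m) = ρE (φ b) (ι m)) ∧
    ∀ (P : Type) [AddCommGroup P] [Module F P],
      ∀ (ρP : A →ₐ[F] Module.End F P) (f : M →ₗ[F] P),
        (∀ (b : B) (m : M), f (ρ b m) = ρP (φ b) (f m)) →
        ∃! g : E →ₗ[F] P,
          (∀ (x : A) (e : E), g (ρE x e) = ρP x (g e)) ∧ ∀ m : M, g (ι m) = f m

/-- `δ` is the grading automorphism of the superalgebra `H_n`
(identity on even generators, `-1` on the odd generators `C_i`). -/
def IsGradingAut (q : F) {n : ℕ} (δ : H F q n →ₐ[F] H F q n) : Prop :=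
  (∀ i : Fin n, δ (X F q i) = X F q i) ∧ (∀ i : Fin n, δ (Xinv F q i) = Xinv F q i) ∧
    (∀ i : Fin n, δ (C F q i) = -C F q i) ∧ ∀ i : Fin (n - 1), δ (T F q i) = T F q i

/-- `τ` is the antiautomorphism of `H_n` with `τ(T_i) = T_i + ξ C_i C_{i+1}`,
`τ(C_j) = C_j`, `τ(X_j) = X_j`. -/
def IsTauAntiAut (q : F) {n : ℕ} (τ : H F q n →ₗ[F] H F q n) : Prop :=
  Function.Bijective τ ∧ (∀ a b : H F q n, τ (a * b) = τ b * τ a) ∧ τ 1 = 1 ∧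
    (∀ i : Fin (n - 1),
      τ (T F q i) = T F q i + (q - q⁻¹) • (C F q (lo i) * C F q (hi i))) ∧
    (∀ j : Fin n, τ (C F q j) = C F q j) ∧ (∀ j : Fin n, τ (X F q j) = X F q j) ∧
    ∀ j : Fin n, τ (Xinv F q j) = Xinv F q j

/-- `ρ'` is the representation of the subalgebra `B` obtained from the
`H_ν`-representation `ρν` by twisting with the isomorphism `φ_{x⁻¹}`
(determined by `X_i ↦ X_{x⁻¹ i}`, `C_i ↦ C_{x⁻¹ i}`, `T_w ↦ T_{x⁻¹ w x}`). -/
def IsTwistedRep (q : F) {n : ℕ} (ν : List ℕ) (x : Equiv.Perm (Fin n))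
    (B : Subalgebra F (H F q n)) {M : Type} [AddCommGroup M] [Module F M]
    (ρν : ↥(parabolicC F q (n := n) ν) →ₐ[F] Module.End F M)
    (ρ' : ↥B →ₐ[F] Module.End F M) : Prop :=
  (∀ (i : Fin n) (a : ↥B) (b : ↥(parabolicC F q (n := n) ν)),
      (a : H F q n) = X F q i → (b : H F q n) = X F q (x⁻¹ i) → ρ' a = ρν b) ∧
  (∀ (i : Fin n) (a : ↥B) (b : ↥(parabolicC F q (n := n) ν)),
      (a : H F q n) = Xinv F q i → (b : H F q n) = Xinv F q (x⁻¹ i) → ρ' a = ρν b) ∧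
  (∀ (i : Fin n) (a : ↥B) (b : ↥(parabolicC F q (n := n) ν)),
      (a : H F q n) = C F q i → (b : H F q n) = C F q (x⁻¹ i) → ρ' a = ρν b) ∧
  ∀ (j j' : Fin (n - 1)) (a : ↥B) (b : ↥(parabolicC F q (n := n) ν)),
      lo j' = x⁻¹ (lo j) → (a : H F q n) = T F q j → (b : H F q n) = T F q j' → ρ' a = ρν b

/-- The element `f = a_d X_1^d + ⋯ + a_1 X_1 + a_0` of `H_n`. -/
noncomputable def felem (q : F) (n d : ℕ) (aa : ℕ → F) : H F q n :=
  if h : 0 < n then ∑ i ∈ Finset.range (d + 1), aa i • X F q (⟨0, h⟩ : Fin n) ^ i else 0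

/-- The conditions on the coefficients of `f`: degree `d ≥ 1`, monic, and
`a_i = a_0 a_{d-i}`. -/
def GoodPoly (d : ℕ) (aa : ℕ → F) : Prop :=
  1 ≤ d ∧ aa d = 1 ∧ (∀ i ≤ d, aa i = aa 0 * aa (d - i)) ∧ ∀ i : ℕ, d < i → aa i = 0

/-- The relation generating the two-sided ideal `I_f` of `H_n`. -/
inductive CycRel (q : F) (n d : ℕ) (aa : ℕ → F) : H F q n → H F q n → Prop
  | rel : CycRel q n d aa (felem F q n d aa) 0

/-- The cyclotomic Hecke–Clifford superalgebra `H_n^f = H_n / I_f`. -/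
abbrev Hf (q : F) (n d : ℕ) (aa : ℕ → F) : Type := RingQuot (CycRel F q n d aa)

/-- The canonical quotient map `H_n → H_n^f`. -/
noncomputable def cyc (q : F) (n d : ℕ) (aa : ℕ → F) : H F q n →ₐ[F] Hf F q n d aa :=
  RingQuot.mkAlgHom F (CycRel F q n d aa)

noncomputable def Xf (q : F) (n d : ℕ) (aa : ℕ → F) (i : Fin n) : Hf F q n d aa :=
  cyc F q n d aa (X F q i)
noncomputable def Xinvf (q : F) (n d : ℕ) (aa : ℕ → F) (i : Fin n) : Hf F q n d aa :=
  cyc F q n d aa (Xinv F q i)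
noncomputable def Cf (q : F) (n d : ℕ) (aa : ℕ → F) (i : Fin n) : Hf F q n d aa :=
  cyc F q n d aa (C F q i)
noncomputable def Tf (q : F) (n d : ℕ) (aa : ℕ → F) (i : Fin (n - 1)) : Hf F q n d aa :=
  cyc F q n d aa (T F q i)

/-- `e` is the canonical embedding `H_k^f → H_N^f` (shifting all indices by `sh`;
for `sh = 0` this is the standard identification of `H_k^f` with a subalgebra of
`H_N^f`). -/
def IsCycEmb (q : F) (k N d : ℕ) (aa : ℕ → F) (sh : ℕ)
    (e : Hf F q k d aa →ₐ[F] Hf F q N d aa) : Prop :=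
  (∀ (i : Fin k) (i' : Fin N), (i' : ℕ) = sh + (i : ℕ) →
      e (Xf F q k d aa i) = Xf F q N d aa i') ∧
  (∀ (i : Fin k) (i' : Fin N), (i' : ℕ) = sh + (i : ℕ) →
      e (Xinvf F q k d aa i) = Xinvf F q N d aa i') ∧
  (∀ (i : Fin k) (i' : Fin N), (i' : ℕ) = sh + (i : ℕ) →
      e (Cf F q k d aa i) = Cf F q N d aa i') ∧
  ∀ (j : Fin (k - 1)) (j' : Fin (N - 1)), (j' : ℕ) = sh + (j : ℕ) →
      e (Tf F q k d aa j) = Tf F q N d aa j'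

/-- `δ` is the grading automorphism of the superalgebra `H_n^f`. -/
def IsCycGrading (q : F) (n d : ℕ) (aa : ℕ → F)
    (δ : Hf F q n d aa →ₐ[F] Hf F q n d aa) : Prop :=
  (∀ i : Fin n, δ (Xf F q n d aa i) = Xf F q n d aa i) ∧
  (∀ i : Fin n, δ (Xinvf F q n d aa i) = Xinvf F q n d aa i) ∧
  (∀ i : Fin n, δ (Cf F q n d aa i) = -Cf F q n d aa i) ∧
  ∀ j : Fin (n - 1), δ (Tf F q n d aa j) = Tf F q n d aa j

/-- The elements `f_1 = f`, `f_{i+1} = (T_i + ξ C_i C_{i+1}) f_i T_i` of `H_n`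
(0-based indexing: `fseq k = f_{k+1}`). -/
noncomputable def fseq (q : F) (n d : ℕ) (aa : ℕ → F) : ℕ → H F q n
  | 0 => felem F q n d aa
  | k + 1 =>
    if h : k < n - 1 then
      (T F q (⟨k, h⟩ : Fin (n - 1)) +
          (q - q⁻¹) • (C F q (lo (⟨k, h⟩ : Fin (n - 1))) *
            C F q (hi (⟨k, h⟩ : Fin (n - 1))))) *
        fseq q n d aa k * T F q (⟨k, h⟩ : Fin (n - 1))
    else 0

/-- `f_Z = f_{z_1} ⋯ f_{z_u}` for `Z = {z_1 < ⋯ < z_u} ⊆ {1,…,n}` (0-based). -/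
noncomputable def fZ (q : F) (n d : ℕ) (aa : ℕ → F) (Z : Finset (Fin n)) : H F q n :=
  ((Z.sort (· ≤ ·)).map fun z => fseq F q n d aa (z : ℕ)).prod

/-- `ρT` is the outer tensor product representation `MA ⊠ MB` of the parabolic
subalgebra `H_μ ⊆ H_NN` (for `μ = (mA, mB)`, `NN = mA + mB`): generators with index
in the first block act on the first factor, generators with index in the second
block act on the second factor, with the super sign rule
`(a ⊗ b)(x ⊗ y) = (-1)^{|b||x|} (ax ⊗ by)` expressed via the parity operator `JA`
of the first factor (which enters the action of the odd generators `C`). -/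
def IsOuter (F : Type) [Field F] (q : F) (NN mA mB : ℕ) (μ : List ℕ)
    {MA MB : Type} [AddCommGroup MA] [Module F MA] [AddCommGroup MB] [Module F MB]
    (ρA : H F q mA →ₐ[F] Module.End F MA) (ρB : H F q mB →ₐ[F] Module.End F MB)
    (JA : Module.End F MA)
    (ρT : ↥(parabolicC F q (n := NN) μ) →ₐ[F]
      Module.End F (TensorProduct F MA MB)) : Prop :=
  (∀ (ii : Fin NN) (i' : Fin mA) (a : ↥(parabolicC F q (n := NN) μ)),
    (ii : ℕ) = (i' : ℕ) → (a : H F q NN) = X F q ii →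
      ρT a = TensorProduct.map (ρA (X F q i')) LinearMap.id) ∧
  (∀ (ii : Fin NN) (i' : Fin mA) (a : ↥(parabolicC F q (n := NN) μ)),
    (ii : ℕ) = (i' : ℕ) → (a : H F q NN) = Xinv F q ii →
      ρT a = TensorProduct.map (ρA (Xinv F q i')) LinearMap.id) ∧
  (∀ (ii : Fin NN) (i' : Fin mA) (a : ↥(parabolicC F q (n := NN) μ)),
    (ii : ℕ) = (i' : ℕ) → (a : H F q NN) = C F q ii →
      ρT a = TensorProduct.map (ρA (C F q i')) LinearMap.id) ∧
  (∀ (jj : Fin (NN - 1)) (j' : Fin (mA - 1)) (a : ↥(parabolicC F q (n := NN) μ)),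
    (jj : ℕ) = (j' : ℕ) → (a : H F q NN) = T F q jj →
      ρT a = TensorProduct.map (ρA (T F q j')) LinearMap.id) ∧
  (∀ (ii : Fin NN) (i' : Fin mB) (a : ↥(parabolicC F q (n := NN) μ)),
    (ii : ℕ) = mA + (i' : ℕ) → (a : H F q NN) = X F q ii →
      ρT a = TensorProduct.map LinearMap.id (ρB (X F q i'))) ∧
  (∀ (ii : Fin NN) (i' : Fin mB) (a : ↥(parabolicC F q (n := NN) μ)),
    (ii : ℕ) = mA + (i' : ℕ) → (a : H F q NN) = Xinv F q ii →
      ρT a = TensorProduct.map LinearMap.id (ρB (Xinv F q i'))) ∧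
  (∀ (ii : Fin NN) (i' : Fin mB) (a : ↥(parabolicC F q (n := NN) μ)),
    (ii : ℕ) = mA + (i' : ℕ) → (a : H F q NN) = C F q ii →
      ρT a = TensorProduct.map JA (ρB (C F q i'))) ∧
  ∀ (jj : Fin (NN - 1)) (j' : Fin (mB - 1)) (a : ↥(parabolicC F q (n := NN) μ)),
    (jj : ℕ) = mA + (j' : ℕ) → (a : H F q NN) = T F q jj →
      ρT a = TensorProduct.map LinearMap.id (ρB (T F q j'))

/-! ### The subalgebra generated by the `X_i` and `C_i`, presented abstractly -/

/-- Generators of the Laurent-polynomial–Clifford algebra. -/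
inductive PCGen (ι : Type) : Type
  | x : ι → PCGen ι
  | c : ι → PCGen ι

/-- Relations of the Laurent-polynomial–Clifford algebra; the inverse of `x i` is
`c i * x i * c i`. -/
inductive PCRel (ι : Type) :
    FreeAlgebra F (PCGen ι) → FreeAlgebra F (PCGen ι) → Prop
  | cc (i : ι) : PCRel ι (FreeAlgebra.ι F (.c i) * FreeAlgebra.ι F (.c i)) 1
  | canti (i j : ι) (h : i ≠ j) :
      PCRel ι (FreeAlgebra.ι F (.c i) * FreeAlgebra.ι F (.c j))
        (-(FreeAlgebra.ι F (.c j) * FreeAlgebra.ι F (.c i)))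
  | xx (i j : ι) :
      PCRel ι (FreeAlgebra.ι F (.x i) * FreeAlgebra.ι F (.x j))
        (FreeAlgebra.ι F (.x j) * FreeAlgebra.ι F (.x i))
  | cx (i j : ι) (h : i ≠ j) :
      PCRel ι (FreeAlgebra.ι F (.c i) * FreeAlgebra.ι F (.x j))
        (FreeAlgebra.ι F (.x j) * FreeAlgebra.ι F (.c i))
  | cxcx (i : ι) :
      PCRel ι (FreeAlgebra.ι F (.c i) * FreeAlgebra.ι F (.x i) *
        (FreeAlgebra.ι F (.c i) * FreeAlgebra.ι F (.x i))) 1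

/-- The Laurent-polynomial–Clifford algebra on the index set `ι`. -/
def PC (ι : Type) : Type := RingQuot (PCRel F ι)

namespace PC

noncomputable instance (ι : Type) : Ring (PC F ι) := inferInstanceAs (Ring (RingQuot (PCRel F ι)))

noncomputable instance (ι : Type) : Algebra F (PC F ι) :=
  inferInstanceAs (Algebra F (RingQuot (PCRel F ι)))

/-- The quotient map from the free algebra. -/
noncomputable def mk (ι : Type) : FreeAlgebra F (PCGen ι) →ₐ[F] PC F ι :=
  RingQuot.mkAlgHom F (PCRel F ι)

theorem mk_rel {ι : Type} {a b : FreeAlgebra F (PCGen ι)} (h : PCRel F ι a b) :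
    mk F ι a = mk F ι b :=
  RingQuot.mkAlgHom_rel F h

variable {F} {ι : Type}

/-- The generator `x i`. -/
noncomputable def x (i : ι) : PC F ι := mk F ι (FreeAlgebra.ι F (.x i))

/-- The Clifford generator `c i`. -/
noncomputable def c (i : ι) : PC F ι := mk F ι (FreeAlgebra.ι F (.c i))

/-- The inverse of `x i`. -/
noncomputable def y (i : ι) : PC F ι := c i * x i * c i

theorem cc (i : ι) : (c i : PC F ι) * c i = 1 := by
  simpa [c] using mk_rel F (PCRel.cc (F := F) i)

theorem canti {i j : ι} (h : i ≠ j) : (c i : PC F ι) * c j = -(c j * c i) := by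
  simpa [c] using mk_rel F (PCRel.canti (F := F) i j h)

theorem xx (i j : ι) : (x i : PC F ι) * x j = x j * x i := by
  simpa [x] using mk_rel F (PCRel.xx (F := F) i j)

theorem xc {i j : ι} (h : i ≠ j) : (x j : PC F ι) * c i = c i * x j := by
  simpa [c, x] using (mk_rel F (PCRel.cx (F := F) i j h)).symm

theorem cxcx (i : ι) : (c i : PC F ι) * x i * (c i * x i) = 1 := by
  simpa [c, x] using mk_rel F (PCRel.cxcx (F := F) i)

theorem cc' (i : ι) (z : PC F ι) : c i * (c i * z) = z := by
  rw [← mul_assoc, cc, one_mul]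

theorem canti' {i j : ι} (h : i ≠ j) (z : PC F ι) : c i * (c j * z) = -(c j * (c i * z)) := by
  rw [← mul_assoc, canti h, neg_mul, mul_assoc]

theorem xx' (i j : ι) (z : PC F ι) : x i * (x j * z) = x j * (x i * z) := by
  rw [← mul_assoc, xx, mul_assoc]

theorem xc' {i j : ι} (h : i ≠ j) (z : PC F ι) : x j * (c i * z) = c i * (x j * z) := by
  rw [← mul_assoc, xc h, mul_assoc]

theorem xcs (i : ι) : (x i : PC F ι) * c i = c i * y i := by
  simp only [y, mul_assoc, cc']

theorem xcs' (i : ι) (z : PC F ι) : x i * (c i * z) = c i * (y i * z) := by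
  rw [← mul_assoc, xcs, mul_assoc]

theorem ycs (i : ι) : (y i : PC F ι) * c i = c i * x i := by
  simp only [y, mul_assoc, cc, mul_one]

theorem yx (i : ι) : (y i : PC F ι) * x i = 1 := by
  have := cxcx (F := F) i
  simpa only [y, mul_assoc] using this

theorem xy (i : ι) : (x i : PC F ι) * y i = 1 := by
  have h := congrArg (fun r => c i * r * c i) (yx (F := F) i)
  simpa only [y, mul_assoc, cc', cc, mul_one, one_mul] using h

theorem yc {i j : ι} (h : i ≠ j) : (y j : PC F ι) * c i = c i * y j := by
  simp only [y, mul_assoc, canti h.symm, canti' h.symm, xc' h, mul_neg, neg_neg]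

theorem yc' {i j : ι} (h : i ≠ j) (z : PC F ι) : y j * (c i * z) = c i * (y j * z) := by
  rw [← mul_assoc, yc h, mul_assoc]

theorem yxo {i j : ι} (h : i ≠ j) : (y i : PC F ι) * x j = x j * y i := by
  simp only [y, mul_assoc, xc' h, xx' i j, ← xc h]

theorem induction {p : PC F ι → Prop} (hF : ∀ r : F, p (algebraMap F _ r))
    (hx : ∀ i, p (x i)) (hc : ∀ i, p (c i)) (hmul : ∀ a b, p a → p b → p (a * b))
    (hadd : ∀ a b, p a → p b → p (a + b)) (r : PC F ι) : p r := by
  obtain ⟨r, rfl⟩ : ∃ r', mk F ι r' = r := RingQuot.mkAlgHom_surjective F (PCRel F ι) r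
  induction r using FreeAlgebra.induction with
  | grade0 r => simpa using hF r
  | grade1 g =>
    cases g with
    | x i => exact hx i
    | c i => exact hc i
  | mul a b ha hb => simpa using hmul _ _ ha hb
  | add a b ha hb => simpa using hadd _ _ ha hb

/-- The universal property of `PC F ι`. -/
noncomputable def lift {A : Type} [Ring A] [Algebra F A] (u v : ι → A)
    (hcc : ∀ i, v i * v i = 1) (hcanti : ∀ i j, i ≠ j → v i * v j = -(v j * v i))
    (hxx : ∀ i j, u i * u j = u j * u i) (hcx : ∀ i j, i ≠ j → v i * u j = u j * v i)
    (hcxcx : ∀ i, v i * u i * (v i * u i) = 1) : PC F ι →ₐ[F] A :=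
  RingQuot.liftAlgHom F (s := PCRel F ι) ⟨FreeAlgebra.lift F fun g => match g with
    | .x i => u i
    | .c i => v i, by
    intro a b h
    induction h with
    | cc i => simpa using hcc i
    | canti i j h => simpa using hcanti i j h
    | xx i j => simpa using hxx i j
    | cx i j h => simpa using hcx i j h
    | cxcx i => simpa using hcxcx i⟩

section lift
variable {A : Type} [Ring A] [Algebra F A] (u v : ι → A)
    (hcc : ∀ i, v i * v i = 1) (hcanti : ∀ i j, i ≠ j → v i * v j = -(v j * v i))
    (hxx : ∀ i j, u i * u j = u j * u i) (hcx : ∀ i j, i ≠ j → v i * u j = u j * v i)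
    (hcxcx : ∀ i, v i * u i * (v i * u i) = 1)

@[simp] theorem lift_x (i : ι) : lift (F := F) u v hcc hcanti hxx hcx hcxcx (x i) = u i := by
  refine (RingQuot.liftAlgHom_mkAlgHom_apply F _ _ _).trans ?_
  simp

@[simp] theorem lift_c (i : ι) : lift (F := F) u v hcc hcanti hxx hcx hcxcx (c i) = v i := by
  refine (RingQuot.liftAlgHom_mkAlgHom_apply F _ _ _).trans ?_
  simp

end lift

/-! ### The twisted derivation attached to a pair of indices -/

section twist
variable [DecidableEq ι] (ξ : F) (a b : ι)

/-- Matrix recording how `x j` moves past the Hecke generator for the pair `(a, b)`. -/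
noncomputable def matX (j : ι) : Matrix (Fin 2) (Fin 2) (PC F ι) :=
  if j = a then !![x b, 0; ξ • ((c a * c b - 1) * x b), x a]
  else if j = b then !![x a, 0; ξ • (c a * c b * x a + x b), x b]
  else !![x j, 0; 0, x j]

/-- Matrix recording how `c j` moves past the Hecke generator for the pair `(a, b)`. -/
noncomputable def matC (j : ι) : Matrix (Fin 2) (Fin 2) (PC F ι) :=
  if j = a then !![c b, 0; ξ • (c a - c b), c a]
  else if j = b then !![c a, 0; 0, c b]
  else !![c j, 0; 0, c j]

variable {a b}

theorem matX_fst : matX ξ a b a = !![x b, 0; ξ • ((c a * c b - 1) * x b), x a] := by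
  simp [matX]

theorem matX_snd (hab : a ≠ b) :
    matX ξ a b b = !![x a, 0; ξ • (c a * c b * x a + x b), x b] := by
  simp [matX, hab.symm]

theorem matX_other {j : ι} (ha : j ≠ a) (hb : j ≠ b) :
    matX ξ a b j = !![x j, 0; 0, x j] := by
  simp [matX, ha, hb]

theorem matC_fst : matC ξ a b a = !![c b, 0; ξ • (c a - c b), c a] := by
  simp [matC]

theorem matC_snd (hab : a ≠ b) : matC ξ a b b = !![c a, 0; 0, c b] := by
  simp [matC, hab.symm]

theorem matC_other {j : ι} (ha : j ≠ a) (hb : j ≠ b) :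
    matC ξ a b j = !![c j, 0; 0, c j] := by
  simp [matC, ha, hb]

theorem mul_lower {R : Type} [Ring R] (p q r p' q' r' : R) :
    !![p, 0; q, r] * !![p', 0; q', r'] = !![p * p', 0; q * p' + r * q', r * r'] := by
  simp

theorem neg_lower {R : Type} [Ring R] (p q r : R) :
    -!![p, 0; q, r] = !![-p, 0; -q, -r] := by
  ext i j; fin_cases i <;> fin_cases j <;> simp

theorem lower_congr {R : Type} [Ring R] {p q r p' q' r' : R} (hp : p = p') (hq : q = q')
    (hr : r = r') : !![p, 0; q, r] = !![p', 0; q', r'] := by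
  rw [hp, hq, hr]

theorem one_lower {R : Type} [Ring R] : (1 : Matrix (Fin 2) (Fin 2) R) = !![1, 0; 0, 1] :=
  Matrix.one_fin_two

theorem matC_sq (hab : a ≠ b) (i : ι) : matC ξ a b i * matC ξ a b i = 1 := by
  by_cases ha : i = a
  · subst ha
    rw [matC_fst, mul_lower, one_lower]
    refine lower_congr (cc _) ?_ (cc _)
    simp only [smul_mul_assoc, mul_smul_comm, sub_mul, mul_sub, cc]
    module
  by_cases hb : i = b
  · subst hb
    rw [matC_snd ξ hab, mul_lower, one_lower]
    exact lower_congr (cc _) (by simp) (cc _)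
  · rw [matC_other ξ ha hb, mul_lower, one_lower]
    exact lower_congr (cc _) (by simp) (cc _)

theorem matC_anti (hab : a ≠ b) (i j : ι) (h : i ≠ j) :
    matC ξ a b i * matC ξ a b j = -(matC ξ a b j * matC ξ a b i) := by
  have fs : matC ξ a b a * matC ξ a b b = -(matC ξ a b b * matC ξ a b a) := by
    rw [matC_fst, matC_snd ξ hab, mul_lower, mul_lower, neg_lower]
    refine lower_congr (canti hab.symm) ?_ (canti hab)
    simp only [smul_mul_assoc, mul_smul_comm, sub_mul, mul_sub, cc, canti hab.symm, mul_zero,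
      zero_mul]
    module
  have fo : ∀ j, j ≠ a → j ≠ b →
      matC ξ a b a * matC ξ a b j = -(matC ξ a b j * matC ξ a b a) := by
    intro j ha hb
    rw [matC_fst, matC_other ξ ha hb, mul_lower, mul_lower, neg_lower]
    refine lower_congr (canti hb.symm) ?_ (canti ha.symm)
    simp only [smul_mul_assoc, mul_smul_comm, sub_mul, mul_sub, canti ha, canti hb, mul_zero,
      zero_mul]
    module
  have so : ∀ j, j ≠ a → j ≠ b →
      matC ξ a b b * matC ξ a b j = -(matC ξ a b j * matC ξ a b b) := by
    intro j ha hb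
    rw [matC_snd ξ hab, matC_other ξ ha hb, mul_lower, mul_lower, neg_lower]
    exact lower_congr (canti ha.symm) (by simp) (canti hb.symm)
  by_cases ia : i = a
  · subst ia
    by_cases jb : j = b
    · subst jb; exact fs
    · exact fo j h.symm jb
  by_cases ib : i = b
  · subst ib
    by_cases ja : j = a
    · subst ja; rw [fs, neg_neg]
    · exact so j ja h.symm
  by_cases ja : j = a
  · subst ja; rw [fo i ia ib, neg_neg]
  by_cases jb : j = b
  · subst jb; rw [so i ia ib, neg_neg]
  rw [matC_other ξ ia ib, matC_other ξ ja jb, mul_lower, mul_lower, neg_lower]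
  exact lower_congr (canti h) (by simp) (canti h)

theorem matX_comm (hab : a ≠ b) (i j : ι) :
    matX ξ a b i * matX ξ a b j = matX ξ a b j * matX ξ a b i := by
  have fs : matX ξ a b a * matX ξ a b b = matX ξ a b b * matX ξ a b a := by
    rw [matX_fst, matX_snd ξ hab, mul_lower, mul_lower]
    refine lower_congr (xx _ _) ?_ (xx _ _)
    simp only [smul_mul_assoc, mul_smul_comm, sub_mul, mul_sub, add_mul, mul_add, mul_assoc,
      xc' hab, xcs', yx, xx b a, one_mul, mul_one, yc' hab.symm]
    module
  have fo : ∀ j, j ≠ a → j ≠ b → matX ξ a b a * matX ξ a b j = matX ξ a b j * matX ξ a b a := by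
    intro j ha hb
    rw [matX_fst, matX_other ξ ha hb, mul_lower, mul_lower]
    refine lower_congr (xx _ _) ?_ (xx _ _)
    simp only [smul_mul_assoc, mul_smul_comm, sub_mul, mul_sub, mul_assoc,
      xc' ha.symm, xc' hb.symm, xx j b, one_mul, mul_zero, zero_mul]
    module
  have so : ∀ j, j ≠ a → j ≠ b → matX ξ a b b * matX ξ a b j = matX ξ a b j * matX ξ a b b := by
    intro j ha hb
    rw [matX_snd ξ hab, matX_other ξ ha hb, mul_lower, mul_lower]
    refine lower_congr (xx _ _) ?_ (xx _ _)
    simp only [smul_mul_assoc, mul_smul_comm, add_mul, mul_add, mul_assoc,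
      xc' ha.symm, xc' hb.symm, xx j b, xx j a, mul_zero, zero_mul]
    module
  by_cases ia : i = a
  · subst ia
    by_cases jb : j = b
    · subst jb; exact fs
    · by_cases ja : j = i
      · rw [ja]
      · exact fo j ja jb
  by_cases ib : i = b
  · subst ib
    by_cases ja : j = a
    · subst ja; exact fs.symm
    · by_cases jb : j = i
      · rw [jb]
      · exact so j ja jb
  by_cases ja : j = a
  · subst ja; exact (fo i ia ib).symm
  by_cases jb : j = b
  · subst jb; exact (so i ia ib).symm
  rw [matX_other ξ ia ib, matX_other ξ ja jb, mul_lower, mul_lower]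
  exact lower_congr (xx _ _) (by simp) (xx _ _)

theorem matC_matX (hab : a ≠ b) (i j : ι) (h : i ≠ j) :
    matC ξ a b i * matX ξ a b j = matX ξ a b j * matC ξ a b i := by
  by_cases ia : i = a
  · subst ia
    by_cases jb : j = b
    · subst jb
      rw [matC_fst, matX_snd ξ hab, mul_lower, mul_lower]
      refine lower_congr (xc hab.symm).symm ?_ (xc hab).symm
      simp only [smul_mul_assoc, mul_smul_comm, sub_mul, mul_sub, add_mul, mul_add, mul_assoc,
        cc', xc hab, xc hab.symm, xcs]
      module
    · have ja := h.symm
      rw [matC_fst, matX_other ξ ja jb, mul_lower, mul_lower]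
      refine lower_congr (xc (Ne.symm jb)).symm ?_ (xc h).symm
      simp only [smul_mul_assoc, mul_smul_comm, sub_mul, mul_sub, xc h, xc (Ne.symm jb),
        mul_zero, zero_mul]
      module
  by_cases ib : i = b
  · subst ib
    by_cases ja : j = a
    · subst ja
      rw [matC_snd ξ hab, matX_fst, mul_lower, mul_lower]
      refine lower_congr (xc hab).symm ?_ (xc hab.symm).symm
      simp only [smul_mul_assoc, mul_smul_comm, sub_mul, mul_sub, mul_assoc,
        cc', canti' hab.symm, xc hab, one_mul, mul_neg, mul_zero, zero_mul]
      module
    · rw [matC_snd ξ hab, matX_other ξ ja h.symm, mul_lower, mul_lower]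
      exact lower_congr (xc (Ne.symm ja)).symm (by simp) (xc h).symm
  by_cases ja : j = a
  · subst ja
    rw [matC_other ξ ia ib, matX_fst, mul_lower, mul_lower]
    refine lower_congr (xc ib).symm ?_ (xc ia).symm
    simp only [smul_mul_assoc, mul_smul_comm, sub_mul, mul_sub, mul_assoc, canti' ia,
      canti' ib, xc ib, one_mul, mul_neg, neg_neg, mul_zero, zero_mul]
    module
  by_cases jb : j = b
  · subst jb
    rw [matC_other ξ ia ib, matX_snd ξ hab, mul_lower, mul_lower]
    refine lower_congr (xc ia).symm ?_ (xc ib).symm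
    simp only [smul_mul_assoc, mul_smul_comm, add_mul, mul_add, mul_assoc, canti' ia,
      canti' ib, xc ib, xc ia, mul_neg, neg_neg, mul_zero, zero_mul]
    module
  rw [matC_other ξ ia ib, matX_other ξ ja jb, mul_lower, mul_lower]
  exact lower_congr (xc h).symm (by simp) (xc h).symm

theorem matC_matX_sq (hab : a ≠ b) (i : ι) :
    matC ξ a b i * matX ξ a b i * (matC ξ a b i * matX ξ a b i) = 1 := by
  by_cases ha : i = a
  · subst ha
    rw [matC_fst, matX_fst, mul_lower, mul_lower, one_lower]
    refine lower_congr (cxcx _) ?_ (cxcx _)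
    simp only [smul_mul_assoc, mul_smul_comm, sub_mul, mul_sub, add_mul, mul_add, mul_assoc,
      cc, cc', xc' hab.symm, xcs', yx, one_mul, mul_one, yxo hab]
    module
  by_cases hb : i = b
  · subst hb
    rw [matC_snd ξ hab, matX_snd ξ hab, mul_lower, mul_lower, one_lower]
    refine lower_congr (cxcx _) ?_ (cxcx _)
    simp only [smul_mul_assoc, mul_smul_comm, add_mul, mul_add, mul_assoc,
      cc, cc', canti' hab.symm, xc' hab, xcs', yx, mul_one, mul_neg, neg_mul, xx i a,
      zero_mul, mul_zero]
    module
  · rw [matC_other ξ ha hb, matX_other ξ ha hb, mul_lower, mul_lower, one_lower]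
    exact lower_congr (cxcx _) (by simp) (cxcx _)

/-- The homomorphism `r ↦ [[s r, 0], [∂ r, r]]` describing `r T = T s(r) + ∂(r)`. -/
noncomputable def twist (hab : a ≠ b) : PC F ι →ₐ[F] Matrix (Fin 2) (Fin 2) (PC F ι) :=
  lift (matX ξ a b) (matC ξ a b) (matC_sq ξ hab) (matC_anti ξ hab) (matX_comm ξ hab)
    (matC_matX ξ hab) (matC_matX_sq ξ hab)

/-- The automorphism exchanging the indices `a` and `b`. -/
noncomputable def sw (hab : a ≠ b) : PC F ι →ₗ[F] PC F ι :=
  Matrix.entryLinearMap F (PC F ι) 0 0 ∘ₗ (twist ξ hab).toLinearMap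

/-- The twisted derivation attached to `(a, b)`. -/
noncomputable def der (hab : a ≠ b) : PC F ι →ₗ[F] PC F ι :=
  Matrix.entryLinearMap F (PC F ι) 1 0 ∘ₗ (twist ξ hab).toLinearMap

variable (hab : a ≠ b)

theorem twist_eq (r : PC F ι) : twist ξ hab r = !![sw ξ hab r, 0; der ξ hab r, r] := by
  have key : twist ξ hab r 0 1 = 0 ∧ twist ξ hab r 1 1 = r := by
    induction r using induction with
    | hF r => simp [Matrix.algebraMap_matrix_apply]
    | hx i => simp only [twist, lift_x, matX]; split_ifs <;> simp_all
    | hc i => simp only [twist, lift_c, matC]; split_ifs <;> simp_all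
    | hmul p r hp hr => simp [Matrix.mul_apply, Fin.sum_univ_two, hp, hr]
    | hadd p r hp hr => simp [hp, hr]
  ext i j
  fin_cases i <;> fin_cases j <;> simp [sw, der, key]

theorem sw_mul (p r : PC F ι) : sw ξ hab (p * r) = sw ξ hab p * sw ξ hab r := by
  have := congrFun₂ (map_mul (twist ξ hab) p r) 0 0
  simpa [twist_eq, mul_lower] using this

theorem der_mul (p r : PC F ι) :
    der ξ hab (p * r) = der ξ hab p * sw ξ hab r + p * der ξ hab r := by
  have := congrFun₂ (map_mul (twist ξ hab) p r) 1 0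
  simpa [twist_eq, mul_lower] using this

theorem sw_algebraMap (r : F) : sw ξ hab (algebraMap F _ r) = algebraMap F _ r := by
  simp [sw, Matrix.algebraMap_matrix_apply]

theorem der_algebraMap (r : F) : der ξ hab (algebraMap F _ r) = 0 := by
  simp [der, Matrix.algebraMap_matrix_apply]

theorem sw_one : sw ξ hab 1 = 1 := by simpa using sw_algebraMap ξ hab 1

theorem der_one : der ξ hab 1 = 0 := by simpa using der_algebraMap ξ hab 1

theorem sw_x_fst : sw ξ hab (x a) = x b := by simp [sw, twist, matX_fst]

theorem sw_x_snd : sw ξ hab (x b) = x a := by simp [sw, twist, matX_snd ξ hab]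

theorem sw_x_other {j : ι} (ha : j ≠ a) (hb : j ≠ b) : sw ξ hab (x j) = x j := by
  simp [sw, twist, matX_other ξ ha hb]

theorem sw_c_fst : sw ξ hab (c a) = c b := by simp [sw, twist, matC_fst]

theorem sw_c_snd : sw ξ hab (c b) = c a := by simp [sw, twist, matC_snd ξ hab]

theorem sw_c_other {j : ι} (ha : j ≠ a) (hb : j ≠ b) : sw ξ hab (c j) = c j := by
  simp [sw, twist, matC_other ξ ha hb]

theorem der_x_fst : der ξ hab (x a) = ξ • ((c a * c b - 1) * x b) := by
  simp [der, twist, matX_fst]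

theorem der_x_snd : der ξ hab (x b) = ξ • (c a * c b * x a + x b) := by
  simp [der, twist, matX_snd ξ hab]

theorem der_x_other {j : ι} (ha : j ≠ a) (hb : j ≠ b) : der ξ hab (x j) = 0 := by
  simp [der, twist, matX_other ξ ha hb]

theorem der_c_fst : der ξ hab (c a) = ξ • (c a - c b) := by
  simp [der, twist, matC_fst]

theorem der_c_snd : der ξ hab (c b) = 0 := by
  simp [der, twist, matC_snd ξ hab]

theorem der_c_other {j : ι} (ha : j ≠ a) (hb : j ≠ b) : der ξ hab (c j) = 0 := by
  simp [der, twist, matC_other ξ ha hb]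

end twist

end PC

/-! ### Identities between the twisted derivations -/

namespace PC

variable {F} {ι : Type} [DecidableEq ι] (ξ : F) {a b : ι} (hab : a ≠ b)

/-- The conditions on `g` needed to move it past `T² - ξ T - 1`. -/
def QuadCond (g : PC F ι) : Prop :=
  sw ξ hab (sw ξ hab g) = g ∧
    der ξ hab (sw ξ hab g) + sw ξ hab (der ξ hab g) = ξ • (sw ξ hab g - g) ∧
    der ξ hab (der ξ hab g) = ξ • der ξ hab g

theorem quadCond_c (j : ι) : QuadCond ξ hab (c j) := by
  by_cases ha : j = a
  · subst ha
    simp only [QuadCond, sw_c_fst, sw_c_snd, der_c_fst, der_c_snd, map_smul, map_sub]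
    refine ⟨trivial, by module, by module⟩
  by_cases hb : j = b
  · subst hb
    simp only [QuadCond, sw_c_fst, sw_c_snd, der_c_fst, der_c_snd, map_zero]
    refine ⟨trivial, by module, by module⟩
  · simp [QuadCond, sw_c_other ξ hab ha hb, der_c_other ξ hab ha hb]

theorem quadCond_x (j : ι) : QuadCond ξ hab (x j) := by
  by_cases ha : j = a
  · subst ha
    simp only [QuadCond, sw_c_fst, sw_c_snd, der_c_fst, der_c_snd, sw_x_fst, sw_x_snd,
      der_x_fst, der_x_snd, map_smul, map_sub, sw_mul, der_mul, sub_mul,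
      mul_add, one_mul, mul_zero, zero_mul, smul_mul_assoc,
      mul_smul_comm, mul_assoc,
      cc', canti' hab.symm, mul_neg]
    refine ⟨trivial, by module, by module⟩
  by_cases hb : j = b
  · subst hb
    simp only [QuadCond, sw_c_fst, sw_c_snd, der_c_fst, der_c_snd, sw_x_fst, sw_x_snd,
      der_x_fst, der_x_snd, map_smul, map_add, sw_mul, der_mul, sub_mul,
      mul_sub, mul_add, one_mul, mul_zero, zero_mul, smul_mul_assoc,
      mul_smul_comm, mul_assoc,
      cc', canti' hab.symm, mul_neg]
    refine ⟨trivial, by module, by module⟩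
  · simp [QuadCond, sw_x_other ξ hab ha hb, der_x_other ξ hab ha hb]

/-- The conditions on `g` needed to move it past `T₁ T₂ - T₂ T₁`. -/
def FarCond {a' b' : ι} (hab' : a' ≠ b') (g : PC F ι) : Prop :=
  sw ξ hab' (sw ξ hab g) = sw ξ hab (sw ξ hab' g) ∧
    der ξ hab' (sw ξ hab g) = sw ξ hab (der ξ hab' g) ∧
    sw ξ hab' (der ξ hab g) = der ξ hab (sw ξ hab' g) ∧
    der ξ hab' (der ξ hab g) = der ξ hab (der ξ hab' g)

theorem farCond_c {a' b' : ι} (hab' : a' ≠ b') (h1 : a ≠ a') (h2 : a ≠ b') (h3 : b ≠ a')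
    (h4 : b ≠ b') (j : ι) : FarCond ξ hab hab' (c j) := by
  have e1 := sw_c_other ξ hab' h1 h2
  have e2 := sw_c_other ξ hab' h3 h4
  have e3 := sw_c_other ξ hab h1.symm h3.symm
  have e4 := sw_c_other ξ hab h2.symm h4.symm
  have f1 := der_c_other ξ hab' h1 h2
  have f2 := der_c_other ξ hab' h3 h4
  have f3 := der_c_other ξ hab h1.symm h3.symm
  have f4 := der_c_other ξ hab h2.symm h4.symm
  by_cases ja : j = a
  · subst ja; simp [FarCond, sw_c_fst, der_c_fst, *]
  by_cases jb : j = b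
  · subst jb; simp [FarCond, sw_c_snd, der_c_snd, *]
  by_cases ja' : j = a'
  · subst ja'; simp [FarCond, sw_c_fst, der_c_fst, *]
  by_cases jb' : j = b'
  · subst jb'; simp [FarCond, sw_c_snd, der_c_snd, *]
  have e5 := sw_c_other ξ hab ja jb
  have e6 := sw_c_other ξ hab' ja' jb'
  have f5 := der_c_other ξ hab ja jb
  have f6 := der_c_other ξ hab' ja' jb'
  simp [FarCond, *]

theorem farCond_x {a' b' : ι} (hab' : a' ≠ b') (h1 : a ≠ a') (h2 : a ≠ b') (h3 : b ≠ a')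
    (h4 : b ≠ b') (j : ι) : FarCond ξ hab hab' (x j) := by
  have e1 := sw_c_other ξ hab' h1 h2
  have e2 := sw_c_other ξ hab' h3 h4
  have e3 := sw_c_other ξ hab h1.symm h3.symm
  have e4 := sw_c_other ξ hab h2.symm h4.symm
  have f1 := der_c_other ξ hab' h1 h2
  have f2 := der_c_other ξ hab' h3 h4
  have f3 := der_c_other ξ hab h1.symm h3.symm
  have f4 := der_c_other ξ hab h2.symm h4.symm
  have e1 := sw_x_other ξ hab' h1 h2
  have e2 := sw_x_other ξ hab' h3 h4
  have e3 := sw_x_other ξ hab h1.symm h3.symm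
  have e4 := sw_x_other ξ hab h2.symm h4.symm
  have f1 := der_x_other ξ hab' h1 h2
  have f2 := der_x_other ξ hab' h3 h4
  have f3 := der_x_other ξ hab h1.symm h3.symm
  have f4 := der_x_other ξ hab h2.symm h4.symm
  by_cases ja : j = a
  · subst ja; simp [FarCond, sw_x_fst, der_x_fst, sw_mul, der_mul, sw_one, der_one, *]
  by_cases jb : j = b
  · subst jb; simp [FarCond, sw_x_snd, der_x_snd, sw_mul, der_mul, *]
  by_cases ja' : j = a'
  · subst ja'; simp [FarCond, sw_x_fst, der_x_fst, sw_mul, der_mul, sw_one, der_one, *]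
  by_cases jb' : j = b'
  · subst jb'; simp [FarCond, sw_x_snd, der_x_snd, sw_mul, der_mul, *]
  have e5 := sw_x_other ξ hab ja jb
  have e6 := sw_x_other ξ hab' ja' jb'
  have f5 := der_x_other ξ hab ja jb
  have f6 := der_x_other ξ hab' ja' jb'
  simp [FarCond, *]

/-- The conditions on `g` needed to move it past `T₁ T₂ T₁ - T₂ T₁ T₂`. -/
def BraidCond {d : ι} (hbd : b ≠ d) (g : PC F ι) : Prop :=
  sw ξ hab (sw ξ hbd (sw ξ hab g)) = sw ξ hbd (sw ξ hab (sw ξ hbd g)) ∧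
    der ξ hab (sw ξ hbd (sw ξ hab g)) = sw ξ hbd (sw ξ hab (der ξ hbd g)) ∧
    sw ξ hab (sw ξ hbd (der ξ hab g)) = der ξ hbd (sw ξ hab (sw ξ hbd g)) ∧
    ξ • sw ξ hab (der ξ hbd (sw ξ hab g)) + der ξ hab (der ξ hbd (sw ξ hab g)) +
        sw ξ hab (der ξ hbd (der ξ hab g)) = der ξ hbd (sw ξ hab (der ξ hbd g)) ∧
    ξ • sw ξ hbd (der ξ hab (sw ξ hbd g)) + der ξ hbd (der ξ hab (sw ξ hbd g)) +
        sw ξ hbd (der ξ hab (der ξ hbd g)) = der ξ hab (sw ξ hbd (der ξ hab g)) ∧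
    sw ξ hab (der ξ hbd (sw ξ hab g)) + der ξ hab (der ξ hbd (der ξ hab g)) =
      sw ξ hbd (der ξ hab (sw ξ hbd g)) + der ξ hbd (der ξ hab (der ξ hbd g))

theorem braidCond_c {d : ι} (hbd : b ≠ d) (had : a ≠ d) (j : ι) :
    BraidCond ξ hab hbd (c j) := by
  have e1 := sw_c_other ξ hbd hab had
  have e2 := sw_c_other ξ hab had.symm hbd.symm
  have f1 := der_c_other ξ hbd hab had
  have f2 := der_c_other ξ hab had.symm hbd.symm
  by_cases ja : j = a
  · subst ja
    simp only [BraidCond, sw_c_fst, sw_c_snd, der_c_fst, der_c_snd, e1, e2, f1, f2, map_smul,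
      map_sub, map_zero]
    refine ⟨trivial, ?_, ?_, ?_, ?_, ?_⟩ <;> first | trivial | module
  by_cases jb : j = b
  · subst jb
    simp only [BraidCond, sw_c_fst, sw_c_snd, der_c_fst, der_c_snd, e1, e2, f1, f2, map_smul,
      map_sub, map_zero]
    refine ⟨trivial, ?_, ?_, ?_, ?_, ?_⟩ <;> first | trivial | module
  by_cases jd : j = d
  · subst jd
    simp only [BraidCond, sw_c_snd, der_c_snd, e1, e2, f1, f2,
      map_zero]
    refine ⟨trivial, ?_, ?_, ?_, ?_, ?_⟩ <;> first | trivial | module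
  have e3 := sw_c_other ξ hab ja jb
  have e4 := sw_c_other ξ hbd jb jd
  have f3 := der_c_other ξ hab ja jb
  have f4 := der_c_other ξ hbd jb jd
  simp [BraidCond, *]

theorem braidCond_x {d : ι} (hbd : b ≠ d) (had : a ≠ d) (j : ι) :
    BraidCond ξ hab hbd (x j) := by
  have e1 := sw_c_other ξ hbd hab had
  have e2 := sw_c_other ξ hab had.symm hbd.symm
  have f1 := der_c_other ξ hbd hab had
  have f2 := der_c_other ξ hab had.symm hbd.symm
  have e3 := sw_x_other ξ hbd hab had
  have e4 := sw_x_other ξ hab had.symm hbd.symm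
  have f3 := der_x_other ξ hbd hab had
  have f4 := der_x_other ξ hab had.symm hbd.symm
  by_cases ja : j = a
  · subst ja
    simp only [BraidCond, sw_c_fst, sw_c_snd, der_c_fst, der_c_snd, e1, e2, f1, f2, e3, e4, f3,
      f4, sw_x_fst, der_x_fst, sw_mul, der_mul, map_smul,
      map_sub, map_add, map_zero, smul_mul_assoc, mul_smul_comm, sub_mul, mul_sub,
      mul_add, one_mul, mul_zero, zero_mul, mul_assoc, cc',
      canti' hab.symm,
]
    refine ⟨trivial, ?_, ?_, ?_, ?_, ?_⟩ <;> first | trivial | module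
  by_cases jb : j = b
  · subst jb
    simp only [BraidCond, sw_c_fst, sw_c_snd, der_c_fst, der_c_snd, e1, e2, f1, f2, e3, e4, f3,
      f4, sw_x_fst, sw_x_snd, der_x_fst, der_x_snd, sw_mul, der_mul, map_smul,
      map_sub, map_add, map_zero, smul_mul_assoc, mul_smul_comm, sub_mul, mul_sub,
      mul_add, one_mul, mul_zero, zero_mul, mul_assoc, cc',
      canti' hab.symm, canti' hbd.symm, canti' had.symm,
      mul_neg, neg_neg]
    refine ⟨trivial, ?_, ?_, ?_, ?_, ?_⟩ <;> first | trivial | module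
  by_cases jd : j = d
  · subst jd
    simp only [BraidCond, sw_c_fst, sw_c_snd, der_c_fst, der_c_snd, e1, e2, f1, f2, e3, e4, f3,
      f4, sw_x_fst, sw_x_snd, der_x_fst, der_x_snd, sw_mul, der_mul, map_smul,
      map_add, map_zero, smul_mul_assoc, mul_smul_comm, sub_mul, mul_sub,
      mul_add, one_mul, mul_zero, zero_mul, mul_assoc, cc',
      canti' hab.symm, canti' hbd.symm, canti' had.symm,
      mul_neg, neg_neg, map_neg]
    refine ⟨trivial, ?_, ?_, ?_, ?_, ?_⟩ <;> first | trivial | module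
  have e5 := sw_x_other ξ hab ja jb
  have e6 := sw_x_other ξ hbd jb jd
  have f5 := der_x_other ξ hab ja jb
  have f6 := der_x_other ξ hbd jb jd
  simp [BraidCond, *]

end PC

/-! ### Families satisfying the defining relations -/

theorem lo_ne_hi {n : ℕ} (i : Fin (n - 1)) : lo i ≠ hi i := by
  simp [lo, hi, Fin.ext_iff]

/-- A family of elements of an algebra satisfying the defining relations of `H_n`; the inverse
of `X i` is `C i * X i * C i`. -/
structure HCFam {F : Type} [Field F] (ξ : F) {n : ℕ} {A : Type} [Ring A] [Algebra F A]
    (X C : Fin n → A) (T : Fin (n - 1) → A) : Prop where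
  cc : ∀ i, C i * C i = 1
  canti : ∀ i j, i ≠ j → C i * C j = -(C j * C i)
  xx : ∀ i j, X i * X j = X j * X i
  cx : ∀ i j, i ≠ j → C i * X j = X j * C i
  cxcx : ∀ i, C i * X i * (C i * X i) = 1
  tquad : ∀ i, T i * T i = ξ • T i + 1
  tbraid : ∀ i j : Fin (n - 1), (j : ℕ) = i + 1 → T i * T j * T i = T j * T i * T j
  tfar : ∀ i j : Fin (n - 1), (i : ℕ) + 1 < j → T i * T j = T j * T i
  tc : ∀ i, T i * C (lo i) = C (hi i) * T i
  tco : ∀ i j, j ≠ lo i → j ≠ hi i → T i * C j = C j * T i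
  txo : ∀ i j, j ≠ lo i → j ≠ hi i → T i * X j = X j * T i
  cross : ∀ i, (T i + ξ • (C (lo i) * C (hi i))) * X (lo i) * T i = X (hi i)

namespace HCFam

variable {F} {ξ : F} {n : ℕ} {A : Type} [Ring A] [Algebra F A]
  {X C : Fin n → A} {T : Fin (n - 1) → A}

/-- The homomorphism from the Laurent-polynomial–Clifford algebra. -/
noncomputable def pc (h : HCFam ξ X C T) : PC F (Fin n) →ₐ[F] A :=
  PC.lift X C h.cc h.canti h.xx h.cx h.cxcx

@[simp] theorem pc_x (h : HCFam ξ X C T) (i : Fin n) : h.pc (PC.x i) = X i := PC.lift_x ..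

@[simp] theorem pc_c (h : HCFam ξ X C T) (i : Fin n) : h.pc (PC.c i) = C i := PC.lift_c ..

theorem tquad' (h : HCFam ξ X C T) (i : Fin (n - 1)) (z : A) :
    T i * (T i * z) = ξ • (T i * z) + z := by
  rw [← mul_assoc, h.tquad, add_mul, smul_mul_assoc, one_mul]

theorem c_lo_t (h : HCFam ξ X C T) (i : Fin (n - 1)) :
    C (lo i) * T i = T i * C (hi i) + ξ • (C (lo i) - C (hi i)) := by
  have e1 : T i * (C (lo i) * T i) = ξ • (T i * C (lo i)) + C (hi i) := by
    rw [← mul_assoc, h.tc, mul_assoc, h.tquad, mul_add, mul_one, mul_smul_comm, ← h.tc]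
  have e2 : T i * (T i * (C (lo i) * T i)) = ξ • (T i * (T i * C (lo i))) + T i * C (hi i) := by
    rw [e1, mul_add, mul_smul_comm]
  rw [h.tquad', h.tquad', e1] at e2
  linear_combination (norm := module) e2

theorem x_lo_t (h : HCFam ξ X C T) (i : Fin (n - 1)) :
    X (lo i) * T i =
      T i * X (hi i) + ξ • ((C (lo i) * C (hi i) - 1) * X (hi i)) := by
  have hc := h.cross i
  have e0 : T i * (X (lo i) * T i) = X (hi i) - ξ • (C (lo i) * (C (hi i) * (X (lo i) * T i))) := by
    rw [← hc]; simp only [add_mul, smul_mul_assoc, mul_assoc]; module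
  have e1 : ∀ z, T i * (C (lo i) * (C (hi i) * z)) =
      C (hi i) * (C (lo i) * (T i * z)) - ξ • (C (hi i) * (C (lo i) * z)) + ξ • z := by
    intro z
    have e3 : C (lo i) * (T i * z) = T i * (C (hi i) * z) + ξ • (C (lo i) * z - C (hi i) * z) := by
      rw [← mul_assoc, h.c_lo_t]; simp only [add_mul, smul_mul_assoc, sub_mul, mul_assoc]
    have e4 : T i * (C (lo i) * (C (hi i) * z)) = C (hi i) * (T i * (C (hi i) * z)) := by
      rw [← mul_assoc, h.tc, mul_assoc]
    have e5 : C (hi i) * (C (hi i) * z) = z := by rw [← mul_assoc, h.cc, one_mul]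
    rw [e3, e4]
    simp only [mul_add, mul_smul_comm, mul_sub, e5]
    module
  have e2 : T i * (T i * (X (lo i) * T i)) =
      T i * X (hi i) - ξ • (T i * (C (lo i) * (C (hi i) * (X (lo i) * T i)))) := by
    rw [e0, mul_sub, mul_smul_comm]
  have c1 : ∀ z, C (lo i) * (C (lo i) * z) = z := fun z => by rw [← mul_assoc, h.cc, one_mul]
  have c2 : ∀ z, C (hi i) * (C (hi i) * z) = z := fun z => by rw [← mul_assoc, h.cc, one_mul]
  have c3 : ∀ z, C (hi i) * (C (lo i) * z) = -(C (lo i) * (C (hi i) * z)) := fun z => by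
    rw [← mul_assoc, h.canti _ _ (lo_ne_hi i).symm, neg_mul, mul_assoc]
  rw [h.tquad', e1, e0] at e2
  simp only [mul_sub, mul_smul_comm, sub_mul, mul_assoc, one_mul, c1, c2, c3, smul_sub,
] at e2 ⊢
  linear_combination (norm := module) e2

theorem x_hi_t (h : HCFam ξ X C T) (i : Fin (n - 1)) :
    X (hi i) * T i = T i * X (lo i) + ξ • (C (lo i) * C (hi i) * X (lo i) + X (hi i)) := by
  have hc := h.cross i
  conv_lhs => rw [← hc]
  rw [mul_assoc, h.tquad, mul_add, mul_smul_comm, hc]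
  simp only [add_mul, smul_mul_assoc, mul_one]
  module

theorem pc_mul_t (h : HCFam ξ X C T) (i : Fin (n - 1)) (r : PC F (Fin n)) :
    h.pc r * T i = T i * h.pc (PC.sw ξ (lo_ne_hi i) r) + h.pc (PC.der ξ (lo_ne_hi i) r) := by
  induction r using PC.induction with
  | hF r => simp only [PC.sw_algebraMap, PC.der_algebraMap, AlgHom.commutes, map_zero, add_zero,
      Algebra.commutes]
  | hx j =>
    by_cases ha : j = lo i
    · subst ha
      simpa [PC.sw_x_fst, PC.der_x_fst] using h.x_lo_t i
    by_cases hb : j = hi i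
    · subst hb
      simpa [PC.sw_x_snd, PC.der_x_snd] using h.x_hi_t i
    · simpa [PC.sw_x_other ξ _ ha hb, PC.der_x_other ξ _ ha hb] using (h.txo i j ha hb).symm
  | hc j =>
    by_cases ha : j = lo i
    · subst ha
      simpa [PC.sw_c_fst, PC.der_c_fst] using h.c_lo_t i
    by_cases hb : j = hi i
    · subst hb
      simpa [PC.sw_c_snd, PC.der_c_snd] using (h.tc i).symm
    · simpa [PC.sw_c_other ξ _ ha hb, PC.der_c_other ξ _ ha hb] using (h.tco i j ha hb).symm
  | hmul p r hp hr =>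
    rw [map_mul, mul_assoc, hr, mul_add, ← mul_assoc, hp, PC.sw_mul, PC.der_mul]
    simp only [map_mul, map_add, add_mul, mul_assoc, add_assoc]
  | hadd p r hp hr =>
    simp only [map_add, add_mul, mul_add, hp, hr]
    abel

/-- The homomorphism from `H_n` determined by a family satisfying the relations. -/
noncomputable def lift {q : F} (h : HCFam (q - q⁻¹) X C T) : H F q n →ₐ[F] A :=
  RingQuot.liftAlgHom F (s := Rel F q n) ⟨FreeAlgebra.lift F fun g => match g with
    | .X i => X i
    | .Xinv i => h.pc (PC.y i)
    | .C i => C i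
    | .T i => T i, by
    have yx := fun i => by simpa using congrArg h.pc (PC.yx (F := F) i)
    have xy := fun i => by simpa using congrArg h.pc (PC.xy (F := F) i)
    have cy : ∀ i j, i ≠ j → C i * h.pc (PC.y j) = h.pc (PC.y j) * C i := fun i j hij => by
      simpa using (congrArg h.pc (PC.yc (F := F) hij)).symm
    have ty : ∀ i j, j ≠ lo i → j ≠ hi i → T i * h.pc (PC.y j) = h.pc (PC.y j) * T i := by
      intro i j h1 h2
      simp only [PC.y, map_mul, pc_x, pc_c]
      rw [← mul_assoc, ← mul_assoc, h.tco i j h1 h2, mul_assoc (C j), h.txo i j h1 h2,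
        mul_assoc, mul_assoc, h.tco i j h1 h2]
      simp only [mul_assoc]
    have yxo : ∀ i j, i ≠ j → X i * h.pc (PC.y j) = h.pc (PC.y j) * X i := fun i j hij => by
      simpa using (congrArg h.pc (PC.yxo (F := F) hij.symm)).symm
    have yy : ∀ i j, i ≠ j → h.pc (PC.y i) * h.pc (PC.y j) = h.pc (PC.y j) * h.pc (PC.y i) := by
      intro i j hij
      have e : ∀ z, X i * (h.pc (PC.y j) * z) = h.pc (PC.y j) * (X i * z) := fun z => by
        rw [← mul_assoc, yxo i j hij, mul_assoc]
      have ey : h.pc (PC.y i) = C i * (X i * C i) := by simp [PC.y, mul_assoc]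
      rw [ey, mul_assoc, mul_assoc, cy i j hij, e, ← mul_assoc, cy i j hij, mul_assoc]
    intro a b hr
    induction hr with
    | XXinv i => simpa [fx, fxinv] using xy i
    | XinvX i => simpa [fx, fxinv] using yx i
    | XX i j => simpa [fx] using h.xx i j
    | XiXi i j =>
      rcases eq_or_ne i j with rfl | hij
      · rfl
      · simpa [fxinv] using yy i j hij
    | XXi i j hij => simpa [fx, fxinv] using yxo i j hij
    | CC i => simpa [fc] using h.cc i
    | Canti i j hij => simpa [fc] using h.canti i j hij
    | CX i => simpa [fc, fx, fxinv] using congrArg h.pc (PC.ycs (F := F) i).symm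
    | CXi i => simpa [fc, fx, fxinv] using congrArg h.pc (PC.xcs (F := F) i).symm
    | CXo i j hij => simpa [fc, fx] using h.cx i j hij
    | CXio i j hij => simpa [fc, fxinv] using cy i j hij
    | Tquad i => simpa [ft] using h.tquad i
    | Tbraid i j hij => simpa [ft] using h.tbraid i j hij
    | TTfar i j hij => simpa [ft] using h.tfar i j hij
    | TC i => simpa [ft, fc] using h.tc i
    | TCo i j h1 h2 => simpa [ft, fc] using h.tco i j h1 h2
    | TXo i j h1 h2 => simpa [ft, fx] using h.txo i j h1 h2
    | TXio i j h1 h2 => simpa [ft, fxinv] using ty i j h1 h2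
    | cross i => simpa [ft, fc, fx] using h.cross i⟩

@[simp] theorem lift_X {q : F} (h : HCFam (q - q⁻¹) X C T) (i : Fin n) :
    h.lift (HC.X F q i) = X i := by
  refine (RingQuot.liftAlgHom_mkAlgHom_apply F _ _ _).trans ?_
  simp [fx]

@[simp] theorem lift_C {q : F} (h : HCFam (q - q⁻¹) X C T) (i : Fin n) :
    h.lift (HC.C F q i) = C i := by
  refine (RingQuot.liftAlgHom_mkAlgHom_apply F _ _ _).trans ?_
  simp [fc]

@[simp] theorem lift_T {q : F} (h : HCFam (q - q⁻¹) X C T) (i : Fin (n - 1)) :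
    h.lift (HC.T F q i) = T i := by
  refine (RingQuot.liftAlgHom_mkAlgHom_apply F _ _ _).trans ?_
  simp [ft]

end HCFam

section algebra
variable {F} (q : F) {n : ℕ}

theorem mk_rel {a b : FA F n} (h : Rel F q n a b) :
    RingQuot.mkAlgHom F (Rel F q n) a = RingQuot.mkAlgHom F (Rel F q n) b :=
  RingQuot.mkAlgHom_rel F h

theorem xinv_eq (i : Fin n) : Xinv F q i = C F q i * X F q i * C F q i := by
  have e1 : C F q i * X F q i = Xinv F q i * C F q i := by
    simpa [C, X, Xinv] using mk_rel q (Rel.CX i)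
  have e2 : C F q i * C F q i = 1 := by simpa [C] using mk_rel q (Rel.CC i)
  rw [e1, mul_assoc, e2, mul_one]

/-- The generators of `H_n` satisfy the defining relations. -/
theorem hcFam : HCFam (q - q⁻¹) (X F q (n := n)) (C F q) (T F q) where
  cc i := by simpa [C] using mk_rel q (Rel.CC i)
  canti i j h := by simpa only [C, map_mul, map_neg] using mk_rel q (Rel.Canti i j h)
  xx i j := by simpa [X] using mk_rel q (Rel.XX i j)
  cx i j h := by simpa [C, X] using mk_rel q (Rel.CXo i j h)
  cxcx i := by
    have e1 : C F q i * X F q i = Xinv F q i * C F q i := by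
      simpa [C, X, Xinv] using mk_rel q (Rel.CX i)
    have e2 : C F q i * C F q i = 1 := by simpa [C] using mk_rel q (Rel.CC i)
    have e3 : Xinv F q i * X F q i = 1 := by simpa [X, Xinv] using mk_rel q (Rel.XinvX i)
    refine (congrArg (· * (C F q i * X F q i)) e1).trans ?_
    rw [mul_assoc, ← mul_assoc (C F q i), e2, one_mul, e3]
  tquad i := by
    simpa only [T, map_mul, map_add, map_smul, map_one] using mk_rel q (Rel.Tquad i)
  tbraid i j h := by simpa [T] using mk_rel q (Rel.Tbraid i j h)
  tfar i j h := by simpa [T] using mk_rel q (Rel.TTfar i j h)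
  tc i := by simpa [T, C] using mk_rel q (Rel.TC i)
  tco i j h1 h2 := by simpa [T, C] using mk_rel q (Rel.TCo i j h1 h2)
  txo i j h1 h2 := by simpa [T, X] using mk_rel q (Rel.TXo i j h1 h2)
  cross i := by
    simpa only [T, C, X, map_mul, map_add, map_smul] using mk_rel q (Rel.cross i)

end algebra

/-! ### Modules coinduced from the finite Hecke algebra -/

/-- Operators satisfying the relations of the finite Hecke algebra. -/
structure HeckeFam {F : Type} [Field F] (ξ : F) {n : ℕ} {A : Type} [Ring A] [Algebra F A]
    (t : Fin (n - 1) → A) : Prop where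
  quad : ∀ i, t i * t i = ξ • t i + 1
  braid : ∀ i j : Fin (n - 1), (j : ℕ) = i + 1 → t i * t j * t i = t j * t i * t j
  far : ∀ i j : Fin (n - 1), (i : ℕ) + 1 < j → t i * t j = t j * t i

theorem cross_of_move {F A : Type} [Field F] [Ring A] [Algebra F A] {ξ : F} {t c d x y : A}
    (hq : t * t = ξ • t + 1) (hc : c * c = 1) (hd : d * d = 1) (hdc : d * c = -(c * d))
    (hct : c * t = t * d + ξ • (c - d)) (hdt : d * t = t * c)
    (hxt : x * t = t * y + ξ • ((c * d - 1) * y)) :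
    (t + ξ • (c * d)) * x * t = y := by
  have hq' : ∀ z, t * (t * z) = ξ • (t * z) + z := fun z => by
    rw [← mul_assoc, hq, add_mul, one_mul, smul_mul_assoc]
  have hc' : ∀ z, c * (c * z) = z := fun z => by rw [← mul_assoc, hc, one_mul]
  have hd' : ∀ z, d * (d * z) = z := fun z => by rw [← mul_assoc, hd, one_mul]
  have hdc' : ∀ z, d * (c * z) = -(c * (d * z)) := fun z => by
    rw [← mul_assoc, hdc, neg_mul, mul_assoc]
  have hdt' : ∀ z, d * (t * z) = t * (c * z) := fun z => by
    rw [← mul_assoc, hdt, mul_assoc]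
  have hct' : ∀ z, c * (t * z) = t * (d * z) + ξ • (c * z - d * z) := fun z => by
    rw [← mul_assoc, hct]; simp only [add_mul, sub_mul, smul_mul_assoc, mul_assoc]
  simp only [add_mul, mul_add, sub_mul, mul_sub, smul_mul_assoc, mul_smul_comm, mul_assoc,
    hxt, hq', hc', hd', hdc', hdt', hct', one_mul, mul_neg]
  module

namespace Coind

variable {F} {n : ℕ} {V : Type} [AddCommGroup V] [Module F V]

/-- The right translation action on the space of linear maps. -/
noncomputable def opR : PC F (Fin n) →ₐ[F] Module.End F (PC F (Fin n) →ₗ[F] V) :=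
  AlgHom.ofLinearMap
    { toFun := fun r => LinearMap.lcomp F V (LinearMap.mulRight F r)
      map_add' := fun r r' => by ext f p; simp [mul_add]
      map_smul' := fun a r => by ext f p; simp }
    (by ext f p; simp) (fun r r' => by ext f p; simp [mul_assoc])

@[simp] theorem opR_apply (r : PC F (Fin n)) (f : PC F (Fin n) →ₗ[F] V) (p : PC F (Fin n)) :
    opR r f p = f (p * r) := rfl

variable (ξ : F) (t : Fin (n - 1) → Module.End F V)

/-- The action of the Hecke generators on the space of linear maps. -/
noncomputable def opT (i : Fin (n - 1)) : Module.End F (PC F (Fin n) →ₗ[F] V) where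
  toFun f := t i ∘ₗ f ∘ₗ PC.sw ξ (lo_ne_hi i) + f ∘ₗ PC.der ξ (lo_ne_hi i)
  map_add' f g := by ext p; simp; abel
  map_smul' a f := by ext p; simp

theorem opT_apply (i : Fin (n - 1)) (f : PC F (Fin n) →ₗ[F] V) (p : PC F (Fin n)) :
    opT ξ t i f p = t i (f (PC.sw ξ (lo_ne_hi i) p)) + f (PC.der ξ (lo_ne_hi i) p) := rfl

theorem opT_one (i : Fin (n - 1)) (f : PC F (Fin n) →ₗ[F] V) :
    opT ξ t i f 1 = t i (f 1) := by
  simp [opT_apply, PC.sw_one, PC.der_one]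

theorem opR_mul_opT (i : Fin (n - 1)) (r : PC F (Fin n)) :
    opR r * opT ξ t i =
      opT ξ t i * opR (PC.sw ξ (lo_ne_hi i) r) + opR (PC.der ξ (lo_ne_hi i) r) := by
  ext f p
  simp [opT_apply, PC.sw_mul, PC.der_mul, add_assoc]

theorem opR_mul_opT' (i : Fin (n - 1)) (r : PC F (Fin n))
    (z : Module.End F (PC F (Fin n) →ₗ[F] V)) :
    opR r * (opT ξ t i * z) =
      opT ξ t i * (opR (PC.sw ξ (lo_ne_hi i) r) * z) + opR (PC.der ξ (lo_ne_hi i) r) * z := by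
  rw [← mul_assoc, opR_mul_opT, add_mul, mul_assoc]

theorem eq_zero_of_one {D : Module.End F (PC F (Fin n) →ₗ[F] V)} (h1 : ∀ f, D f 1 = 0)
    (hx : ∀ i, ∃ g, opR (PC.x i) * D = D * opR g)
    (hc : ∀ i, ∃ g, opR (PC.c i) * D = D * opR g) : D = 0 := by
  have key : ∀ r, ∃ g, opR r * D = D * opR g := by
    intro r
    induction r using PC.induction with
    | hF a => exact ⟨algebraMap F _ a, by simp [Algebra.commutes]⟩
    | hx i => exact hx i
    | hc i => exact hc i
    | hmul a b ha hb =>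
      obtain ⟨a', ha⟩ := ha
      obtain ⟨b', hb⟩ := hb
      exact ⟨a' * b', by rw [map_mul, map_mul, mul_assoc, hb, ← mul_assoc, ha, mul_assoc]⟩
    | hadd a b ha hb =>
      obtain ⟨a', ha⟩ := ha
      obtain ⟨b', hb⟩ := hb
      exact ⟨a' + b', by rw [map_add, map_add, add_mul, mul_add, ha, hb]⟩
  ext f r
  obtain ⟨g, hg⟩ := key r
  have e := congrArg (fun φ => φ f (1 : PC F (Fin n))) hg
  simp only [Module.End.mul_apply, opR_apply, one_mul, h1] at e
  simpa using e

variable {ξ t}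

theorem opT_quad (ht : HeckeFam ξ t) (i : Fin (n - 1)) :
    opT ξ t i * opT ξ t i = ξ • opT ξ t i + 1 := by
  rw [← sub_eq_zero]
  have key : ∀ g, PC.QuadCond ξ (lo_ne_hi i) g → ∃ g', opR g *
      (opT ξ t i * opT ξ t i - (ξ • opT ξ t i + 1)) =
      (opT ξ t i * opT ξ t i - (ξ • opT ξ t i + 1)) * opR g' := by
    rintro g ⟨h1, h2, h3⟩
    refine ⟨g, ?_⟩
    have k2 := congrArg (fun r => opT ξ t i * opR r) h2
    have k3 := congrArg (opR (V := V)) h3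
    simp only [map_add, map_smul, map_sub, mul_add, mul_smul_comm, mul_sub] at k2 k3
    simp only [mul_sub, sub_mul, mul_add, add_mul, mul_one, one_mul, smul_mul_assoc,
      mul_smul_comm, mul_assoc, opR_mul_opT, opR_mul_opT', h1]
    linear_combination (norm := module) k2 + k3
  refine eq_zero_of_one (fun f => ?_) (fun j => key _ (PC.quadCond_x ..))
    (fun j => key _ (PC.quadCond_c ..))
  have := congrArg (fun φ => φ (f 1)) (ht.quad i)
  simp only [Module.End.mul_apply, LinearMap.add_apply, LinearMap.smul_apply,
    Module.End.one_apply] at this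
  simp [opT_one, this]

theorem opT_far (ht : HeckeFam ξ t) (i j : Fin (n - 1)) (hij : (i : ℕ) + 1 < j) :
    opT ξ t i * opT ξ t j = opT ξ t j * opT ξ t i := by
  rw [← sub_eq_zero]
  have key : ∀ g, PC.FarCond ξ (lo_ne_hi i) (lo_ne_hi j) g → ∃ g', opR g *
      (opT ξ t i * opT ξ t j - opT ξ t j * opT ξ t i) =
      (opT ξ t i * opT ξ t j - opT ξ t j * opT ξ t i) * opR g' := by
    rintro g ⟨h1, h2, h3, h4⟩
    refine ⟨PC.sw ξ (lo_ne_hi i) (PC.sw ξ (lo_ne_hi j) g), ?_⟩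
    simp only [mul_sub, sub_mul, mul_add, mul_assoc, opR_mul_opT, opR_mul_opT', h1,
      h2, h3, h4]
    module
  have n1 : lo i ≠ lo j := by simp only [lo, ne_eq, Fin.ext_iff]; omega
  have n2 : lo i ≠ hi j := by simp only [lo, hi, ne_eq, Fin.ext_iff]; omega
  have n3 : hi i ≠ lo j := by simp only [lo, hi, ne_eq, Fin.ext_iff]; omega
  have n4 : hi i ≠ hi j := by simp only [hi, ne_eq, Fin.ext_iff]; omega
  refine eq_zero_of_one (fun f => ?_)
    (fun l => key _ (PC.farCond_x ξ (lo_ne_hi i) (lo_ne_hi j) n1 n2 n3 n4 l))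
    (fun l => key _ (PC.farCond_c ξ (lo_ne_hi i) (lo_ne_hi j) n1 n2 n3 n4 l))
  have := congrArg (fun φ => φ (f 1)) (ht.far i j hij)
  simp only [Module.End.mul_apply] at this
  simp [opT_one, this]

theorem opT_braid (ht : HeckeFam ξ t) (i j : Fin (n - 1)) (hij : (j : ℕ) = i + 1) :
    opT ξ t i * opT ξ t j * opT ξ t i = opT ξ t j * opT ξ t i * opT ξ t j := by
  have hlo : lo j = hi i := by simp [lo, hi, hij]
  have hbd : hi i ≠ hi j := by simp only [hi, ne_eq, Fin.ext_iff]; omega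
  have had : lo i ≠ hi j := by simp only [lo, hi, ne_eq, Fin.ext_iff]; omega
  have rj : ∀ r, opR r * opT ξ t j = opT ξ t j * opR (PC.sw ξ hbd r) + opR (PC.der ξ hbd r) := by
    intro r
    have := opR_mul_opT ξ t j r
    simpa only [hlo] using this
  have rj' : ∀ r z, opR r * (opT ξ t j * z) =
      opT ξ t j * (opR (PC.sw ξ hbd r) * z) + opR (PC.der ξ hbd r) * z := by
    intro r z
    rw [← mul_assoc, rj, add_mul, mul_assoc]
  have qi : ∀ z, opT ξ t i * (opT ξ t i * z) = ξ • (opT ξ t i * z) + z := fun z => by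
    rw [← mul_assoc, opT_quad ht, add_mul, one_mul, smul_mul_assoc]
  have qj : ∀ z, opT ξ t j * (opT ξ t j * z) = ξ • (opT ξ t j * z) + z := fun z => by
    rw [← mul_assoc, opT_quad ht, add_mul, one_mul, smul_mul_assoc]
  rw [← sub_eq_zero]
  have key : ∀ g, PC.BraidCond ξ (lo_ne_hi i) hbd g → ∃ g', opR g *
      (opT ξ t i * opT ξ t j * opT ξ t i - opT ξ t j * opT ξ t i * opT ξ t j) =
      (opT ξ t i * opT ξ t j * opT ξ t i - opT ξ t j * opT ξ t i * opT ξ t j) * opR g' := by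
    rintro g ⟨h1, h2, h3, h4, h5, h6⟩
    refine ⟨PC.sw ξ hbd (PC.sw ξ (lo_ne_hi i) (PC.sw ξ hbd g)), ?_⟩
    have k4 := congrArg (fun r => opT ξ t i * opR r) h4
    have k5 := congrArg (fun r => opT ξ t j * opR r) h5
    have k6 := congrArg (opR (V := V)) h6
    simp only [map_add, map_smul, mul_add, mul_smul_comm] at k4 k5 k6
    simp only [mul_sub, sub_mul, mul_add, mul_assoc, opR_mul_opT, opR_mul_opT' ξ t i,
      rj, rj', qi, qj, h1, h2, h3]
    linear_combination (norm := module) k4 - k5 + k6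
  refine eq_zero_of_one (fun f => ?_) (fun j => key _ (PC.braidCond_x ξ _ hbd had j))
    (fun j => key _ (PC.braidCond_c ξ _ hbd had j))
  have := congrArg (fun φ => φ (f 1)) (ht.braid i j hij)
  simp only [Module.End.mul_apply] at this
  simp [opT_one, this]

theorem hcFam (ht : HeckeFam ξ t) :
    HCFam ξ (fun i => opR (V := V) (PC.x i)) (fun i => opR (PC.c i)) (opT ξ t) where
  cc i := by rw [← map_mul, PC.cc, map_one]
  canti i j h := by rw [← map_mul, PC.canti h, map_neg, map_mul]
  xx i j := by rw [← map_mul, PC.xx, map_mul]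
  cx i j h := by rw [← map_mul, ← PC.xc h, map_mul]
  cxcx i := by rw [← map_mul, ← map_mul, PC.cxcx, map_one]
  tquad := opT_quad ht
  tbraid := opT_braid ht
  tfar := opT_far ht
  tc i := by simp [opR_mul_opT, PC.sw_c_snd, PC.der_c_snd]
  tco i j h1 h2 := by simp [opR_mul_opT, PC.sw_c_other _ _ h1 h2, PC.der_c_other _ _ h1 h2]
  txo i j h1 h2 := by simp [opR_mul_opT, PC.sw_x_other _ _ h1 h2, PC.der_x_other _ _ h1 h2]
  cross i := cross_of_move (opT_quad ht i) (by rw [← map_mul, PC.cc, map_one])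
    (by rw [← map_mul, PC.cc, map_one])
    (by rw [← map_mul, PC.canti (lo_ne_hi i).symm, map_neg, map_mul])
    (by simp [opR_mul_opT, PC.sw_c_fst, PC.der_c_fst])
    (by simp [opR_mul_opT, PC.sw_c_snd, PC.der_c_snd])
    (by simp [opR_mul_opT, PC.sw_x_fst, PC.der_x_fst])

end Coind

/-! ### Shuffles of two blocks -/

section shapes
variable {n : ℕ}

/-- The number of positions `p < j` with `S p = true`. -/
def cnt (S : Fin n → Bool) : ℕ → ℕ
  | 0 => 0
  | j + 1 => cnt S j + if h : j < n then (S ⟨j, h⟩).toNat else 0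

theorem cnt_succ (S : Fin n → Bool) (p : Fin n) : cnt S (p + 1) = cnt S p + (S p).toNat := by
  simp [cnt]

theorem cnt_mono (S : Fin n → Bool) : Monotone (cnt S) :=
  monotone_nat_of_le_succ fun _ => Nat.le_add_right _ _

theorem cnt_succ_le (S : Fin n → Bool) (j : ℕ) : cnt S (j + 1) ≤ cnt S j + 1 := by
  simp only [cnt]
  split
  · have := Bool.toNat_le (S ⟨j, by assumption⟩); omega
  · omega

theorem cnt_add_le (S : Fin n → Bool) (j l : ℕ) : cnt S (j + l) ≤ cnt S j + l := by
  induction l with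
  | zero => simp
  | succ l ih => have := cnt_succ_le S (j + l); rw [← add_assoc]; omega

theorem cnt_le (S : Fin n → Bool) (j : ℕ) : cnt S j ≤ j := by
  simpa [cnt] using cnt_add_le S 0 j

theorem cnt_swap_lt (S : Fin n → Bool) (i : Fin (n - 1)) {j : ℕ} (hj : j ≤ i) :
    cnt (S ∘ s i) j = cnt S j := by
  induction j with
  | zero => rfl
  | succ j ih =>
    have hjn : j < n := by have := i.isLt; omega
    have e : s i ⟨j, hjn⟩ = ⟨j, hjn⟩ := Equiv.swap_apply_of_ne_of_ne
      (by simp only [lo, ne_eq, Fin.ext_iff]; omega) (by simp only [hi, ne_eq, Fin.ext_iff]; omega)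
    simp [cnt, hjn, e, ih (by omega)]

theorem s_lo (i : Fin (n - 1)) : s i (lo i) = hi i := Equiv.swap_apply_left ..

theorem s_hi (i : Fin (n - 1)) : s i (hi i) = lo i := Equiv.swap_apply_right ..

theorem s_other (i : Fin (n - 1)) {p : Fin n} (h1 : p ≠ lo i) (h2 : p ≠ hi i) : s i p = p :=
  Equiv.swap_apply_of_ne_of_ne h1 h2

theorem s_s (i : Fin (n - 1)) (p : Fin n) : s i (s i p) = p := Equiv.swap_apply_self ..

theorem cnt_lo_succ (S : Fin n → Bool) (i : Fin (n - 1)) :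
    cnt S (i + 1) = cnt S i + (S (lo i)).toNat := cnt_succ S (lo i)

theorem cnt_hi_succ (S : Fin n → Bool) (i : Fin (n - 1)) :
    cnt S (i + 2) = cnt S i + (S (lo i)).toNat + (S (hi i)).toNat := by
  rw [← cnt_lo_succ]; exact cnt_succ S (hi i)

theorem cnt_swap (S : Fin n → Bool) (i : Fin (n - 1)) {j : ℕ} (hj : j ≠ i + 1) :
    cnt (S ∘ s i) j = cnt S j := by
  rcases Nat.lt_or_ge j (i + 1) with h | h
  · exact cnt_swap_lt S i (by omega)
  obtain ⟨l, rfl⟩ : ∃ l, j = i + 2 + l := ⟨j - (i + 2), by omega⟩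
  clear hj h
  induction l with
  | zero =>
    rw [add_zero, cnt_hi_succ, cnt_hi_succ, cnt_swap_lt S i le_rfl]
    simp only [Function.comp_apply, s_lo, s_hi]
    omega
  | succ l ih =>
    rw [← add_assoc]
    simp only [cnt, ih]
    congr 1
    split
    · rw [Function.comp_apply, s_other]
      · simp only [lo, ne_eq, Fin.ext_iff]; omega
      · simp only [hi, ne_eq, Fin.ext_iff]; omega
    · rfl

theorem cnt_swap_mid (S : Fin n → Bool) (i : Fin (n - 1)) :
    cnt (S ∘ s i) (i + 1) = cnt S i + (S (hi i)).toNat := by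
  rw [cnt_lo_succ, cnt_swap_lt S i le_rfl, Function.comp_apply, s_lo]

variable (n) in
/-- Shuffles of `m` positions marked `true` with the remaining positions of `Fin n`. -/
abbrev Sh (m : ℕ) : Type := {S : Fin n → Bool // cnt S n = m}

variable {m : ℕ}

/-- The action of a basic transposition on shuffles. -/
def Sh.act (i : Fin (n - 1)) (S : Sh n m) : Sh n m :=
  ⟨S.1 ∘ s i, by rw [cnt_swap _ _ (by have := i.isLt; omega), S.2]⟩

theorem Sh.act_lo (i : Fin (n - 1)) (S : Sh n m) : (S.act i).1 (lo i) = S.1 (hi i) := by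
  simp [Sh.act, s_lo]

theorem Sh.act_hi (i : Fin (n - 1)) (S : Sh n m) : (S.act i).1 (hi i) = S.1 (lo i) := by
  simp [Sh.act, s_hi]

theorem Sh.act_other (i : Fin (n - 1)) (S : Sh n m) {p : Fin n} (h1 : p ≠ lo i)
    (h2 : p ≠ hi i) : (S.act i).1 p = S.1 p := by
  simp [Sh.act, s_other i h1 h2]

theorem Sh.act_act (i : Fin (n - 1)) (S : Sh n m) : (S.act i).act i = S := by
  apply Subtype.ext; funext p; simp [Sh.act, s_s]

theorem Sh.act_same (i : Fin (n - 1)) (S : Sh n m) (h : S.1 (lo i) = S.1 (hi i)) :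
    S.act i = S := by
  apply Subtype.ext; funext p
  by_cases h1 : p = lo i
  · subst h1; rw [Sh.act_lo, h]
  by_cases h2 : p = hi i
  · subst h2; rw [Sh.act_hi, h]
  exact Sh.act_other i S h1 h2

/-- The length statistic of a shuffle. -/
def Sh.wt (S : Sh n m) : ℕ := ∑ j ∈ Finset.range n, (j - cnt S.1 j)

theorem Sh.wt_act_asc (i : Fin (n - 1)) (S : Sh n m) (h1 : S.1 (lo i) = true)
    (h2 : S.1 (hi i) = false) : (S.act i).wt = S.wt + 1 := by
  have hi' : (i : ℕ) + 1 ∈ Finset.range n := by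
    have := i.isLt; rw [Finset.mem_range]; omega
  unfold Sh.wt
  rw [← Finset.add_sum_erase _ _ hi', ← Finset.add_sum_erase _ _ hi']
  have e : ∀ j ∈ (Finset.range n).erase (i + 1), j - cnt (S.act i).1 j = j - cnt S.1 j := by
    intro j hj
    rw [Sh.act, cnt_swap _ _ (Finset.ne_of_mem_erase hj)]
  rw [Finset.sum_congr rfl e, Sh.act, cnt_swap_mid, cnt_lo_succ, h1, h2]
  have := cnt_le S.1 i
  simp only [Bool.toNat_false, Bool.toNat_true]
  omega

theorem Sh.wt_act_desc (i : Fin (n - 1)) (S : Sh n m) (h1 : S.1 (lo i) = false)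
    (h2 : S.1 (hi i) = true) : (S.act i).wt + 1 = S.wt := by
  rw [← Sh.wt_act_asc i (S.act i) (by rw [Sh.act_lo, h2]) (by rw [Sh.act_hi, h1]), Sh.act_act]

theorem Sh.le (S : Sh n m) : m ≤ n := by rw [← S.2]; exact cnt_le _ _

/-- The underlying natural number of `Sh.sg`. -/
def Sh.sgN (S : Sh n m) (p : Fin n) : ℕ :=
  if S.1 p then cnt S.1 p else m + (p - cnt S.1 p)

theorem Sh.sgN_true {S : Sh n m} {p : Fin n} (h : S.1 p = true) : S.sgN p = cnt S.1 p := by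
  simp [Sh.sgN, h]

theorem Sh.sgN_false {S : Sh n m} {p : Fin n} (h : S.1 p = false) :
    S.sgN p = m + (p - cnt S.1 p) := by
  simp [Sh.sgN, h]

theorem Sh.sgN_lt_of_true {S : Sh n m} {p : Fin n} (h : S.1 p = true) : S.sgN p < m := by
  rw [sgN_true h]
  have e := cnt_succ S.1 p
  have := cnt_mono S.1 (show (p : ℕ) + 1 ≤ n from p.isLt)
  rw [S.2, e, h] at this
  exact this

theorem Sh.sgN_lt (S : Sh n m) (p : Fin n) : S.sgN p < n := by
  rcases hp : S.1 p
  · rw [sgN_false hp]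
    have e := cnt_succ S.1 p
    have h1 := cnt_add_le S.1 (p + 1) (n - (p + 1))
    rw [show (p : ℕ) + 1 + (n - (p + 1)) = n by have := p.isLt; omega, S.2, e, hp,
      Bool.toNat_false] at h1
    have := cnt_le S.1 p
    have := p.isLt
    have := S.le
    omega
  · exact (sgN_lt_of_true hp).trans_le S.le

/-- The permutation attached to a shuffle, moving the `true` positions to the front. -/
def Sh.sg (S : Sh n m) (p : Fin n) : Fin n := ⟨S.sgN p, S.sgN_lt p⟩

theorem Sh.sgN_same (S : Sh n m) (i : Fin (n - 1)) (h : S.1 (lo i) = S.1 (hi i)) :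
    S.sgN (hi i) = S.sgN (lo i) + 1 := by
  have e := cnt_lo_succ S.1 i
  have e1 : ((lo i : Fin n) : ℕ) = i := rfl
  have e2 : ((hi i : Fin n) : ℕ) = i + 1 := rfl
  have := cnt_le S.1 i
  rcases hp : S.1 (lo i)
  · rw [sgN_false hp, sgN_false (h ▸ hp), e1, e2, e, hp, Bool.toNat_false]; omega
  · rw [sgN_true hp, sgN_true (h ▸ hp), e1, e2, e, hp, Bool.toNat_true]

theorem Sh.sgN_same_ne (S : Sh n m) (i : Fin (n - 1)) (h : S.1 (lo i) = S.1 (hi i)) :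
    S.sgN (lo i) + 1 ≠ m := by
  rcases hp : S.1 (lo i)
  · rw [sgN_false hp]; omega
  · have := S.sgN_same i h
    have := sgN_lt_of_true (S := S) (p := hi i) (h ▸ hp)
    omega

theorem Sh.sgN_act (S : Sh n m) (i : Fin (n - 1)) (h : S.1 (lo i) ≠ S.1 (hi i)) (p : Fin n) :
    (S.act i).sgN p = S.sgN (s i p) := by
  have e := cnt_lo_succ S.1 i
  have e1 : ((lo i : Fin n) : ℕ) = i := rfl
  have e2 : ((hi i : Fin n) : ℕ) = i + 1 := rfl
  have l := cnt_le S.1 i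
  have c1 : cnt (S.act i).1 i = cnt S.1 i := cnt_swap _ _ (by omega)
  have c2 : cnt (S.act i).1 (i + 1) = cnt S.1 i + (S.1 (hi i)).toNat := cnt_swap_mid _ _
  by_cases h1 : p = lo i
  · subst h1
    rw [s_lo]
    unfold Sh.sgN
    rw [Sh.act_lo, e1, e2, c1, e]
    rcases ha : S.1 (lo i) <;> rcases hb : S.1 (hi i) <;> simp_all
  by_cases h2 : p = hi i
  · subst h2
    rw [s_hi]
    unfold Sh.sgN
    rw [Sh.act_hi, e1, e2, c2]
    rcases ha : S.1 (lo i) <;> rcases hb : S.1 (hi i) <;> simp_all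
  · rw [s_other i h1 h2]
    unfold Sh.sgN
    rw [Sh.act_other i S h1 h2]
    have : cnt (S.act i).1 p = cnt S.1 p := cnt_swap _ _ (by
      intro hp; exact h2 (Fin.ext hp))
    rw [this]

theorem Sh.sg_act (S : Sh n m) (i : Fin (n - 1)) (h : S.1 (lo i) ≠ S.1 (hi i)) (p : Fin n) :
    (S.act i).sg p = S.sg (s i p) := Fin.ext (S.sgN_act i h p)

theorem cnt_down (S : Fin n → Bool) (a : ℕ) (hS : ∀ p : Fin n, (p : ℕ) < a → S p = true)
    (j : ℕ) (hj : j ≤ a) (hn : j ≤ n) : cnt S j = j := by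
  induction j with
  | zero => rfl
  | succ j ih =>
    have := hS ⟨j, by omega⟩ (by simp; omega)
    simp [cnt, ih (by omega) (by omega), this, show j < n by omega]

theorem cnt_up (S : Fin n → Bool) (a : ℕ) (hS : ∀ p : Fin n, a ≤ (p : ℕ) → S p = false)
    (j : ℕ) (hj : a ≤ j) : cnt S j = cnt S a := by
  induction j, hj using Nat.le_induction with
  | base => rfl
  | succ j hj ih =>
    simp only [cnt, ih]
    split
    · rw [hS ⟨j, by assumption⟩ hj]; simp
    · simp

theorem Sh.eq_of_no_desc (S : Sh n m)
    (h : ∀ i : Fin (n - 1), ¬(S.1 (lo i) = false ∧ S.1 (hi i) = true)) (p : Fin n) :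
    S.1 p = decide ((p : ℕ) < m) := by
  have step : ∀ j (hj : j + 1 < n), S.1 ⟨j + 1, hj⟩ = true → S.1 ⟨j, by omega⟩ = true := by
    intro j hj h1
    by_contra h0
    exact h ⟨j, by omega⟩ ⟨by simpa [lo] using h0, by simpa [hi] using h1⟩
  have down : ∀ l j (hj : j + l < n), S.1 ⟨j + l, hj⟩ = true → S.1 ⟨j, by omega⟩ = true := by
    intro l
    induction l with
    | zero => intro j hj h; exact h
    | succ l ih => intro j hj h; exact ih j (by omega) (step (j + l) (by omega) h)
  have down' : ∀ a b : Fin n, (a : ℕ) ≤ b → S.1 b = true → S.1 a = true := by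
    intro a b hab hb
    have := down (b - a) a (by have := b.isLt; omega)
    apply this
    rw [← hb]; exact congrArg S.1 (Fin.ext (by simp; omega))
  rcases hp : S.1 p
  · have hc := cnt_up S.1 p (fun r hr => by
      by_contra h0
      rw [down' p r hr (by simpa using h0)] at hp
      exact absurd hp (by simp)) n p.isLt.le
    have := cnt_le S.1 p
    rw [S.2] at hc
    symm; simp; omega
  · have hc := cnt_down S.1 (p + 1) (fun r hr => down' r p (by omega) hp) (p + 1) le_rfl p.isLt
    have := cnt_mono S.1 (show (p : ℕ) + 1 ≤ n from p.isLt)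
    rw [S.2, hc] at this
    symm; simp; omega

theorem cnt_decide_lt (j : ℕ) (hj : j ≤ n) :
    cnt (fun p : Fin n => decide ((p : ℕ) < m)) j = min j m := by
  induction j with
  | zero => simp [cnt]
  | succ j ih =>
    rw [cnt, ih (by omega), dif_pos (by omega)]
    by_cases h : j < m <;> simp [h] <;> omega

theorem cnt_not (S : Fin n → Bool) (j : ℕ) (hj : j ≤ n) :
    cnt (fun p => !S p) j = j - cnt S j := by
  induction j with
  | zero => simp [cnt]
  | succ j ih =>
    have := cnt_le S j
    rw [cnt, cnt, ih (by omega), dif_pos (by omega), dif_pos (by omega)]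
    cases S ⟨j, by omega⟩ <;> (simp; try omega)

/-- The identity shuffle. -/
def Sh.base (hm : m ≤ n) : Sh n m :=
  ⟨fun p => decide ((p : ℕ) < m), by rw [cnt_decide_lt n le_rfl]; omega⟩

theorem Sh.base_apply (hm : m ≤ n) (p : Fin n) : (Sh.base hm).1 p = decide ((p : ℕ) < m) := rfl

theorem Sh.sgN_base (hm : m ≤ n) (p : Fin n) : (Sh.base hm).sgN p = p := by
  have := cnt_decide_lt (m := m) p p.isLt.le
  by_cases h : (p : ℕ) < m
  · rw [sgN_true (by simpa [Sh.base] using h)]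
    exact this.trans (by omega)
  · rw [sgN_false (by simpa [Sh.base] using h)]
    have e : cnt (Sh.base hm).1 p = min (p : ℕ) m := this
    omega

theorem Sh.exists_desc (hm : m ≤ n) (S : Sh n m) (h : S ≠ Sh.base hm) :
    ∃ i : Fin (n - 1), S.1 (lo i) = false ∧ S.1 (hi i) = true := by
  by_contra h0
  exact h (Subtype.ext (funext fun p => S.eq_of_no_desc (fun i hi => h0 ⟨i, hi⟩) p))

/-- The complementary shuffle. -/
def Sh.compl {k : ℕ} (hn : n = m + k) (S : Sh n m) : Sh n k :=
  ⟨fun p => !S.1 p, by rw [cnt_not _ _ le_rfl, S.2]; omega⟩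

@[simp] theorem Sh.compl_apply {k : ℕ} (hn : n = m + k) (S : Sh n m) (p : Fin n) :
    (S.compl hn).1 p = !S.1 p := rfl

theorem Sh.compl_act {k : ℕ} (hn : n = m + k) (S : Sh n m) (i : Fin (n - 1)) :
    (S.act i).compl hn = (S.compl hn).act i := rfl

theorem Sh.sgN_compl {k : ℕ} (hn : n = m + k) (S : Sh n m) (p : Fin n) :
    (S.compl hn).sgN p = if S.1 p then k + cnt S.1 p else p - cnt S.1 p := by
  have e : cnt (S.compl hn).1 p = p - cnt S.1 p := cnt_not S.1 p p.isLt.le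
  have := cnt_le S.1 p
  unfold Sh.sgN
  rw [e, compl_apply]
  cases S.1 p <;> simp; omega

theorem Sh.sgN_compl_base {k : ℕ} (hn : n = k + m) (hk : k ≤ n) (p : Fin n) :
    ((Sh.base hk).compl hn).sgN p = if (p : ℕ) < k then m + p else p - k := by
  have := cnt_decide_lt (m := k) p p.isLt.le
  have e : cnt (Sh.base hk).1 p = min (p : ℕ) k := this
  rw [sgN_compl, e]
  by_cases h : (p : ℕ) < k
  · simp [Sh.base, h]; omega
  · simp [Sh.base, h]; omega

end shapes

/-! ### The finite Hecke module on shuffles -/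

/-- Operators indexed by the nodes inside the two blocks of `(m, n - m)`, satisfying the
relations of the finite Hecke algebra of the corresponding Young subgroup. -/
structure BlockHecke {F : Type} [Field F] (ξ : F) (n m : ℕ) {A : Type} [Ring A] [Algebra F A]
    (t : ℕ → A) : Prop where
  quad : ∀ j, j + 1 < n → j + 1 ≠ m → t j * t j = ξ • t j + 1
  braid : ∀ j, j + 2 < n → j + 1 ≠ m → j + 2 ≠ m →
    t j * t (j + 1) * t j = t (j + 1) * t j * t (j + 1)
  far : ∀ i j, i + 1 < j → j + 1 < n → i + 1 ≠ m → j + 1 ≠ m → t i * t j = t j * t i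

section vmod
variable {F} {n m : ℕ} {W : Type} [AddCommGroup W] [Module F W] (ξ : F)
  (t : ℕ → Module.End F W)

/-- The action of the Hecke generators on functions on shuffles. -/
def vT (i : Fin (n - 1)) : Module.End F (Sh n m → W) where
  toFun v S := if S.1 (lo i) = S.1 (hi i) then t (S.sgN (lo i)) (v S)
    else if S.1 (lo i) then v (S.act i) else v (S.act i) + ξ • v S
  map_add' v w := by
    funext S; simp only [Pi.add_apply]; split_ifs <;> simp; abel
  map_smul' a v := by
    funext S; simp only [Pi.smul_apply, RingHom.id_apply]
    split_ifs <;> simp [smul_comm a ξ]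

theorem vT_apply (i : Fin (n - 1)) (v : Sh n m → W) (S : Sh n m) :
    vT ξ t i v S = if S.1 (lo i) = S.1 (hi i) then t (S.sgN (lo i)) (v S)
      else if S.1 (lo i) then v (S.act i) else v (S.act i) + ξ • v S := rfl

theorem Sh.sgN_act_lo (S : Sh n m) (i : Fin (n - 1)) (h : S.1 (lo i) ≠ S.1 (hi i)) :
    (S.act i).sgN (lo i) = S.sgN (hi i) := by rw [S.sgN_act i h, s_lo]

theorem Sh.sgN_act_hi (S : Sh n m) (i : Fin (n - 1)) (h : S.1 (lo i) ≠ S.1 (hi i)) :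
    (S.act i).sgN (hi i) = S.sgN (lo i) := by rw [S.sgN_act i h, s_hi]

theorem Sh.sgN_act_other (S : Sh n m) (i : Fin (n - 1)) {p : Fin n} (h1 : p ≠ lo i)
    (h2 : p ≠ hi i) (h : S.1 (lo i) ≠ S.1 (hi i)) :
    (S.act i).sgN p = S.sgN p := by rw [S.sgN_act i h, s_other i h1 h2]

theorem Sh.sgN_far (S : Sh n m) {i j : Fin (n - 1)} (hij : (i : ℕ) + 1 < j)
    (h1 : S.1 (lo i) = S.1 (hi i)) (h2 : S.1 (lo j) = S.1 (hi j)) :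
    S.sgN (lo i) + 1 < S.sgN (lo j) ∨ S.sgN (lo j) + 1 < S.sgN (lo i) := by
  have hi1 := S.sgN_same i h1
  have hj1 := S.sgN_same j h2
  have e1 : ((lo i : Fin n) : ℕ) = i := rfl
  have e2 : ((lo j : Fin n) : ℕ) = j := rfl
  have c1 := cnt_hi_succ S.1 i
  have c2 := cnt_mono S.1 (show (i : ℕ) + 2 ≤ j by omega)
  have c3 := cnt_add_le S.1 (i + 2) (j - (i + 2))
  rw [show (i : ℕ) + 2 + (j - (i + 2)) = j by omega] at c3
  have l1 := cnt_le S.1 i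
  have l2 := cnt_le S.1 j
  rcases ha : S.1 (lo i) <;> rcases hb : S.1 (lo j)
  · rw [ha, ← h1, ha, Bool.toNat_false] at c1
    rw [sgN_false ha, sgN_false hb, e1, e2]; omega
  · right
    have a1 := sgN_lt_of_true (S := S) (p := hi j) (h2 ▸ hb)
    rw [sgN_false ha]; omega
  · left
    have a1 := sgN_lt_of_true (S := S) (p := hi i) (h1 ▸ ha)
    rw [sgN_false hb]; omega
  · rw [ha, ← h1, ha, Bool.toNat_true] at c1
    rw [sgN_true ha, sgN_true hb, e1, e2]; omega

theorem Sh.act_comm (S : Sh n m) {i j : Fin (n - 1)} (hij : (i : ℕ) + 1 < j) :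
    (S.act i).act j = (S.act j).act i := by
  have n1 : lo i ≠ lo j := by simp only [lo, ne_eq, Fin.ext_iff]; omega
  have n2 : lo i ≠ hi j := by simp only [lo, hi, ne_eq, Fin.ext_iff]; omega
  have n3 : hi i ≠ lo j := by simp only [lo, hi, ne_eq, Fin.ext_iff]; omega
  have n4 : hi i ≠ hi j := by simp only [hi, ne_eq, Fin.ext_iff]; omega
  apply Subtype.ext; funext p
  by_cases h1 : p = lo i
  · subst h1; rw [act_other j _ n1 n2, act_lo, act_lo, act_other j _ n3 n4]
  by_cases h2 : p = hi i
  · subst h2; rw [act_other j _ n3 n4, act_hi, act_hi, act_other j _ n1 n2]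
  by_cases h3 : p = lo j
  · subst h3; rw [act_lo, act_other i _ n2.symm n4.symm, act_other i _ n1.symm n3.symm, act_lo]
  by_cases h4 : p = hi j
  · subst h4; rw [act_hi, act_other i _ n1.symm n3.symm, act_other i _ n2.symm n4.symm, act_hi]
  rw [act_other j _ h3 h4, act_other i _ h1 h2, act_other i _ h1 h2, act_other j _ h3 h4]

variable {ξ t}

theorem vT_quad (ht : BlockHecke ξ n m t) (i : Fin (n - 1)) :
    vT (m := m) ξ t i * vT ξ t i = ξ • vT ξ t i + 1 := by
  refine LinearMap.ext fun v => funext fun S => ?_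
  simp only [Module.End.mul_apply, LinearMap.add_apply, LinearMap.smul_apply,
    Module.End.one_apply, Pi.add_apply, Pi.smul_apply]
  by_cases h : S.1 (lo i) = S.1 (hi i)
  · have := congrArg (fun φ => φ (v S)) (ht.quad (S.sgN (lo i))
      (by rw [← S.sgN_same i h]; exact S.sgN_lt _) (S.sgN_same_ne i h))
    simpa [vT_apply, h] using this
  · rcases ha : S.1 (lo i) <;> rcases hb : S.1 (hi i) <;>
      simp_all [vT_apply, Sh.act_lo, Sh.act_hi, Sh.act_act] <;> abel

theorem vT_far (ht : BlockHecke ξ n m t) (i j : Fin (n - 1)) (hij : (i : ℕ) + 1 < j) :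
    vT (m := m) ξ t i * vT ξ t j = vT ξ t j * vT ξ t i := by
  have n1 : lo i ≠ lo j := by simp only [lo, ne_eq, Fin.ext_iff]; omega
  have n2 : lo i ≠ hi j := by simp only [lo, hi, ne_eq, Fin.ext_iff]; omega
  have n3 : hi i ≠ lo j := by simp only [lo, hi, ne_eq, Fin.ext_iff]; omega
  have n4 : hi i ≠ hi j := by simp only [hi, ne_eq, Fin.ext_iff]; omega
  refine LinearMap.ext fun v => funext fun S => ?_
  simp only [Module.End.mul_apply]
  by_cases h1 : S.1 (lo i) = S.1 (hi i) <;> by_cases h2 : S.1 (lo j) = S.1 (hi j)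
  · have l1 : S.sgN (lo i) + 1 < n := by rw [← S.sgN_same i h1]; exact S.sgN_lt _
    have l2 : S.sgN (lo j) + 1 < n := by rw [← S.sgN_same j h2]; exact S.sgN_lt _
    simp only [vT_apply, h1, h2, if_true]
    rcases S.sgN_far hij h1 h2 with h | h
    · exact congrArg (fun φ => φ (v S))
        (ht.far _ _ h l2 (S.sgN_same_ne i h1) (S.sgN_same_ne j h2))
    · exact congrArg (fun φ => φ (v S))
        (ht.far _ _ h l1 (S.sgN_same_ne j h2) (S.sgN_same_ne i h1)).symm
  all_goals
    simp only [vT_apply, h1, h2, if_true, if_false, Sh.act_other i _ n1.symm n3.symm,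
      Sh.act_other i _ n2.symm n4.symm, Sh.act_other j _ n1 n2, Sh.act_other j _ n3 n4,
      Sh.sgN_act_other S j n1 n2, Sh.sgN_act_other S i n1.symm n3.symm, Sh.act_comm S hij,
      ne_eq, not_false_eq_true]
    split_ifs <;> simp only [map_add, map_smul, smul_add] <;> first | rfl | module

theorem vT_braid (ht : BlockHecke ξ n m t) (i j : Fin (n - 1)) (hij : (j : ℕ) = i + 1) :
    vT (m := m) ξ t i * vT ξ t j * vT ξ t i = vT ξ t j * vT ξ t i * vT ξ t j := by
  have hlo : hi i = lo j := by simp [lo, hi, hij]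
  have n1 : hi j ≠ lo i := by simp only [lo, hi, ne_eq, Fin.ext_iff]; omega
  have n2 : hi j ≠ hi i := by simp only [hi, ne_eq, Fin.ext_iff]; omega
  have n3 : lo i ≠ lo j := by simp only [lo, ne_eq, Fin.ext_iff]; omega
  have a1 : ∀ S : Sh n m, (S.act i).1 (hi j) = S.1 (hi j) := fun S => S.act_other i n1 n2
  have a2 : ∀ S : Sh n m, (S.act j).1 (lo i) = S.1 (lo i) := fun S => S.act_other j n3 n1.symm
  have a3 : ∀ S : Sh n m, (S.act i).1 (lo j) = S.1 (lo i) := fun S => hlo ▸ S.act_hi i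
  have a4 : ∀ S : Sh n m, (S.act i).1 (lo i) = S.1 (lo j) := fun S => hlo ▸ S.act_lo i
  have a5 : ∀ S : Sh n m, (S.act j).1 (hi j) = S.1 (lo j) := fun S => S.act_hi j
  have a6 : ∀ S : Sh n m, (S.act j).1 (lo j) = S.1 (hi j) := fun S => S.act_lo j
  have b2 : ∀ S : Sh n m, S.1 (lo j) ≠ S.1 (hi j) → (S.act j).sgN (lo i) = S.sgN (lo i) :=
    fun S h => S.sgN_act_other j n3 n1.symm h
  have b3 : ∀ S : Sh n m, S.1 (lo i) ≠ S.1 (lo j) → (S.act i).sgN (lo j) = S.sgN (lo i) :=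
    fun S h => hlo ▸ S.sgN_act_hi i (hlo ▸ h)
  have b4 : ∀ S : Sh n m, S.1 (lo i) ≠ S.1 (lo j) → (S.act i).sgN (lo i) = S.sgN (lo j) :=
    fun S h => hlo ▸ S.sgN_act_lo i (hlo ▸ h)
  have b6 : ∀ S : Sh n m, S.1 (lo j) ≠ S.1 (hi j) → (S.act j).sgN (lo j) = S.sgN (hi j) :=
    fun S h => S.sgN_act_lo j h
  refine LinearMap.ext fun v => funext fun S => ?_
  simp only [Module.End.mul_apply]
  have key : S.1 (lo i) = S.1 (lo j) → S.1 (lo j) = S.1 (hi j) →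
      vT ξ t i (vT ξ t j (vT ξ t i v)) S = vT ξ t j (vT ξ t i (vT ξ t j v)) S := by
    intro h1 h2
    have h1' : S.1 (lo i) = S.1 (hi i) := hlo ▸ h1
    have s1 := S.sgN_same i h1'
    have s2 := S.sgN_same j h2
    rw [hlo] at s1
    have := congrArg (fun φ => φ (v S)) (ht.braid (S.sgN (lo i))
      (by have := S.sgN_lt (hi j); omega) (S.sgN_same_ne i h1')
      (by have := S.sgN_same_ne j h2; omega))
    simpa [vT_apply, h1', h2, s1] using this
  rcases ha : S.1 (lo i) <;> rcases hb : S.1 (lo j) <;> rcases hd : S.1 (hi j)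
  · exact key (by rw [ha, hb]) (by rw [hb, hd])
  rotate_right
  · exact key (by rw [ha, hb]) (by rw [hb, hd])
  all_goals
    simp [vT_apply, hlo, a1, a2, a3, a4, a5, a6, ha, hb, hd, b2, b3, b4, Sh.act_act]
  · have h1' : S.1 (lo i) = S.1 (hi i) := by rw [hlo, ha, hb]
    have := congrArg (fun φ => φ (v S)) (ht.quad (S.sgN (lo i))
      (by rw [← S.sgN_same i h1']; exact S.sgN_lt _) (S.sgN_same_ne i h1'))
    simp only [Module.End.mul_apply, LinearMap.add_apply, LinearMap.smul_apply,
      Module.End.one_apply] at this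
    rw [this]; module
  · have h1' : S.1 (lo j) = S.1 (hi j) := by rw [hd, hb]
    have := congrArg (fun φ => φ (v S)) (ht.quad (S.sgN (lo j))
      (by rw [← S.sgN_same j h1']; exact S.sgN_lt _) (S.sgN_same_ne j h1'))
    simp only [Module.End.mul_apply, LinearMap.add_apply, LinearMap.smul_apply,
      Module.End.one_apply] at this
    rw [this]; module

theorem vT_heckeFam (ht : BlockHecke ξ n m t) : HeckeFam ξ (vT (n := n) (m := m) ξ t) where
  quad := vT_quad ht
  braid := vT_braid ht
  far := vT_far ht

end vmod

/-! ### The standard elements attached to shuffles -/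

section shuffleElements
variable {F} {n m : ℕ} {ξ : F} {A : Type} [Ring A] [Algebra F A] {T : Fin (n - 1) → A}

open Classical in
/-- The product of generators along a reduced word of the shuffle `S`. -/
noncomputable def Sh.prodT (T : Fin (n - 1) → A) (S : Sh n m) : A :=
  if h : ∃ i : Fin (n - 1), S.1 (lo i) = false ∧ S.1 (hi i) = true then
    T h.choose * Sh.prodT T (S.act h.choose)
  else 1
termination_by S.wt
decreasing_by
  have := S.wt_act_desc h.choose h.choose_spec.1 h.choose_spec.2
  omega

theorem Sh.prodT_base (hm : m ≤ n) : (Sh.base hm).prodT T = 1 := by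
  rw [Sh.prodT, dif_neg]
  rintro ⟨i, h1, h2⟩
  simp only [Sh.base_apply, lo, hi, decide_eq_false_iff_not, decide_eq_true_eq] at h1 h2
  omega

theorem prodT_of_desc_aux (hT : HeckeFam ξ T) (L : ℕ) : ∀ (S : Sh n m), S.wt < L →
    ∀ i, S.1 (lo i) = false → S.1 (hi i) = true →
    S.prodT T = T i * (S.act i).prodT T := by
  induction L with
  | zero => intro S h; omega
  | succ L ih =>
    intro S hL i h1 h2
    have hex : ∃ i : Fin (n - 1), S.1 (lo i) = false ∧ S.1 (hi i) = true := ⟨i, h1, h2⟩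
    rw [Sh.prodT, dif_pos hex]
    obtain ⟨h3, h4⟩ := hex.choose_spec
    generalize hex.choose = j at h3 h4
    have w1 := S.wt_act_desc i h1 h2
    have w2 := S.wt_act_desc j h3 h4
    have main : ∀ i j : Fin (n - 1), (i : ℕ) + 1 < j → S.1 (lo i) = false → S.1 (hi i) = true →
        S.1 (lo j) = false → S.1 (hi j) = true →
        T j * (S.act j).prodT T = T i * (S.act i).prodT T := by
      intro i j hij h1 h2 h3 h4
      have w1 := S.wt_act_desc i h1 h2
      have w2 := S.wt_act_desc j h3 h4
      have n1 : lo i ≠ lo j := by simp only [lo, ne_eq, Fin.ext_iff]; omega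
      have n2 : lo i ≠ hi j := by simp only [lo, hi, ne_eq, Fin.ext_iff]; omega
      have n3 : hi i ≠ lo j := by simp only [lo, hi, ne_eq, Fin.ext_iff]; omega
      have n4 : hi i ≠ hi j := by simp only [hi, ne_eq, Fin.ext_iff]; omega
      rw [ih (S.act j) (by omega) i (by rw [S.act_other j n1 n2, h1])
          (by rw [S.act_other j n3 n4, h2]),
        ih (S.act i) (by omega) j (by rw [S.act_other i n1.symm n3.symm, h3])
          (by rw [S.act_other i n2.symm n4.symm, h4]), S.act_comm hij, ← mul_assoc, ← mul_assoc,
        hT.far i j hij]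
    rcases lt_trichotomy (i : ℕ) j with h | h | h
    · refine main i j (Nat.lt_of_le_of_ne h fun e => ?_) h1 h2 h3 h4
      have : hi i = lo j := Fin.ext e
      rw [this, h3] at h2; cases h2
    · rw [Fin.ext h]
    · refine (main j i (Nat.lt_of_le_of_ne h fun e => ?_) h3 h4 h1 h2).symm
      have : hi j = lo i := Fin.ext e
      rw [this, h1] at h4; cases h4

theorem Sh.prodT_of_desc (hT : HeckeFam ξ T) (S : Sh n m) {i : Fin (n - 1)}
    (h1 : S.1 (lo i) = false) (h2 : S.1 (hi i) = true) :
    S.prodT T = T i * (S.act i).prodT T :=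
  prodT_of_desc_aux hT _ S (Nat.lt_succ_self _) i h1 h2

theorem Sh.mul_prodT_asc (hT : HeckeFam ξ T) (S : Sh n m) {i : Fin (n - 1)}
    (h1 : S.1 (lo i) = true) (h2 : S.1 (hi i) = false) :
    T i * S.prodT T = (S.act i).prodT T := by
  rw [(S.act i).prodT_of_desc hT (i := i) (by rw [S.act_lo, h2]) (by rw [S.act_hi, h1]), S.act_act]

theorem Sh.mul_prodT_desc (hT : HeckeFam ξ T) (S : Sh n m) {i : Fin (n - 1)}
    (h1 : S.1 (lo i) = false) (h2 : S.1 (hi i) = true) :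
    T i * S.prodT T = ξ • S.prodT T + (S.act i).prodT T := by
  rw [S.prodT_of_desc hT h1 h2, ← mul_assoc, hT.quad, add_mul, smul_mul_assoc, one_mul]

theorem mul_prodT_same_aux (hT : HeckeFam ξ T) (L : ℕ) : ∀ (S : Sh n m), S.wt < L →
    ∀ i j : Fin (n - 1), S.1 (lo i) = S.1 (hi i) → (j : ℕ) = S.sgN (lo i) →
    T i * S.prodT T = S.prodT T * T j := by
  induction L with
  | zero => intro S h; omega
  | succ L ih =>
    intro S hL i j h1 hj
    by_cases hb : S = Sh.base S.le
    · rw [hb, Sh.prodT_base, one_mul, mul_one]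
      rw [hb, Sh.sgN_base] at hj
      rw [Fin.ext hj]
    obtain ⟨d, h3, h4⟩ := S.exists_desc _ hb
    have w1 := S.wt_act_desc d h3 h4
    have hd : S.1 (lo d) ≠ S.1 (hi d) := by rw [h3, h4]; simp
    have far : lo i ≠ lo d → lo i ≠ hi d → hi i ≠ lo d → hi i ≠ hi d →
        T i * T d = T d * T i → T i * S.prodT T = S.prodT T * T j := by
      intro n1 n2 n3 n4 hc
      have hs : (S.act d).1 (lo i) = (S.act d).1 (hi i) := by
        rw [S.act_other d n1 n2, S.act_other d n3 n4, h1]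
      rw [S.prodT_of_desc hT h3 h4, ← mul_assoc, hc, mul_assoc,
        ih (S.act d) (by omega) i j hs (by rw [S.sgN_act_other d n1 n2 hd, hj]), mul_assoc]
    rcases lt_trichotomy (i : ℕ) d with h | h | h
    · rcases Nat.lt_or_ge ((i : ℕ) + 1) d with h' | h'
      · exact far (by simp only [lo, ne_eq, Fin.ext_iff]; omega)
          (by simp only [lo, hi, ne_eq, Fin.ext_iff]; omega)
          (by simp only [lo, hi, ne_eq, Fin.ext_iff]; omega)
          (by simp only [hi, ne_eq, Fin.ext_iff]; omega) (hT.far i d h')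
      · have hid : hi i = lo d := Fin.ext (by simp only [lo, hi]; omega)
        have n1 : lo i ≠ lo d := by simp only [lo, ne_eq, Fin.ext_iff]; omega
        have n2 : lo i ≠ hi d := by simp only [lo, hi, ne_eq, Fin.ext_iff]; omega
        have n3 : hi d ≠ hi i := by simp only [hi, ne_eq, Fin.ext_iff]; omega
        have e1 : (S.act d).1 (lo i) = false := by rw [S.act_other d n1 n2, h1, hid, h3]
        have e2 : (S.act d).1 (hi i) = true := by rw [hid, S.act_lo, h4]
        have w2 := (S.act d).wt_act_desc i e1 e2
        have hne : (S.act d).1 (lo i) ≠ (S.act d).1 (hi i) := by rw [e1, e2]; simp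
        have hs : ((S.act d).act i).1 (lo d) = ((S.act d).act i).1 (hi d) := by
          rw [← hid, Sh.act_hi, e1, Sh.act_other i _ n2.symm n3, Sh.act_hi, h3]
        rw [S.prodT_of_desc hT h3 h4, (S.act d).prodT_of_desc hT e1 e2, ← mul_assoc, ← mul_assoc,
          hT.braid i d (by omega), mul_assoc,
          ih _ (by omega) d j hs (by
            rw [← hid, Sh.sgN_act_hi _ _ hne, S.sgN_act_other d n1 n2 hd, hj])]
        simp only [mul_assoc]
    · rw [Fin.ext h] at h1; exact absurd h1 hd
    · rcases Nat.lt_or_ge ((d : ℕ) + 1) i with h' | h'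
      · exact far (by simp only [lo, ne_eq, Fin.ext_iff]; omega)
          (by simp only [lo, hi, ne_eq, Fin.ext_iff]; omega)
          (by simp only [lo, hi, ne_eq, Fin.ext_iff]; omega)
          (by simp only [hi, ne_eq, Fin.ext_iff]; omega) (hT.far d i h').symm
      · have hid : hi d = lo i := Fin.ext (by simp only [lo, hi]; omega)
        have n1 : lo d ≠ lo i := by simp only [lo, ne_eq, Fin.ext_iff]; omega
        have n2 : hi i ≠ lo d := by simp only [lo, hi, ne_eq, Fin.ext_iff]; omega
        have n3 : hi i ≠ hi d := by simp only [hi, ne_eq, Fin.ext_iff]; omega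
        have e1 : (S.act d).1 (lo i) = false := by rw [← hid, S.act_hi, h3]
        have e2 : (S.act d).1 (hi i) = true := by rw [S.act_other d n2 n3, ← h1, ← hid, h4]
        have w2 := (S.act d).wt_act_desc i e1 e2
        have hne : (S.act d).1 (lo i) ≠ (S.act d).1 (hi i) := by rw [e1, e2]; simp
        have hs : ((S.act d).act i).1 (lo d) = ((S.act d).act i).1 (hi d) := by
          rw [Sh.act_other i _ n1 n2.symm, S.act_lo, hid, Sh.act_lo, e2, ← hid, h4]
        rw [S.prodT_of_desc hT h3 h4, (S.act d).prodT_of_desc hT e1 e2, ← mul_assoc, ← mul_assoc,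
          ← hT.braid d i (by omega), mul_assoc,
          ih _ (by omega) d j hs (by
            rw [Sh.sgN_act_other _ i n1 n2.symm hne, S.sgN_act_lo d hd, hid, hj])]
        simp only [mul_assoc]

theorem Sh.mul_prodT_same (hT : HeckeFam ξ T) (S : Sh n m) {i j : Fin (n - 1)}
    (h : S.1 (lo i) = S.1 (hi i)) (hj : (j : ℕ) = S.sgN (lo i)) :
    T i * S.prodT T = S.prodT T * T j :=
  mul_prodT_same_aux hT _ S (Nat.lt_succ_self _) i j h hj

end shuffleElements

/-! ### Induced modules in terms of generators -/

section shapes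
variable {n m : ℕ}

theorem Sh.compl_compl {k : ℕ} (hn : n = m + k) (hn' : n = k + m) (S : Sh n m) :
    (S.compl hn).compl hn' = S :=
  Subtype.ext (funext fun p => by simp)

theorem Sh.wt_compl_le_aux {k : ℕ} (hn : n = k + m) (hk : k ≤ n) (L : ℕ) :
    ∀ S : Sh n k, S.wt < L → (S.compl hn).wt ≤ ((Sh.base hk).compl hn).wt := by
  induction L with
  | zero => intro S h; omega
  | succ L ih =>
    intro S hL
    by_cases hb : S = Sh.base hk
    · rw [hb]
    obtain ⟨i, h1, h2⟩ := S.exists_desc hk hb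
    have w := S.wt_act_desc i h1 h2
    have := ih (S.act i) (by omega)
    rw [S.compl_act, Sh.wt_act_asc i (S.compl hn) (by simp [h1]) (by simp [h2])] at this
    omega

theorem Sh.wt_le {k : ℕ} (hn : n = k + m) (hk : k ≤ n) (S : Sh n m) :
    S.wt ≤ ((Sh.base hk).compl hn).wt := by
  have := Sh.wt_compl_le_aux hn hk _ (S.compl (show n = m + k by omega)) (Nat.lt_succ_self _)
  rwa [Sh.compl_compl] at this

end shapes

theorem PC.sw_x {F : Type} [Field F] {n : ℕ} (ξ : F) (i : Fin (n - 1)) (p : Fin n) :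
    PC.sw ξ (lo_ne_hi i) (PC.x p) = PC.x (F := F) (s i p) := by
  by_cases h1 : p = lo i
  · rw [h1, PC.sw_x_fst, s_lo]
  by_cases h2 : p = hi i
  · rw [h2, PC.sw_x_snd, s_hi]
  rw [PC.sw_x_other _ _ h1 h2, s_other i h1 h2]

theorem PC.sw_c {F : Type} [Field F] {n : ℕ} (ξ : F) (i : Fin (n - 1)) (p : Fin n) :
    PC.sw ξ (lo_ne_hi i) (PC.c p) = PC.c (F := F) (s i p) := by
  by_cases h1 : p = lo i
  · rw [h1, PC.sw_c_fst, s_lo]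
  by_cases h2 : p = hi i
  · rw [h2, PC.sw_c_snd, s_hi]
  rw [PC.sw_c_other _ _ h1 h2, s_other i h1 h2]

theorem HCFam.heckeFam {F : Type} [Field F] {ξ : F} {n : ℕ} {A : Type} [Ring A] [Algebra F A]
    {X C : Fin n → A} {T : Fin (n - 1) → A} (h : HCFam ξ X C T) : HeckeFam ξ T :=
  ⟨h.tquad, h.tbraid, h.tfar⟩

/-- The module `E` is generated by the image of `ι : W → E`, where the generators of the
parabolic subalgebra act on `W` by `x`, `c` and `t`, and `G` is the projection of `E` onto
functions on shuffles. -/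
structure IndFam {F : Type} [Field F] (ξ : F) {n m : ℕ} (hm : m ≤ n)
    {E W : Type} [AddCommGroup E] [Module F E] [AddCommGroup W] [Module F W]
    (XE CE : Fin n → Module.End F E) (TE : Fin (n - 1) → Module.End F E)
    (x c : Fin n → Module.End F W) (t : ℕ → Module.End F W)
    (ι : W →ₗ[F] E) (G : E →ₗ[F] (Sh n m → W)) : Prop where
  fam : HCFam ξ XE CE TE
  hx : ∀ p w, XE p (ι w) = ι (x p w)
  hc : ∀ p w, CE p (ι w) = ι (c p w)
  ht : ∀ (i : Fin (n - 1)) w, (i : ℕ) + 1 ≠ m → TE i (ι w) = ι (t i w)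
  gT : ∀ i e, G (TE i e) = vT ξ t i (G e)
  gι : ∀ w, G (ι w) = Pi.single (Sh.base hm) w
  span : ∀ U : Submodule F E, (∀ w, ι w ∈ U) → (∀ p, ∀ u ∈ U, XE p u ∈ U) →
    (∀ p, ∀ u ∈ U, CE p u ∈ U) → (∀ i, ∀ u ∈ U, TE i u ∈ U) → U = ⊤

namespace IndFam
variable {F} {ξ : F} {n m : ℕ} {hm : m ≤ n}
    {E W : Type} [AddCommGroup E] [Module F E] [AddCommGroup W] [Module F W]
    {XE CE : Fin n → Module.End F E} {TE : Fin (n - 1) → Module.End F E}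
    {x c : Fin n → Module.End F W} {t : ℕ → Module.End F W}
    {ι : W →ₗ[F] E} {G : E →ₗ[F] (Sh n m → W)}

variable (TE ι) in
/-- The element of `E` attached to a shuffle and a vector of `W`. -/
noncomputable def z (S : Sh n m) : W →ₗ[F] E := S.prodT TE ∘ₗ ι

variable (m TE ι) in
/-- The span of the elements attached to shuffles of length less than `L`. -/
noncomputable def fil (L : ℕ) : Submodule F E :=
  ⨆ S : {S : Sh n m // S.wt < L}, LinearMap.range (z TE ι S.1)

theorem z_mem_fil {S : Sh n m} {L : ℕ} (h : S.wt < L) (w : W) : z TE ι S w ∈ fil m TE ι L :=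
  Submodule.mem_iSup_of_mem (p := fun S : {S : Sh n m // S.wt < L} =>
    LinearMap.range (z TE ι S.1)) ⟨S, h⟩ ⟨w, rfl⟩

theorem fil_le {L : ℕ} {U : Submodule F E}
    (h : ∀ S : Sh n m, S.wt < L → ∀ w, z TE ι S w ∈ U) : fil m TE ι L ≤ U :=
  iSup_le fun S => by rintro _ ⟨w, rfl⟩; exact h S.1 S.2 w

theorem fil_mono {L L' : ℕ} (h : L ≤ L') : fil m TE ι L ≤ fil m TE ι L' :=
  fil_le fun _ hS w => z_mem_fil (hS.trans_le h) w

theorem z_base (w : W) : z TE ι (Sh.base hm) w = ι w := by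
  simp [z, Sh.prodT_base]

theorem TE_z_asc (h : IndFam ξ hm XE CE TE x c t ι G)
    {S : Sh n m} {i : Fin (n - 1)} (h1 : S.1 (lo i) = true)
    (h2 : S.1 (hi i) = false) (w : W) : TE i (z TE ι S w) = z TE ι (S.act i) w := by
  simp only [z, ← S.mul_prodT_asc h.fam.heckeFam h1 h2]; rfl

theorem TE_z_desc (h : IndFam ξ hm XE CE TE x c t ι G)
    {S : Sh n m} {i : Fin (n - 1)} (h1 : S.1 (lo i) = false)
    (h2 : S.1 (hi i) = true) (w : W) :
    TE i (z TE ι S w) = ξ • z TE ι S w + z TE ι (S.act i) w :=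
  congrArg (fun φ => φ (ι w)) (S.mul_prodT_desc h.fam.heckeFam h1 h2)

theorem TE_z_same (h : IndFam ξ hm XE CE TE x c t ι G)
    {S : Sh n m} {i : Fin (n - 1)} (h1 : S.1 (lo i) = S.1 (hi i)) (w : W) :
    TE i (z TE ι S w) = z TE ι S (t (S.sgN (lo i)) w) := by
  have h2 := S.sgN_same i h1
  have h3 := S.sgN_lt (hi i)
  have h4 : S.sgN (lo i) < n - 1 := by omega
  refine (congrArg (fun φ => φ (ι w)) (S.mul_prodT_same h.fam.heckeFam (j := ⟨_, h4⟩)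
    h1 rfl)).trans ?_
  simp only [Module.End.mul_apply]
  rw [h.ht _ _ (S.sgN_same_ne i h1)]; rfl

theorem TE_z_mem (h : IndFam ξ hm XE CE TE x c t ι G)
    (S : Sh n m) (i : Fin (n - 1)) (hi' : ¬ (S.1 (lo i) = true ∧ S.1 (hi i) = false))
    (w : W) : TE i (z TE ι S w) ∈ fil m TE ι (S.wt + 1) := by
  rcases ha : S.1 (lo i) <;> rcases hb : S.1 (hi i)
  · rw [h.TE_z_same (by rw [ha, hb])]; exact z_mem_fil (Nat.lt_succ_self _) _
  · rw [h.TE_z_desc ha hb]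
    have := S.wt_act_desc i ha hb
    exact add_mem (Submodule.smul_mem _ _ (z_mem_fil (Nat.lt_succ_self _) _))
      (z_mem_fil (by omega) _)
  · exact absurd ⟨ha, hb⟩ hi'
  · rw [h.TE_z_same (by rw [ha, hb])]; exact z_mem_fil (Nat.lt_succ_self _) _

theorem TE_mem (h : IndFam ξ hm XE CE TE x c t ι G)
    (i : Fin (n - 1)) {L : ℕ} {e : E} (he : e ∈ fil m TE ι L) :
    TE i e ∈ fil m TE ι (L + 1) := by
  suffices fil m TE ι L ≤ (fil m TE ι (L + 1)).comap (TE i) from this he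
  refine fil_le fun S hS w => ?_
  by_cases hi' : S.1 (lo i) = true ∧ S.1 (hi i) = false
  · rw [Submodule.mem_comap, h.TE_z_asc hi'.1 hi'.2]
    exact z_mem_fil (by rw [S.wt_act_asc i hi'.1 hi'.2]; omega) _
  · exact fil_mono (by omega) (h.TE_z_mem S i hi' w)

theorem pc_z_aux (h : IndFam ξ hm XE CE TE x c t ι G)
    (r : Fin n → PC F (Fin n)) (a : Fin n → Module.End F W)
    (hr : ∀ i p, PC.sw ξ (lo_ne_hi i) (r p) = r (s i p))
    (ha : ∀ p w, h.fam.pc (r p) (ι w) = ι (a p w)) (L : ℕ)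
    (hst : ∀ L' ≤ L, ∀ b : PC F (Fin n), ∀ e ∈ fil m TE ι L', h.fam.pc b e ∈ fil m TE ι L')
    (S : Sh n m) (hS : S.wt ≤ L)
    (ih : ∀ S' : Sh n m, S'.wt < S.wt → ∀ p w,
      h.fam.pc (r p) (z TE ι S' w) - z TE ι S' (a (S'.sg p) w) ∈ fil m TE ι S'.wt) (p : Fin n)
    (w : W) :
    h.fam.pc (r p) (z TE ι S w) - z TE ι S (a (S.sg p) w) ∈ fil m TE ι S.wt := by
  by_cases hb : S = Sh.base hm
  · have : S.sg p = p := Fin.ext (by simp only [Sh.sg]; rw [hb, Sh.sgN_base])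
    rw [this, hb, z_base, z_base, ha, sub_self]; exact zero_mem _
  obtain ⟨i, h1, h2⟩ := S.exists_desc hm hb
  have w1 := S.wt_act_desc i h1 h2
  have hne : S.1 (lo i) ≠ S.1 (hi i) := by rw [h1, h2]; simp
  have hz : ∀ w, z TE ι S w = TE i (z TE ι (S.act i) w) := fun w => by
    rw [h.TE_z_asc (by rw [S.act_lo, h2]) (by rw [S.act_hi, h1]), S.act_act]
  have e1 := congrArg (fun φ => φ (z TE ι (S.act i) w)) (h.fam.pc_mul_t i (r p))
  simp only [Module.End.mul_apply, LinearMap.add_apply, hr] at e1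
  have e2 := ih (S.act i) (by omega) (s i p) w
  rw [S.sg_act i hne, s_s] at e2
  have e3 := h.TE_mem i e2
  rw [w1, map_sub] at e3
  rw [hz, hz, e1, add_sub_right_comm]
  exact add_mem e3 (hst _ hS _ _ (z_mem_fil (by omega) _))

theorem pc_stable (h : IndFam ξ hm XE CE TE x c t ι G)
    (L : ℕ) (hX : ∀ p, ∀ S : Sh n m, S.wt < L → ∀ w,
      XE p (z TE ι S w) - z TE ι S (x (S.sg p) w) ∈ fil m TE ι S.wt)
    (hC : ∀ p, ∀ S : Sh n m, S.wt < L → ∀ w,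
      CE p (z TE ι S w) - z TE ι S (c (S.sg p) w) ∈ fil m TE ι S.wt)
    (b : PC F (Fin n)) : ∀ e ∈ fil m TE ι L, h.fam.pc b e ∈ fil m TE ι L := by
  have gen : ∀ (A : Module.End F E) (a : Sh n m → Module.End F W), (∀ S : Sh n m, S.wt < L → ∀ w,
      A (z TE ι S w) - z TE ι S (a S w) ∈ fil m TE ι S.wt) →
      ∀ e ∈ fil m TE ι L, A e ∈ fil m TE ι L := by
    intro A a hA e he
    suffices fil m TE ι L ≤ (fil m TE ι L).comap A from this he
    refine fil_le fun S hS w => ?_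
    have := add_mem (fil_mono hS.le (hA S hS w)) (z_mem_fil hS (a S w))
    rwa [sub_add_cancel] at this
  induction b using PC.induction with
  | hF r =>
    intro e he
    rw [AlgHom.commutes]; exact Submodule.smul_mem _ r he
  | hx i => rw [HCFam.pc_x]; exact gen _ _ (hX i)
  | hc i => rw [HCFam.pc_c]; exact gen _ _ (hC i)
  | hmul a b iha ihb => intro e he; rw [map_mul]; exact iha _ (ihb _ he)
  | hadd a b iha ihb => intro e he; rw [map_add]; exact add_mem (iha _ he) (ihb _ he)

theorem gen_z (h : IndFam ξ hm XE CE TE x c t ι G)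
    (L : ℕ) :
    (∀ p, ∀ S : Sh n m, S.wt < L → ∀ w,
      XE p (z TE ι S w) - z TE ι S (x (S.sg p) w) ∈ fil m TE ι S.wt) ∧
    (∀ p, ∀ S : Sh n m, S.wt < L → ∀ w,
      CE p (z TE ι S w) - z TE ι S (c (S.sg p) w) ∈ fil m TE ι S.wt) := by
  induction L with
  | zero => exact ⟨fun _ _ h => by omega, fun _ _ h => by omega⟩
  | succ L ih =>
    have hst : ∀ L' ≤ L, ∀ b : PC F (Fin n), ∀ e ∈ fil m TE ι L',
        h.fam.pc b e ∈ fil m TE ι L' := fun L' hL' =>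
      h.pc_stable L' (fun p S hS => ih.1 p S (by omega)) (fun p S hS => ih.2 p S (by omega))
    constructor
    · intro p S hS w
      have := h.pc_z_aux PC.x x (PC.sw_x ξ) (by simpa using h.hx) L hst S (by omega)
        (fun S' hS' p w => by rw [HCFam.pc_x]; exact ih.1 p S' (by omega) w) p w
      rwa [HCFam.pc_x] at this
    · intro p S hS w
      have := h.pc_z_aux PC.c c (PC.sw_c ξ) (by simpa using h.hc) L hst S (by omega)
        (fun S' hS' p w => by rw [HCFam.pc_c]; exact ih.2 p S' (by omega) w) p w
      rwa [HCFam.pc_c] at this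

theorem XE_z (h : IndFam ξ hm XE CE TE x c t ι G)
    (p : Fin n) (S : Sh n m) (w : W) :
    XE p (z TE ι S w) - z TE ι S (x (S.sg p) w) ∈ fil m TE ι S.wt :=
  (h.gen_z _).1 p S (Nat.lt_succ_self _) w

theorem CE_z (h : IndFam ξ hm XE CE TE x c t ι G)
    (p : Fin n) (S : Sh n m) (w : W) :
    CE p (z TE ι S w) - z TE ι S (c (S.sg p) w) ∈ fil m TE ι S.wt :=
  (h.gen_z _).2 p S (Nat.lt_succ_self _) w

theorem pc_mem (h : IndFam ξ hm XE CE TE x c t ι G)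
    (b : PC F (Fin n)) {L : ℕ} {e : E} (he : e ∈ fil m TE ι L) :
    h.fam.pc b e ∈ fil m TE ι L :=
  h.pc_stable L (h.gen_z L).1 (h.gen_z L).2 b e he

theorem XE_mem (h : IndFam ξ hm XE CE TE x c t ι G)
    (p : Fin n) {L : ℕ} {e : E} (he : e ∈ fil m TE ι L) : XE p e ∈ fil m TE ι L := by
  simpa using h.pc_mem (PC.x p) he

theorem CE_mem (h : IndFam ξ hm XE CE TE x c t ι G)
    (p : Fin n) {L : ℕ} {e : E} (he : e ∈ fil m TE ι L) : CE p e ∈ fil m TE ι L := by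
  simpa using h.pc_mem (PC.c p) he

theorem iSup_range_z (h : IndFam ξ hm XE CE TE x c t ι G) :
    ⨆ S : Sh n m, LinearMap.range (z TE ι S) = ⊤ := by
  set U := ⨆ S : Sh n m, LinearMap.range (z TE ι S) with hU
  have hz : ∀ (S : Sh n m) w, z TE ι S w ∈ U := fun S w =>
    Submodule.mem_iSup_of_mem (p := fun S : Sh n m => LinearMap.range (z TE ι S)) S ⟨w, rfl⟩
  have hf : ∀ L, fil m TE ι L ≤ U := fun L => fil_le fun S _ w => hz S w
  have st : ∀ A : Module.End F E, (∀ (S : Sh n m) w, A (z TE ι S w) ∈ U) →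
      ∀ u ∈ U, A u ∈ U := by
    intro A hA u hu
    suffices U ≤ U.comap A from this hu
    refine iSup_le fun S => ?_
    rintro _ ⟨w, rfl⟩; exact hA S w
  refine h.span U (fun w => z_base (hm := hm) (TE := TE) w ▸ hz _ w) (fun p => st _ fun S w => ?_)
    (fun p => st _ fun S w => ?_) (fun i => st _ fun S w => ?_)
  · exact hf (S.wt + 1) (h.XE_mem p (z_mem_fil (Nat.lt_succ_self _) _))
  · exact hf (S.wt + 1) (h.CE_mem p (z_mem_fil (Nat.lt_succ_self _) _))
  · exact hf (S.wt + 2) (h.TE_mem i (z_mem_fil (Nat.lt_succ_self _) _))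

theorem eq_of_z (h : IndFam ξ hm XE CE TE x c t ι G)
    {P : Type} [AddCommGroup P] [Module F P] {f g : E →ₗ[F] P}
    (hfg : ∀ (S : Sh n m) w, f (z TE ι S w) = g (z TE ι S w)) : f = g := by
  have : (⊤ : Submodule F E) ≤ LinearMap.eqLocus f g := by
    rw [← h.iSup_range_z]
    refine iSup_le fun S => ?_
    rintro _ ⟨w, rfl⟩; exact hfg S w
  exact LinearMap.ext fun e => this trivial

theorem G_z_aux (h : IndFam ξ hm XE CE TE x c t ι G)
    (L : ℕ) : ∀ (S : Sh n m), S.wt < L → ∀ w, G (z TE ι S w) = Pi.single S w := by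
  induction L with
  | zero => intro S h; omega
  | succ L ih =>
    intro S hS w
    by_cases hb : S = Sh.base hm
    · rw [hb, z_base, h.gι]
    obtain ⟨i, h1, h2⟩ := S.exists_desc hm hb
    have w1 := S.wt_act_desc i h1 h2
    have e := h.TE_z_asc (S := S.act i) (i := i) (by rw [S.act_lo, h2]) (by rw [S.act_hi, h1]) w
    rw [S.act_act] at e
    rw [← e, h.gT, ih _ (by omega)]
    funext S'
    rw [vT_apply]
    by_cases hS' : S' = S
    · subst hS'
      have n1 : S' ≠ S'.act i := fun hh => by have := congrArg Sh.wt hh; omega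
      simp [h1, h2, Pi.single_eq_of_ne n1]
    · have n1 : S'.act i ≠ S.act i := fun hh => hS' (by rw [← S'.act_act i, hh, S.act_act])
      rw [Pi.single_eq_of_ne hS', Pi.single_eq_of_ne n1]
      by_cases h3 : S' = S.act i
      · subst h3
        simp [S.act_lo, S.act_hi, h1, h2]
      · rw [Pi.single_eq_of_ne h3]; simp

theorem G_z (h : IndFam ξ hm XE CE TE x c t ι G)
    (S : Sh n m) (w : W) : G (z TE ι S w) = Pi.single S w :=
  h.G_z_aux _ S (Nat.lt_succ_self _) w

theorem G_fil (h : IndFam ξ hm XE CE TE x c t ι G)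
    {L : ℕ} {e : E} (he : e ∈ fil m TE ι L) {S : Sh n m} (hS : L ≤ S.wt) :
    G e S = 0 := by
  suffices fil m TE ι L ≤ LinearMap.ker (LinearMap.proj S ∘ₗ G) from this he
  refine fil_le fun S' hS' w => ?_
  have : S ≠ S' := by rintro rfl; omega
  simp [h.G_z, this]

theorem z_G_sum (h : IndFam ξ hm XE CE TE x c t ι G)
    (e : E) : ∑ S, z TE ι S (G e S) = e := by
  have : (∑ S, z TE ι S ∘ₗ LinearMap.proj S) ∘ₗ G = LinearMap.id := by
    refine h.eq_of_z fun S w => ?_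
    simp only [LinearMap.comp_apply, h.G_z, LinearMap.sum_apply, LinearMap.proj_apply,
      LinearMap.id_apply]
    rw [Finset.sum_eq_single S]
    · simp
    · intro S' _ hS'; simp [hS']
    · simp
  simpa using congrArg (fun φ => φ e) this

end IndFam

/-! ### The parabolic subalgebra and the universal property -/

theorem HCFam.map {F : Type} [Field F] {ξ : F} {n : ℕ} {A B : Type} [Ring A] [Algebra F A]
    [Ring B] [Algebra F B] {X C : Fin n → A} {T : Fin (n - 1) → A} (h : HCFam ξ X C T)
    (φ : A →ₐ[F] B) : HCFam ξ (fun i => φ (X i)) (fun i => φ (C i)) (fun i => φ (T i)) where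
  cc i := by rw [← map_mul, h.cc, map_one]
  canti i j hij := by rw [← map_mul, h.canti i j hij, map_neg, map_mul]
  xx i j := by rw [← map_mul, h.xx, map_mul]
  cx i j hij := by rw [← map_mul, h.cx i j hij, map_mul]
  cxcx i := by rw [← map_mul, ← map_mul, h.cxcx, map_one]
  tquad i := by rw [← map_mul, h.tquad, map_add, map_smul, map_one]
  tbraid i j hij := by simp only [← map_mul, h.tbraid i j hij]
  tfar i j hij := by simp only [← map_mul, h.tfar i j hij]
  tc i := by simp only [← map_mul, h.tc i]
  tco i j h1 h2 := by simp only [← map_mul, h.tco i j h1 h2]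
  txo i j h1 h2 := by simp only [← map_mul, h.txo i j h1 h2]
  cross i := by simp only [← map_mul, ← map_smul, ← map_add, h.cross i]

theorem H.induction {F : Type} [Field F] {q : F} {n : ℕ} {p : H F q n → Prop}
    (hF : ∀ r : F, p (algebraMap F _ r))
    (hX : ∀ i, p (X F q i)) (hC : ∀ i, p (C F q i)) (hT : ∀ i, p (T F q i))
    (hmul : ∀ a b, p a → p b → p (a * b))
    (hadd : ∀ a b, p a → p b → p (a + b)) (a : H F q n) : p a := by
  obtain ⟨r, rfl⟩ := RingQuot.mkAlgHom_surjective F (Rel F q n) a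
  induction r using FreeAlgebra.induction with
  | grade0 r => rw [AlgHom.commutes]; exact hF r
  | grade1 g =>
    cases g with
    | X i => exact hX i
    | Xinv i =>
      have := hmul _ _ (hmul _ _ (hC i) (hX i)) (hC i)
      rw [← xinv_eq] at this; exact this
    | C i => exact hC i
    | T i => exact hT i
  | mul a b ha hb => rw [map_mul]; exact hmul _ _ ha hb
  | add a b ha hb => rw [map_add]; exact hadd _ _ ha hb

theorem inYoung_s_iff {n m l : ℕ} (hn : n = m + l) (j : Fin (n - 1)) :
    InYoung [m, l] (s j) ↔ (j : ℕ) + 1 ≠ m := by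
  have hb : ∀ p : Fin n, blk [m, l] p = if (p : ℕ) < m then 0 else 1 := fun p => by
    have := p.isLt
    simp only [blk]
    split_ifs <;> omega
  constructor
  · intro h e
    have := h (lo j)
    rw [s_lo, hb, hb, if_neg (by simp only [hi]; omega), if_pos (by simp only [lo]; omega)] at this
    omega
  · intro h p
    have key : (j : ℕ) + 1 < m ↔ (j : ℕ) < m := by omega
    by_cases h1 : p = lo j
    · rw [h1, s_lo, hb, hb]; exact if_congr key rfl rfl
    by_cases h2 : p = hi j
    · rw [h2, s_hi, hb, hb]; exact (if_congr key rfl rfl).symm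
    rw [s_other j h1 h2]

section parabolic
variable {F} (q : F) {n m l : ℕ}

theorem X_mem_parabolicC (μ : List ℕ) (p : Fin n) : X F q p ∈ parabolicC F q μ :=
  Algebra.subset_adjoin (Or.inl (Or.inl (Or.inl ⟨p, rfl⟩)))

theorem C_mem_parabolicC (μ : List ℕ) (p : Fin n) : C F q p ∈ parabolicC F q μ :=
  Algebra.subset_adjoin (Or.inl (Or.inr ⟨p, rfl⟩))

theorem T_mem_parabolicC (hn : n = m + l) (j : Fin (n - 1)) (hj : (j : ℕ) + 1 ≠ m) :
    T F q j ∈ parabolicC F q [m, l] :=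
  Algebra.subset_adjoin (Or.inr ⟨j, (inYoung_s_iff hn j).2 hj, rfl⟩)

/-- The generator `X_p` in a parabolic subalgebra. -/
noncomputable def parX (μ : List ℕ) (p : Fin n) : parabolicC F q (n := n) μ :=
  ⟨X F q p, X_mem_parabolicC q μ p⟩

/-- The generator `C_p` in a parabolic subalgebra. -/
noncomputable def parC (μ : List ℕ) (p : Fin n) : parabolicC F q (n := n) μ :=
  ⟨C F q p, C_mem_parabolicC q μ p⟩

/-- The generator `T_j` in the parabolic subalgebra of `(m, l)`, and `0` at the nodes which
do not belong to it. -/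
noncomputable def parT (hn : n = m + l) (j : ℕ) : parabolicC F q (n := n) [m, l] :=
  if h : j < n - 1 ∧ j + 1 ≠ m then ⟨T F q ⟨j, h.1⟩, T_mem_parabolicC q hn _ h.2⟩ else 0

theorem parT_coe (hn : n = m + l) (j : Fin (n - 1)) (hj : (j : ℕ) + 1 ≠ m) :
    (parT q hn j : H F q n) = T F q j := by
  rw [parT, dif_pos ⟨j.isLt, hj⟩]

theorem parT_blockHecke (hn : n = m + l) : BlockHecke (q - q⁻¹) n m (parT q hn) where
  quad j h1 h2 := Subtype.ext <| by
    have e := parT_coe q hn ⟨j, by omega⟩ h2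
    simp only at e
    simp only [MulMemClass.coe_mul, e, AddMemClass.coe_add, SetLike.val_smul, OneMemClass.coe_one]
    exact (hcFam q).tquad _
  braid j h1 h2 h3 := Subtype.ext <| by
    have e := parT_coe q hn ⟨j, by omega⟩ h2
    have e' := parT_coe q hn ⟨j + 1, by omega⟩ h3
    simp only at e e'
    simp only [MulMemClass.coe_mul, e, e']
    exact (hcFam q).tbraid _ _ rfl
  far i j hij h1 h2 h3 := Subtype.ext <| by
    have e := parT_coe q hn ⟨i, by omega⟩ h2
    have e' := parT_coe q hn ⟨j, by omega⟩ h3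
    simp only at e e'
    simp only [MulMemClass.coe_mul, e, e']
    exact (hcFam q).tfar _ _ hij

theorem BlockHecke.map {ξ : F} {A B : Type} [Ring A] [Algebra F A]
    [Ring B] [Algebra F B] {t : ℕ → A} (h : BlockHecke ξ n m t) (φ : A →ₐ[F] B) :
    BlockHecke ξ n m (fun j => φ (t j)) where
  quad j h1 h2 := by rw [← map_mul, h.quad j h1 h2, map_add, map_smul, map_one]
  braid j h1 h2 h3 := by simp only [← map_mul, h.braid j h1 h2 h3]
  far i j hij h1 h2 h3 := by simp only [← map_mul, h.far i j hij h1 h2 h3]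

/-- The map from the Clifford–Laurent algebra to a parabolic subalgebra. -/
noncomputable def parPC (μ : List ℕ) : PC F (Fin n) →ₐ[F] parabolicC F q (n := n) μ :=
  (hcFam q).pc.codRestrict _ fun r => by
    induction r using PC.induction with
    | hF r => rw [AlgHom.commutes]; exact Subalgebra.algebraMap_mem _ r
    | hx i => rw [HCFam.pc_x]; exact X_mem_parabolicC q μ i
    | hc i => rw [HCFam.pc_c]; exact C_mem_parabolicC q μ i
    | hmul a b ha hb => rw [map_mul]; exact mul_mem ha hb
    | hadd a b ha hb => rw [map_add]; exact add_mem ha hb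

@[simp] theorem parPC_coe (μ : List ℕ) (r : PC F (Fin n)) :
    (parPC q μ r : H F q n) = (hcFam q).pc r := rfl

theorem parPC_x (μ : List ℕ) (p : Fin n) : parPC q μ (PC.x p) = parX q μ p :=
  Subtype.ext ((hcFam q).pc_x p)

theorem parPC_c (μ : List ℕ) (p : Fin n) : parPC q μ (PC.c p) = parC q μ p :=
  Subtype.ext ((hcFam q).pc_c p)

theorem parPC_mul_parT (hn : n = m + l) (j : Fin (n - 1)) (hj : (j : ℕ) + 1 ≠ m)
    (r : PC F (Fin n)) : parPC q [m, l] r * parT q hn j =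
      parT q hn j * parPC q [m, l] (PC.sw (q - q⁻¹) (lo_ne_hi j) r) +
        parPC q [m, l] (PC.der (q - q⁻¹) (lo_ne_hi j) r) := Subtype.ext <| by
  simp only [MulMemClass.coe_mul, parPC_coe, parT_coe q hn j hj, AddMemClass.coe_add]
  exact (hcFam q).pc_mul_t j r

theorem parabolicC_induction (hn : n = m + l) {p : parabolicC F q (n := n) [m, l] → Prop}
    (hF : ∀ r : F, p (algebraMap F _ r))
    (hX : ∀ i, p (parX q [m, l] i)) (hC : ∀ i, p (parC q [m, l] i))
    (hT : ∀ j : Fin (n - 1), (j : ℕ) + 1 ≠ m → p (parT q hn j))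
    (hmul : ∀ a b, p a → p b → p (a * b))
    (hadd : ∀ a b, p a → p b → p (a + b)) (a : parabolicC F q (n := n) [m, l]) : p a := by
  obtain ⟨a, ha⟩ := a
  change a ∈ Algebra.adjoin F _ at ha
  induction ha using Algebra.adjoin_induction with
  | mem x hx =>
    rcases hx with ((⟨i, rfl⟩ | ⟨i, rfl⟩) | ⟨i, rfl⟩) | ⟨j, hj, rfl⟩
    · exact hX i
    · have := hmul _ _ (hmul _ _ (hC i) (hX i)) (hC i)
      convert this using 1
      exact Subtype.ext (xinv_eq q i)
    · exact hC i
    · have hj' := (inYoung_s_iff hn j).1 hj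
      convert hT j hj' using 1
      exact Subtype.ext (parT_coe q hn j hj').symm
  | algebraMap r => exact hF r
  | add x y hx hy ihx ihy => exact hadd _ _ ihx ihy
  | mul x y hx hy ihx ihy => exact hmul _ _ ihx ihy

end parabolic

section universal
variable {F} {q : F} {n m l : ℕ} {W E : Type} [AddCommGroup W] [Module F W] [AddCommGroup E]
  [Module F E]

theorem vT_single_base {ξ : F} (hm : m ≤ n) (t : ℕ → Module.End F W) (i : Fin (n - 1))
    (hi' : (i : ℕ) + 1 ≠ m) (w : W) :
    vT ξ t i (Pi.single (Sh.base hm) w) = Pi.single (Sh.base hm) (t i w) := by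
  have hb : (Sh.base hm).1 (lo i) = (Sh.base hm).1 (hi i) := by
    simp only [Sh.base_apply, lo, hi, decide_eq_decide]; omega
  funext S
  rw [vT_apply]
  by_cases hS : S = Sh.base hm
  · subst hS
    rw [if_pos hb, Sh.sgN_base]; simp [lo]
  · have : S.act i ≠ Sh.base hm := fun e => hS (by
      rw [← S.act_act i, e, Sh.act_same i _ hb])
    simp [hS, this]

/-- The canonical map from `W` to the coinduced module. -/
noncomputable def toCoind (hm : m ≤ n) {μ : List ℕ}
    (ρ : parabolicC F q (n := n) μ →ₐ[F] Module.End F W) :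
    W →ₗ[F] (PC F (Fin n) →ₗ[F] (Sh n m → W)) where
  toFun w := LinearMap.single F (fun _ => W) (Sh.base hm) ∘ₗ
    (ρ.toLinearMap ∘ₗ (parPC q μ).toLinearMap).flip w
  map_add' v w := by rw [map_add, LinearMap.comp_add]
  map_smul' a w := by rw [map_smul, LinearMap.comp_smul]; rfl

theorem toCoind_apply (hm : m ≤ n) {μ : List ℕ}
    (ρ : parabolicC F q (n := n) μ →ₐ[F] Module.End F W) (w : W) (r : PC F (Fin n)) :
    toCoind hm ρ w r = Pi.single (Sh.base hm) (ρ (parPC q μ r) w) := rfl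

theorem IsInducedAlong.indFam (hn : n = m + l) (hm : m ≤ n)
    {ρ : parabolicC F q (n := n) [m, l] →ₐ[F] Module.End F W}
    {ρE : H F q n →ₐ[F] Module.End F E} {ι : W →ₗ[F] E}
    (h : IsInducedAlong F (A := H F q n) (B := ↥(parabolicC F q (n := n) [m, l]))
      (parabolicC F q (n := n) [m, l]).val ρ ρE ι) :
    ∃ G : E →ₗ[F] (Sh n m → W), IndFam (q - q⁻¹) hm (fun p => ρE (X F q p))
      (fun p => ρE (C F q p)) (fun i => ρE (T F q i)) (fun p => ρ (parX q [m, l] p))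
      (fun p => ρ (parC q [m, l] p)) (fun j => ρ (parT q hn j)) ι G := by
  have hv := vT_heckeFam ((parT_blockHecke q hn).map ρ)
  have hfam := Coind.hcFam hv
  obtain ⟨g, ⟨hg1, hg2⟩, -⟩ := h.2 _ hfam.lift (toCoind hm ρ) (fun b => by
    induction b using parabolicC_induction q hn with
    | hF r => intro w; simp [Module.algebraMap_end_apply]
    | hX i =>
      intro w; refine LinearMap.ext fun r => ?_
      have e : (parabolicC F q (n := n) [m, l]).val (parX q [m, l] i) = X F q i := rfl
      rw [e, HCFam.lift_X, Coind.opR_apply, toCoind_apply, toCoind_apply, map_mul, parPC_x,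
        map_mul, Module.End.mul_apply]
    | hC i =>
      intro w; refine LinearMap.ext fun r => ?_
      have e : (parabolicC F q (n := n) [m, l]).val (parC q [m, l] i) = C F q i := rfl
      rw [e, HCFam.lift_C, Coind.opR_apply, toCoind_apply, toCoind_apply, map_mul, parPC_c,
        map_mul, Module.End.mul_apply]
    | hT j hj =>
      intro w; refine LinearMap.ext fun r => ?_
      have e : (parabolicC F q (n := n) [m, l]).val (parT q hn j) = T F q j := parT_coe q hn j hj
      rw [e, HCFam.lift_T, Coind.opT_apply, toCoind_apply, toCoind_apply, toCoind_apply,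
        vT_single_base hm _ j hj, ← Pi.single_add, ← Module.End.mul_apply, ← map_mul,
        parPC_mul_parT q hn j hj, map_add, map_mul]
      rfl
    | hmul a b iha ihb =>
      intro w
      rw [map_mul, map_mul, map_mul, Module.End.mul_apply, Module.End.mul_apply, iha, ihb]
    | hadd a b iha ihb =>
      intro w
      rw [map_add, map_add, map_add, LinearMap.add_apply, LinearMap.add_apply, map_add, iha, ihb])
  refine ⟨LinearMap.applyₗ 1 ∘ₗ g, ⟨(hcFam q).map ρE, fun p w => ?_, fun p w => ?_,
    fun i w hi' => ?_, fun i e => ?_, fun w => ?_, fun U h0 hX hC hT => ?_⟩⟩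
  · exact (h.1 (parX q _ p) w).symm
  · exact (h.1 (parC q _ p) w).symm
  · rw [h.1, Subalgebra.coe_val, parT_coe q hn i hi']
  · simp only [LinearMap.comp_apply, LinearMap.applyₗ_apply_apply, hg1, HCFam.lift_T,
      Coind.opT_one]
  · simp only [LinearMap.comp_apply, LinearMap.applyₗ_apply_apply, hg2, toCoind_apply, map_one,
      Module.End.one_apply]
  · have st : ∀ a : H F q n, ∀ u ∈ U, ρE a u ∈ U := fun a => by
      induction a using H.induction with
      | hF r => intro u hu; rw [AlgHom.commutes]; exact U.smul_mem r hu
      | hX i => exact hX i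
      | hC i => exact hC i
      | hT i => exact hT i
      | hmul a b iha ihb => intro u hu; rw [map_mul]; exact iha _ (ihb _ hu)
      | hadd a b iha ihb => intro u hu; rw [map_add]; exact add_mem (iha _ hu) (ihb _ hu)
    let ρU : H F q n →ₐ[F] Module.End F U := AlgHom.ofLinearMap
      { toFun := fun a => (ρE a).restrict (st a)
        map_add' := fun a b => by ext u; simp [LinearMap.restrict_apply]
        map_smul' := fun a b => by ext u; simp [LinearMap.restrict_apply] }
      (by ext u; simp [LinearMap.restrict_apply]) (fun a b => by
        ext u; simp [LinearMap.restrict_apply])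
    obtain ⟨f, ⟨hf1, hf2⟩, -⟩ := h.2 U ρU (ι.codRestrict U h0) (fun b w => by
      apply Subtype.ext; exact h.1 b w)
    obtain ⟨_, -, hu⟩ := h.2 E ρE ι h.1
    have e1 := hu (U.subtype ∘ₗ f) ⟨fun a e => by
      rw [LinearMap.comp_apply, hf1]; rfl, fun w => by rw [LinearMap.comp_apply, hf2]; rfl⟩
    have e2 := hu LinearMap.id ⟨fun a e => rfl, fun w => rfl⟩
    refine eq_top_iff.2 fun e _ => ?_
    have : U.subtype (f e) = e := congrArg (fun φ => φ e) (e1.trans e2.symm)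
    rw [← this]; exact (f e).2

end universal

/-! ### The top component and the duality map -/

namespace IndFam
variable {F} {ξ : F} {n m k : ℕ} {hm : m ≤ n}
    {E W : Type} [AddCommGroup E] [Module F E] [AddCommGroup W] [Module F W]
    {XE CE : Fin n → Module.End F E} {TE : Fin (n - 1) → Module.End F E}
    {x c : Fin n → Module.End F W} {t : ℕ → Module.End F W}
    {ι : W →ₗ[F] E} {G : E →ₗ[F] (Sh n m → W)}

section top
variable (hn : n = k + m) (hk : k ≤ n)

theorem top_comp (h : IndFam ξ hm XE CE TE x c t ι G)
    (A : Module.End F E) (a : Sh n m → Module.End F W)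
    (hA : ∀ (S : Sh n m) w, A (z TE ι S w) - z TE ι S (a S w) ∈ fil m TE ι S.wt) (e : E) :
    G (A e) ((Sh.base hk).compl hn) =
      a ((Sh.base hk).compl hn) (G e ((Sh.base hk).compl hn)) := by
  have : LinearMap.proj ((Sh.base hk).compl hn) ∘ₗ G ∘ₗ A =
      a ((Sh.base hk).compl hn) ∘ₗ LinearMap.proj ((Sh.base hk).compl hn) ∘ₗ G := by
    refine h.eq_of_z fun S w => ?_
    have e1 := h.G_fil (hA S w) (S.wt_le hn hk)
    rw [map_sub, Pi.sub_apply, sub_eq_zero] at e1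
    simp only [LinearMap.comp_apply, LinearMap.proj_apply, e1, h.G_z]
    by_cases hS : (Sh.base hk).compl hn = S
    · subst hS; simp
    · simp [hS]
  exact congrArg (fun φ => φ e) this

theorem top_X (h : IndFam ξ hm XE CE TE x c t ι G)
    (p : Fin n) (e : E) : G (XE p e) ((Sh.base hk).compl hn) =
    x (((Sh.base hk).compl hn).sg p) (G e ((Sh.base hk).compl hn)) :=
  h.top_comp hn hk (XE p) (fun S => x (S.sg p)) (h.XE_z p) e

theorem top_C (h : IndFam ξ hm XE CE TE x c t ι G)
    (p : Fin n) (e : E) : G (CE p e) ((Sh.base hk).compl hn) =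
    c (((Sh.base hk).compl hn).sg p) (G e ((Sh.base hk).compl hn)) :=
  h.top_comp hn hk (CE p) (fun S => c (S.sg p)) (h.CE_z p) e

theorem top_T (h : IndFam ξ hm XE CE TE x c t ι G)
    (i : Fin (n - 1)) (hi' : (i : ℕ) + 1 ≠ k) (e : E) :
    G (TE i e) ((Sh.base hk).compl hn) =
      t (((Sh.base hk).compl hn).sgN (lo i)) (G e ((Sh.base hk).compl hn)) := by
  rw [h.gT, vT_apply, if_pos]
  simp only [Sh.compl_apply, Sh.base_apply, lo, hi]
  congr 1
  rw [decide_eq_decide]; omega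

theorem bijective_G (h : IndFam ξ hm XE CE TE x c t ι G) : Function.Bijective G := by
  constructor
  · intro e e' hee
    rw [← h.z_G_sum e, ← h.z_G_sum e', hee]
  · intro v
    refine ⟨∑ S, z TE ι S (v S), ?_⟩
    funext S
    simp only [map_sum, h.G_z, Finset.sum_apply, Pi.single_apply]
    rw [Finset.sum_ite_eq]; simp

end top

variable {hk : k ≤ n}
    {E' W' : Type} [AddCommGroup E'] [Module F E'] [AddCommGroup W'] [Module F W']
    {XE' CE' : Fin n → Module.End F E'} {TE' : Fin (n - 1) → Module.End F E'}
    {x' c' : Fin n → Module.End F W'} {t' : ℕ → Module.End F W'}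
    {ι' : W' →ₗ[F] E'} {G' : E' →ₗ[F] (Sh n k → W')}

theorem dual_z_aux (h : IndFam ξ hm XE CE TE x c t ι G)
    (h' : IndFam ξ hk XE' CE' TE' x' c' t' ι' G') (hn : n = k + m)
    {B : W' →ₗ[F] W →ₗ[F] F} {Θ : E' →ₗ[F] Module.Dual F E}
    (hT : ∀ i e' e, Θ (TE' i e') e = Θ e' (TE i e + ξ • CE (lo i) (CE (hi i) e)))
    (hι : ∀ ω e, Θ (ι' ω) e = B ω (G e ((Sh.base hk).compl hn))) (L : ℕ) :
    ∀ S' : Sh n k, S'.wt < L → ∀ ω,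
      (∀ e ∈ fil m TE ι (S'.compl hn).wt, Θ (z TE' ι' S' ω) e = 0) ∧
      ∀ S : Sh n m, S.wt = (S'.compl hn).wt → ∀ w,
        Θ (z TE' ι' S' ω) (z TE ι S w) = if S = S'.compl hn then B ω w else 0 := by
  induction L with
  | zero => intro S' h; omega
  | succ L ih =>
    intro S' hL ω
    by_cases hb : S' = Sh.base hk
    · subst hb
      rw [z_base]
      refine ⟨fun e he => ?_, fun S hS w => ?_⟩
      · rw [hι, h.G_fil he le_rfl, map_zero]
      · rw [hι, h.G_z, Pi.single_apply]
        by_cases hS' : S = (Sh.base hk).compl hn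
        · rw [if_pos hS', if_pos hS'.symm]
        · rw [if_neg hS', if_neg (Ne.symm hS'), map_zero]
    obtain ⟨j, h1, h2⟩ := S'.exists_desc hk hb
    have w1 := S'.wt_act_desc j h1 h2
    have h3 : (S'.compl hn).1 (lo j) = true := by simp [h1]
    have h4 : (S'.compl hn).1 (hi j) = false := by simp [h2]
    have w2 := (S'.compl hn).wt_act_asc j h3 h4
    have hz := h'.TE_z_asc (S := S'.act j) (i := j) (by rw [S'.act_lo, h2])
      (by rw [S'.act_hi, h1]) ω
    rw [S'.act_act] at hz
    obtain ⟨ih1, ih2⟩ := ih (S'.act j) (by omega) ω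
    rw [S'.compl_act, w2] at ih1 ih2
    have hC : ∀ e ∈ fil m TE ι ((S'.compl hn).wt + 1),
        ξ • CE (lo j) (CE (hi j) e) ∈ fil m TE ι ((S'.compl hn).wt + 1) := fun e he =>
      Submodule.smul_mem _ _ (h.CE_mem _ (h.CE_mem _ he))
    rw [← hz]
    refine ⟨fun e he => ?_, fun S hS w => ?_⟩
    · rw [hT]
      exact ih1 _ (add_mem (h.TE_mem j he) (hC e (fil_mono (Nat.le_succ _) he)))
    · rw [hT, map_add, ih1 _ (hC _ (z_mem_fil (by omega) w)), add_zero]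
      by_cases hS' : S.1 (lo j) = true ∧ S.1 (hi j) = false
      · have w3 := S.wt_act_asc j hS'.1 hS'.2
        rw [h.TE_z_asc hS'.1 hS'.2, ih2 _ (by omega)]
        refine if_congr ⟨fun e => ?_, fun e => by rw [e]⟩ rfl rfl
        rw [← S.act_act j, e, Sh.act_act]
      · rw [if_neg (by rintro rfl; exact hS' ⟨h3, h4⟩)]
        have := h.TE_z_mem S j hS' w
        rw [hS] at this
        exact ih1 _ this

/-- Shuffles are in bijection with their complements. -/
def complEquiv (hn : n = k + m) : Sh n k ≃ Sh n m where
  toFun S := S.compl hn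
  invFun S := S.compl (by omega)
  left_inv S := S.compl_compl _ _
  right_inv S := S.compl_compl _ _

theorem bijective_dual [FiniteDimensional F W] [FiniteDimensional F W']
    (h : IndFam ξ hm XE CE TE x c t ι G)
    (h' : IndFam ξ hk XE' CE' TE' x' c' t' ι' G') (hn : n = k + m)
    {B : W' →ₗ[F] W →ₗ[F] F} (hB : Function.Injective B)
    (hW : Module.finrank F W' = Module.finrank F W) {Θ : E' →ₗ[F] Module.Dual F E}
    (hT : ∀ i e' e, Θ (TE' i e') e = Θ e' (TE i e + ξ • CE (lo i) (CE (hi i) e)))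
    (hι : ∀ ω e, Θ (ι' ω) e = B ω (G e ((Sh.base hk).compl hn))) :
    Function.Bijective Θ := by
  classical
  have key := fun (S' : Sh n k) => h.dual_z_aux h' hn hT hι _ S' (Nat.lt_succ_self _)
  have inj : Function.Injective Θ := by
    rw [injective_iff_map_eq_zero]
    intro e' he'
    by_contra hne
    have hex : (Finset.univ.filter fun S' : Sh n k => G' e' S' ≠ 0).Nonempty := by
      by_contra h0
      rw [Finset.not_nonempty_iff_eq_empty, Finset.filter_eq_empty_iff] at h0
      apply hne
      rw [← h'.z_G_sum e']
      exact Finset.sum_eq_zero fun S' _ => by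
        rw [not_not.1 (h0 (Finset.mem_univ S')), map_zero]
    obtain ⟨S', hS', hmin⟩ := Finset.exists_min_image _ (fun S' : Sh n k => (S'.compl hn).wt) hex
    refine (Finset.mem_filter.1 hS').2 (hB (LinearMap.ext fun w => ?_))
    have e1 : Θ e' (z TE ι (S'.compl hn) w) = 0 := by rw [he']; rfl
    rw [← h'.z_G_sum e', map_sum, LinearMap.sum_apply, Finset.sum_eq_single S'] at e1
    · rw [(key S' _).2 _ rfl, if_pos rfl] at e1
      rw [e1, map_zero, LinearMap.zero_apply]
    · intro S'' _ hne
      by_cases h0 : G' e' S'' = 0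
      · rw [h0, map_zero, map_zero, LinearMap.zero_apply]
      rcases (hmin S'' (Finset.mem_filter.2 ⟨Finset.mem_univ _, h0⟩)).lt_or_eq with hlt | heq
      · exact (key S'' _).1 _ (z_mem_fil hlt w)
      · rw [(key S'' _).2 _ heq, if_neg]
        exact fun e => hne ((complEquiv hn).injective e).symm
    · simp
  have eE := LinearEquiv.ofBijective G h.bijective_G
  have eE' := LinearEquiv.ofBijective G' h'.bijective_G
  have : FiniteDimensional F E := Module.Finite.equiv eE.symm
  have : FiniteDimensional F E' := Module.Finite.equiv eE'.symm
  have hfr : Module.finrank F E' = Module.finrank F (Module.Dual F E) := by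
    rw [Subspace.dual_finrank_eq, eE.finrank_eq, eE'.finrank_eq, Module.finrank_pi_fintype,
      Module.finrank_pi_fintype]
    simp [hW, Fintype.card_congr (complEquiv hn)]
  exact ⟨inj, (LinearMap.injective_iff_surjective_of_finrank_eq_finrank hfr).1 inj⟩

end IndFam

/-! ### The pairing between the outer tensor products -/

section signRing
variable {F} {A : Type} [Ring A] [Algebra F A] {a b y : A}

/-- The twist `½(1 + a + b - ab)` for commuting involutions `a` and `b`. -/
noncomputable def signTwist (F : Type) [Field F] {A : Type} [Ring A] [Algebra F A] (a b : A) : A :=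
  (2⁻¹ : F) • (1 + a + b - a * b)

theorem signTwist_mul_self (h2 : (2 : F) ≠ 0) (ha : a * a = 1) (hb : b * b = 1)
    (hab : b * a = a * b) : signTwist F a b * signTwist F a b = 1 := by
  have e : (1 + a + b - a * b) * (1 + a + b - a * b) = (4 : F) • (1 : A) := by
    have e1 : a * (a * b) = b := by rw [← mul_assoc, ha, one_mul]
    have e2 : b * (a * b) = a := by rw [← mul_assoc, hab, mul_assoc, hb, mul_one]
    have e3 : a * b * (a * b) = 1 := by rw [mul_assoc, e2, ha]
    have e4 : a * b * a = b := by rw [← hab, mul_assoc, ha, mul_one]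
    have e5 : a * b * b = a := by rw [mul_assoc, hb, mul_one]
    simp only [sub_mul, add_mul, mul_add, mul_sub, one_mul, mul_one, ha, hb, hab, e1, e2, e3,
      e4, e5]
    module
  rw [signTwist, smul_mul_smul_comm, e, smul_smul]
  have : (2⁻¹ * 2⁻¹ * 4 : F) = 1 := by
    rw [show (4 : F) = 2 * 2 by norm_num]; field_simp
  rw [this, one_smul]

theorem signTwist_comm (h1 : a * y = y * a) (h2 : b * y = y * b) :
    y * signTwist F a b = signTwist F a b * y := by
  have e : a * b * y = y * (a * b) := by rw [mul_assoc, h2, ← mul_assoc, h1, mul_assoc]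
  simp only [signTwist, mul_smul_comm, smul_mul_assoc, mul_add, mul_sub, add_mul, sub_mul, h1, h2,
    mul_one, one_mul, e]

theorem signTwist_odd_right (ha : a * a = 1) (hab : b * a = a * b)
    (h1 : a * y = y * a) (h2 : b * y = -(y * b)) :
    y * signTwist F a b = signTwist F a b * (a * y) := by
  have e1 : b * (a * y) = -(y * (a * b)) := by
    rw [h1, ← mul_assoc, h2, neg_mul, mul_assoc, hab]
  have e2 : a * b * (a * y) = -(y * b) := by
    rw [mul_assoc, e1, mul_neg, ← mul_assoc, h1, mul_assoc, ← mul_assoc a, ha, one_mul]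
  have e3 : a * (a * y) = y := by rw [← mul_assoc, ha, one_mul]
  rw [h1] at e1 e2 e3
  simp only [signTwist, mul_smul_comm, smul_mul_assoc, mul_add, mul_sub, add_mul, sub_mul,
    mul_one, one_mul, e1, e2, e3, h1]
  congr 1; abel

theorem signTwist_odd_left (hb : b * b = 1) (hab : b * a = a * b)
    (h1 : a * y = -(y * a)) (h2 : b * y = y * b) :
    b * y * signTwist F a b = signTwist F a b * y := by
  have e1 : a * b * y = -(y * (a * b)) := by
    rw [mul_assoc, h2, ← mul_assoc, h1, neg_mul, mul_assoc]
  have e2 : y * b * b = y := by rw [mul_assoc, hb, mul_one]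
  have e3 : y * b * (a * b) = y * a := by
    rw [mul_assoc, ← mul_assoc b, hab, mul_assoc a, hb, mul_one]
  have e4 : y * b * a = y * (a * b) := by rw [mul_assoc, hab]
  simp only [signTwist, mul_smul_comm, smul_mul_assoc, mul_add, mul_sub, add_mul, sub_mul,
    mul_one, one_mul, h1, h2, e1, e2, e3, e4]
  congr 1; abel

end signRing

section pairing
variable {F} {M N : Type} [AddCommGroup M] [Module F M] [AddCommGroup N] [Module F N]
open TensorProduct

variable (F M N) in
/-- The canonical pairing between `N* ⊗ M*` and `M ⊗ N`. -/
noncomputable def natPair : (Module.Dual F N ⊗[F] Module.Dual F M) →ₗ[F] (M ⊗[F] N) →ₗ[F] F :=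
  dualDistrib F M N ∘ₗ (TensorProduct.comm F (Module.Dual F N) (Module.Dual F M)).toLinearMap

theorem natPair_map {A' : Module.End F (Module.Dual F N)} {D' : Module.End F (Module.Dual F M)}
    {A : Module.End F N} {D : Module.End F M} (hA : ∀ φ y, A' φ y = φ (A y))
    (hD : ∀ φ y, D' φ y = φ (D y)) (ω : Module.Dual F N ⊗[F] Module.Dual F M) (w : M ⊗[F] N) :
    natPair F M N (TensorProduct.map A' D' ω) w = natPair F M N ω (TensorProduct.map D A w) := by
  induction ω using TensorProduct.induction_on with
  | zero => simp
  | add u v hu hv => simp only [map_add, LinearMap.add_apply, hu, hv]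
  | tmul ν μ =>
    induction w using TensorProduct.induction_on with
    | zero => simp
    | add u v hu hv => simp only [map_add, hu, hv]
    | tmul x y => simp [natPair, hA, hD]

/-- The parity operator of the first factor. -/
noncomputable def parL (J : Module.End F M) : Module.End F (M ⊗[F] N) :=
  TensorProduct.map J LinearMap.id

/-- The parity operator of the second factor. -/
noncomputable def parR (J : Module.End F N) : Module.End F (M ⊗[F] N) :=
  TensorProduct.map LinearMap.id J

theorem parL_mul (A B : Module.End F M) : parL (N := N) (A * B) = parL A * parL B :=
  TensorProduct.ext' fun _ _ => rfl

theorem parR_mul (A B : Module.End F N) : parR (M := M) (A * B) = parR A * parR B :=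
  TensorProduct.ext' fun _ _ => rfl

theorem parL_one : parL (1 : Module.End F M) = (1 : Module.End F (M ⊗[F] N)) :=
  TensorProduct.ext' fun _ _ => rfl

theorem parR_one : parR (1 : Module.End F N) = (1 : Module.End F (M ⊗[F] N)) :=
  TensorProduct.ext' fun _ _ => rfl

theorem parL_neg (A : Module.End F M) : parL (N := N) (-A) = -parL A :=
  TensorProduct.ext' fun x y => by simp [parL, TensorProduct.neg_tmul]

theorem parR_neg (A : Module.End F N) : parR (M := M) (-A) = -parR A :=
  TensorProduct.ext' fun x y => by simp [parR, TensorProduct.tmul_neg]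

theorem parR_mul_parL (A : Module.End F M) (B : Module.End F N) :
    parR B * parL A = parL A * parR B :=
  TensorProduct.ext' fun _ _ => rfl

theorem map_eq_parL_mul_parR (A : Module.End F M) (B : Module.End F N) :
    TensorProduct.map A B = parL A * parR B :=
  TensorProduct.ext' fun _ _ => rfl

/-- The pairing between `N* ⊗ M*` and `M ⊗ N` corrected by signs. -/
noncomputable def signPair (JM : Module.End F M) (JN : Module.End F N) :
    (Module.Dual F N ⊗[F] Module.Dual F M) →ₗ[F] (M ⊗[F] N) →ₗ[F] F :=
  LinearMap.lcomp F F (signTwist F (parL JM) (parR JN)) ∘ₗ natPair F M N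

theorem signPair_apply (JM : Module.End F M) (JN : Module.End F N)
    (ω : Module.Dual F N ⊗[F] Module.Dual F M) (w : M ⊗[F] N) :
    signPair JM JN ω w = natPair F M N ω (signTwist F (parL JM) (parR JN) w) := rfl

variable {JM : Module.End F M} {JN : Module.End F N}

theorem signPair_injective [FiniteDimensional F M] [FiniteDimensional F N] (h2 : (2 : F) ≠ 0)
    (hM : JM * JM = 1) (hN : JN * JN = 1) : Function.Injective (signPair JM JN) := by
  have hs := signTwist_mul_self (F := F) h2 (a := parL (N := N) JM) (b := parR (M := M) JN)
    (by rw [← parL_mul, hM, parL_one]) (by rw [← parR_mul, hN, parR_one]) (parR_mul_parL _ _)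
  intro ω ω' h
  have h1 : natPair F M N ω = natPair F M N ω' := LinearMap.ext fun w => by
    have := congrArg (fun φ => φ (signTwist F (parL JM) (parR JN) w)) h
    simp only [signPair_apply, ← Module.End.mul_apply, hs, Module.End.one_apply] at this
    exact this
  exact (TensorProduct.comm F _ _).injective ((dualDistribEquiv F M N).injective h1)

theorem signPair_map {A' : Module.End F (Module.Dual F N)} {D' : Module.End F (Module.Dual F M)}
    {A : Module.End F N} {D : Module.End F M} (hA : ∀ φ y, A' φ y = φ (A y))
    (hD : ∀ φ y, D' φ y = φ (D y)) {Q : Module.End F (M ⊗[F] N)}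
    (hQ : parL D * parR A * signTwist F (parL JM) (parR JN) =
      signTwist F (parL JM) (parR JN) * Q)
    (ω : Module.Dual F N ⊗[F] Module.Dual F M) (w : M ⊗[F] N) :
    signPair JM JN (TensorProduct.map A' D' ω) w = signPair JM JN ω (Q w) := by
  rw [signPair_apply, signPair_apply, natPair_map hA hD, map_eq_parL_mul_parR,
    ← Module.End.mul_apply, hQ]; rfl

theorem signPair_even_right {A' : Module.End F (Module.Dual F N)} {A : Module.End F N}
    (hA : ∀ φ y, A' φ y = φ (A y)) (hJ : JN * A = A * JN)
    (ω : Module.Dual F N ⊗[F] Module.Dual F M) (w : M ⊗[F] N) :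
    signPair JM JN (TensorProduct.map A' LinearMap.id ω) w = signPair JM JN ω (parR A w) := by
  refine signPair_map hA (D := 1) (fun _ _ => rfl) ?_ ω w
  rw [parL_one, one_mul]
  exact signTwist_comm (parR_mul_parL _ _).symm (by rw [← parR_mul, hJ, parR_mul])

theorem signPair_even_left {D' : Module.End F (Module.Dual F M)} {D : Module.End F M}
    (hD : ∀ φ y, D' φ y = φ (D y)) (hJ : JM * D = D * JM)
    (ω : Module.Dual F N ⊗[F] Module.Dual F M) (w : M ⊗[F] N) :
    signPair JM JN (TensorProduct.map LinearMap.id D' ω) w = signPair JM JN ω (parL D w) := by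
  refine signPair_map (A := 1) (fun _ _ => rfl) hD ?_ ω w
  rw [parR_one, mul_one]
  exact signTwist_comm (by rw [← parL_mul, hJ, parL_mul]) (parR_mul_parL _ _)

theorem signPair_odd_right (hM : JM * JM = 1)
    {A' : Module.End F (Module.Dual F N)} {A : Module.End F N}
    (hA : ∀ φ y, A' φ y = φ (A y)) (hJ : JN * A = -(A * JN))
    (ω : Module.Dual F N ⊗[F] Module.Dual F M) (w : M ⊗[F] N) :
    signPair JM JN (TensorProduct.map A' LinearMap.id ω) w =
      signPair JM JN ω (TensorProduct.map JM A w) := by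
  refine signPair_map hA (D := 1) (fun _ _ => rfl) ?_ ω w
  rw [parL_one, one_mul, map_eq_parL_mul_parR]
  exact signTwist_odd_right (by rw [← parL_mul, hM, parL_one]) (parR_mul_parL _ _)
    (parR_mul_parL _ _).symm (by rw [← parR_mul, hJ, parR_neg, parR_mul])

theorem signPair_odd_left (hN : JN * JN = 1)
    {D' : Module.End F (Module.Dual F M)} {D : Module.End F M}
    (hD : ∀ φ y, D' φ y = φ (D y)) (hJ : JM * D = -(D * JM))
    (ω : Module.Dual F N ⊗[F] Module.Dual F M) (w : M ⊗[F] N) :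
    signPair JM JN (TensorProduct.map JN.dualMap D' ω) w = signPair JM JN ω (parL D w) := by
  refine signPair_map (A := JN) (fun _ _ => rfl) hD ?_ ω w
  rw [← parR_mul_parL]
  exact signTwist_odd_left (by rw [← parR_mul, hN, parR_one]) (parR_mul_parL _ _)
    (by rw [← parL_mul, hJ, parL_neg, parL_mul]) (parR_mul_parL _ _)

end pairing

section graded
variable {F} {q : F} {n : ℕ} {M : Type} [AddCommGroup M] [Module F M]
  {ρ : H F q n →ₐ[F] Module.End F M} {J : Module.End F M} {δ : H F q n →ₐ[F] H F q n}

theorem grading_X (hδ : IsGradingAut F q δ) (hJ : ∀ h, J * ρ h = ρ (δ h) * J) (p : Fin n) :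
    J * ρ (X F q p) = ρ (X F q p) * J := by rw [hJ, hδ.1]

theorem grading_C (hδ : IsGradingAut F q δ) (hJ : ∀ h, J * ρ h = ρ (δ h) * J) (p : Fin n) :
    J * ρ (C F q p) = -(ρ (C F q p) * J) := by
  rw [hJ, hδ.2.2.1, ← neg_mul]; exact congrArg (· * J) (map_neg ρ _)

theorem commute_of_anticommute {A : Type} [Ring A] {a y z : A} (hy : a * y = -(y * a))
    (hz : a * z = -(z * a)) : a * (y * z) = y * z * a := by
  rw [← mul_assoc, hy, neg_mul, mul_assoc, hz, mul_neg, neg_neg, mul_assoc]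

/-- The action of `τ(T_i)`. -/
noncomputable def tauT (ρ : H F q n →ₐ[F] Module.End F M) (i : Fin (n - 1)) : Module.End F M :=
  ρ (T F q i) + (q - q⁻¹) • (ρ (C F q (lo i)) * ρ (C F q (hi i)))

theorem grading_tauT (hδ : IsGradingAut F q δ) (hJ : ∀ h, J * ρ h = ρ (δ h) * J)
    (i : Fin (n - 1)) : J * tauT ρ i = tauT ρ i * J := by
  rw [tauT, mul_add, add_mul, hJ, hδ.2.2.2, mul_smul_comm, smul_mul_assoc,
    commute_of_anticommute (grading_C hδ hJ _) (grading_C hδ hJ _)]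

theorem map_tau_T {τ : H F q n →ₗ[F] H F q n} (hτ : IsTauAntiAut F q τ) (i : Fin (n - 1)) :
    ρ (τ (T F q i)) = tauT ρ i := by
  rw [hτ.2.2.2.1, map_add, map_smul, map_mul, tauT]

end graded

/-! ### Adjointness of the two outer tensor products -/

section adjoint
variable {F} {q : F} {n m k : ℕ}
  {M N : Type} [AddCommGroup M] [Module F M] [AddCommGroup N] [Module F N]
  {ρM : H F q m →ₐ[F] Module.End F M} {ρN : H F q k →ₐ[F] Module.End F N}
  {JM : Module.End F M} {JN : Module.End F N}
  {δm : H F q m →ₐ[F] H F q m} {δk : H F q k →ₐ[F] H F q k}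
  {τm : H F q m →ₗ[F] H F q m} {τk : H F q k →ₗ[F] H F q k}
  {ρMd : H F q m →ₐ[F] Module.End F (Module.Dual F M)}
  {ρNd : H F q k →ₐ[F] Module.End F (Module.Dual F N)}
  {ρT1 : parabolicC F q (n := n) [m, k] →ₐ[F] Module.End F (TensorProduct F M N)}
  {ρT2 : parabolicC F q (n := n) [k, m] →ₐ[F]
    Module.End F (TensorProduct F (Module.Dual F N) (Module.Dual F M))}

theorem Sh.sg_compl_base_of_lt (hn : n = k + m) (hk : k ≤ n) {p : Fin n} (hp : (p : ℕ) < k) :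
    ((((Sh.base hk).compl hn).sg p : Fin n) : ℕ) = m + p := by
  change ((Sh.base hk).compl hn).sgN p = _
  rw [Sh.sgN_compl_base, if_pos hp]

theorem Sh.sg_compl_base_of_le (hn : n = k + m) (hk : k ≤ n) {p : Fin n} (hp : k ≤ (p : ℕ)) :
    ((((Sh.base hk).compl hn).sg p : Fin n) : ℕ) = p - k := by
  change ((Sh.base hk).compl hn).sgN p = _
  rw [Sh.sgN_compl_base, if_neg (by omega)]

theorem adjoint_X (hn : n = k + m) (hk : k ≤ n)
    (hδm : IsGradingAut F q δm) (hδk : IsGradingAut F q δk)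
    (hτm : IsTauAntiAut F q τm) (hτk : IsTauAntiAut F q τk)
    (hJM : ∀ h, JM * ρM h = ρM (δm h) * JM) (hJN : ∀ h, JN * ρN h = ρN (δk h) * JN)
    (hMd : ∀ h φ x, ρMd h φ x = φ (ρM (τm h) x)) (hNd : ∀ h φ x, ρNd h φ x = φ (ρN (τk h) x))
    (hT1 : IsOuter F q n m k [m, k] ρM ρN JM ρT1)
    (hT2 : IsOuter F q n k m [k, m] ρNd ρMd JN.dualMap ρT2) (p : Fin n)
    (ω : TensorProduct F (Module.Dual F N) (Module.Dual F M)) (w : TensorProduct F M N) :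
    signPair JM JN (ρT2 (parX q [k, m] p) ω) w =
      signPair JM JN ω (ρT1 (parX q [m, k] (((Sh.base hk).compl hn).sg p)) w) := by
  by_cases hp : (p : ℕ) < k
  · rw [hT2.1 p ⟨p, hp⟩ _ rfl rfl,
      hT1.2.2.2.2.1 _ ⟨p, hp⟩ _ (Sh.sg_compl_base_of_lt hn hk hp) rfl]
    exact signPair_even_right (fun φ y => by rw [hNd, hτk.2.2.2.2.2.1]) (grading_X hδk hJN _) ω w
  · have hp' : (p : ℕ) - k < m := by omega
    rw [hT2.2.2.2.2.1 p ⟨p - k, hp'⟩ _ (by simp only; omega) rfl,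
      hT1.1 _ ⟨p - k, hp'⟩ _ (Sh.sg_compl_base_of_le hn hk (by omega)) rfl]
    exact signPair_even_left (fun φ y => by rw [hMd, hτm.2.2.2.2.2.1]) (grading_X hδm hJM _) ω w

theorem adjoint_C (hn : n = k + m) (hk : k ≤ n) (hM : JM * JM = 1) (hN : JN * JN = 1)
    (hδm : IsGradingAut F q δm) (hδk : IsGradingAut F q δk)
    (hτm : IsTauAntiAut F q τm) (hτk : IsTauAntiAut F q τk)
    (hJM : ∀ h, JM * ρM h = ρM (δm h) * JM) (hJN : ∀ h, JN * ρN h = ρN (δk h) * JN)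
    (hMd : ∀ h φ x, ρMd h φ x = φ (ρM (τm h) x)) (hNd : ∀ h φ x, ρNd h φ x = φ (ρN (τk h) x))
    (hT1 : IsOuter F q n m k [m, k] ρM ρN JM ρT1)
    (hT2 : IsOuter F q n k m [k, m] ρNd ρMd JN.dualMap ρT2) (p : Fin n)
    (ω : TensorProduct F (Module.Dual F N) (Module.Dual F M)) (w : TensorProduct F M N) :
    signPair JM JN (ρT2 (parC q [k, m] p) ω) w =
      signPair JM JN ω (ρT1 (parC q [m, k] (((Sh.base hk).compl hn).sg p)) w) := by
  by_cases hp : (p : ℕ) < k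
  · rw [hT2.2.2.1 p ⟨p, hp⟩ _ rfl rfl,
      hT1.2.2.2.2.2.2.1 _ ⟨p, hp⟩ _ (Sh.sg_compl_base_of_lt hn hk hp) rfl]
    exact signPair_odd_right hM (fun φ y => by rw [hNd, hτk.2.2.2.2.1]) (grading_C hδk hJN _) ω w
  · have hp' : (p : ℕ) - k < m := by omega
    rw [hT2.2.2.2.2.2.2.1 p ⟨p - k, hp'⟩ _ (by simp only; omega) rfl,
      hT1.2.2.1 _ ⟨p - k, hp'⟩ _ (Sh.sg_compl_base_of_le hn hk (by omega)) rfl]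
    exact signPair_odd_left hN (fun φ y => by rw [hMd, hτm.2.2.2.2.1]) (grading_C hδm hJM _) ω w

theorem adjoint_T (hn' : n = m + k) (hn : n = k + m) (hk : k ≤ n) (hM : JM * JM = 1)
    (hδm : IsGradingAut F q δm) (hδk : IsGradingAut F q δk)
    (hτm : IsTauAntiAut F q τm) (hτk : IsTauAntiAut F q τk)
    (hJM : ∀ h, JM * ρM h = ρM (δm h) * JM) (hJN : ∀ h, JN * ρN h = ρN (δk h) * JN)
    (hMd : ∀ h φ x, ρMd h φ x = φ (ρM (τm h) x)) (hNd : ∀ h φ x, ρNd h φ x = φ (ρN (τk h) x))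
    (hT1 : IsOuter F q n m k [m, k] ρM ρN JM ρT1)
    (hT2 : IsOuter F q n k m [k, m] ρNd ρMd JN.dualMap ρT2)
    (i : Fin (n - 1)) (hi' : (i : ℕ) + 1 ≠ k)
    (ω : TensorProduct F (Module.Dual F N) (Module.Dual F M)) (w : TensorProduct F M N) :
    signPair JM JN (ρT2 (parT q hn i) ω) w =
      signPair JM JN ω (ρT1 (parT q hn' (((Sh.base hk).compl hn).sgN (lo i))) w +
        (q - q⁻¹) • ρT1 (parC q [m, k] (((Sh.base hk).compl hn).sg (lo i)))
          (ρT1 (parC q [m, k] (((Sh.base hk).compl hn).sg (hi i))) w)) := by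
  have hin := i.isLt
  by_cases hp : (i : ℕ) + 1 < k
  · have hl : ((lo i : Fin n) : ℕ) < k := by simp only [lo]; omega
    have hh : ((hi i : Fin n) : ℕ) < k := by simpa only [hi] using hp
    have e : ((Sh.base hk).compl hn).sgN (lo i) = m + i := Sh.sg_compl_base_of_lt hn hk hl
    have hik : (i : ℕ) < k - 1 := by omega
    have eT := parT_coe q hn' ⟨m + i, by omega⟩ (by simp only; omega)
    have e1 := hT1.2.2.2.2.2.2.2 ⟨m + i, by omega⟩ ⟨i, hik⟩ _ rfl eT
    simp only at e1
    rw [e, hT2.2.2.2.1 i ⟨i, hik⟩ _ rfl (parT_coe q hn i hi'), e1,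
      hT1.2.2.2.2.2.2.1 _ (lo ⟨i, hik⟩) _ (Sh.sg_compl_base_of_lt hn hk hl) rfl,
      hT1.2.2.2.2.2.2.1 _ (hi ⟨i, hik⟩) _ (Sh.sg_compl_base_of_lt hn hk hh) rfl,
      signPair_even_right (fun φ y => by rw [hNd, map_tau_T hτk]) (grading_tauT hδk hJN _) ω w]
    congr 1
    induction w using TensorProduct.induction_on with
    | zero => simp
    | add u v hu hv => simp only [map_add, hu, hv, smul_add]; abel
    | tmul x y =>
      have hx : JM (JM x) = x := LinearMap.congr_fun hM x
      simp [parR, tauT, hx, TensorProduct.tmul_add]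
  · have hl : k ≤ ((lo i : Fin n) : ℕ) := by simp only [lo]; omega
    have hh : k ≤ ((hi i : Fin n) : ℕ) := by simp only [hi]; omega
    have e : ((Sh.base hk).compl hn).sgN (lo i) = i - k := Sh.sg_compl_base_of_le hn hk hl
    have him : (i : ℕ) - k < m - 1 := by omega
    have eT := parT_coe q hn' ⟨i - k, by omega⟩ (by simp only; omega)
    have e1 := hT1.2.2.2.1 ⟨i - k, by omega⟩ ⟨i - k, him⟩ _ rfl eT
    simp only at e1
    rw [e, hT2.2.2.2.2.2.2.2 i ⟨i - k, him⟩ _ (by simp only; omega) (parT_coe q hn i hi'), e1,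
      hT1.2.2.1 _ (lo ⟨i - k, him⟩) _ (Sh.sg_compl_base_of_le hn hk hl) rfl,
      hT1.2.2.1 _ (hi ⟨i - k, him⟩) _
        ((Sh.sg_compl_base_of_le hn hk hh).trans (by simp only [hi]; omega)) rfl,
      signPair_even_left (fun φ y => by rw [hMd, map_tau_T hτm]) (grading_tauT hδm hJM _) ω w]
    congr 1
    induction w using TensorProduct.induction_on with
    | zero => simp
    | add u v hu hv => simp only [map_add, hu, hv, smul_add]; abel
    | tmul x y => simp [parL, tauT, TensorProduct.add_tmul, TensorProduct.smul_tmul']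

end adjoint

/-- The representation on the dual space of a module twisted by an antiautomorphism `τ`. -/
noncomputable def dualRep {F : Type} [Field F] {A E : Type} [Ring A] [Algebra F A]
    [AddCommGroup E] [Module F E] (ρ : A →ₐ[F] Module.End F E) (τ : A →ₗ[F] A)
    (h1 : τ 1 = 1) (hmul : ∀ a b, τ (a * b) = τ b * τ a) :
    A →ₐ[F] Module.End F (Module.Dual F E) :=
  AlgHom.ofLinearMap (Module.Dual.transpose ∘ₗ ρ.toLinearMap ∘ₗ τ)
    (by ext φ x; simp [h1, Module.Dual.transpose])
    (fun a b => by ext φ x; simp [hmul, Module.Dual.transpose])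

/-- **Duality and induction** (Theorem `duals` of Brundan–Kleshchev): for a
finite-dimensional `H_m`-module `M` and a finite-dimensional `H_k`-module `N`,
`(ind^{m+k}_{m,k} M ⊠ N)^τ ≅ ind^{m+k}_{k,m} (N^τ ⊠ M^τ)` as `H_{m+k}`-modules. -/
theorem duality_of_induced
    (F : Type) [Field F] [IsAlgClosed F] (h2 : (2 : F) ≠ 0)
    (q : F) (hq : GoodParam F q) (m k : ℕ)
    -- the antiautomorphisms τ of H_m, H_k and H_{m+k}
    (τm : H F q m →ₗ[F] H F q m) (hτm : IsTauAntiAut F q τm)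
    (τk : H F q k →ₗ[F] H F q k) (hτk : IsTauAntiAut F q τk)
    (τmk : H F q (m + k) →ₗ[F] H F q (m + k)) (hτmk : IsTauAntiAut F q τmk)
    -- the grading automorphisms of H_m, H_k
    (δm : H F q m →ₐ[F] H F q m) (hδm : IsGradingAut F q δm)
    (δk : H F q k →ₐ[F] H F q k) (hδk : IsGradingAut F q δk)
    -- the graded modules M and N
    (M : Type) [AddCommGroup M] [Module F M] [FiniteDimensional F M]
    (ρM : H F q m →ₐ[F] Module.End F M)
    (JM : Module.End F M) (hJM2 : JM * JM = 1)
    (hJMρ : ∀ h : H F q m, JM * ρM h = ρM (δm h) * JM)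
    (N : Type) [AddCommGroup N] [Module F N] [FiniteDimensional F N]
    (ρN : H F q k →ₐ[F] Module.End F N)
    (JN : Module.End F N) (hJN2 : JN * JN = 1)
    (hJNρ : ∀ h : H F q k, JN * ρN h = ρN (δk h) * JN)
    -- the dual modules M^τ and N^τ
    (ρMd : H F q m →ₐ[F] Module.End F (Module.Dual F M))
    (hρMd : ∀ (h : H F q m) (φ : Module.Dual F M) (x : M), ρMd h φ x = φ (ρM (τm h) x))
    (ρNd : H F q k →ₐ[F] Module.End F (Module.Dual F N))
    (hρNd : ∀ (h : H F q k) (φ : Module.Dual F N) (y : N), ρNd h φ y = φ (ρN (τk h) y))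
    -- the outer tensor product M ⊠ N over H_{(m,k)}, and its induced module E1
    (ρT1 : ↥(parabolicC F q (n := m + k) [m, k]) →ₐ[F]
      Module.End F (TensorProduct F M N))
    (hT1 : IsOuter F q (m + k) m k [m, k] ρM ρN JM ρT1)
    (E1 : Type) [AddCommGroup E1] [Module F E1]
    (ρE1 : H F q (m + k) →ₐ[F] Module.End F E1)
    (ι1 : TensorProduct F M N →ₗ[F] E1)
    (hInd1 : IsInducedAlong F (A := H F q (m + k))
      (B := ↥(parabolicC F q (n := m + k) [m, k]))
      (parabolicC F q (n := m + k) [m, k]).val ρT1 ρE1 ι1)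
    -- the outer tensor product N^τ ⊠ M^τ over H_{(k,m)}, and its induced module E2
    (ρT2 : ↥(parabolicC F q (n := m + k) [k, m]) →ₐ[F]
      Module.End F (TensorProduct F (Module.Dual F N) (Module.Dual F M)))
    (hT2 : IsOuter F q (m + k) k m [k, m] ρNd ρMd (LinearMap.dualMap JN) ρT2)
    (E2 : Type) [AddCommGroup E2] [Module F E2]
    (ρE2 : H F q (m + k) →ₐ[F] Module.End F E2)
    (ι2 : TensorProduct F (Module.Dual F N) (Module.Dual F M) →ₗ[F] E2)
    (hInd2 : IsInducedAlong F (A := H F q (m + k))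
      (B := ↥(parabolicC F q (n := m + k) [k, m]))
      (M := TensorProduct F (Module.Dual F N) (Module.Dual F M)) (E := E2)
      (parabolicC F q (n := m + k) [k, m]).val ρT2 ρE2 ι2) :
    -- conclusion: (ind M ⊠ N)^τ ≅ ind (N^τ ⊠ M^τ)
    ∃ Φ : Module.Dual F E1 ≃ₗ[F] E2,
      ∀ (h : H F q (m + k)) (φ : Module.Dual F E1),
        Φ (φ.comp (ρE1 (τmk h))) = ρE2 h (Φ φ) := by
  have hn : m + k = k + m := add_comm m k
  have hm : m ≤ m + k := by omega
  have hk : k ≤ m + k := by omega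
  obtain ⟨G, hG⟩ := hInd1.indFam rfl hm
  obtain ⟨G', hG'⟩ := hInd2.indFam hn hk
  let top : E1 →ₗ[F] TensorProduct F M N := LinearMap.proj ((Sh.base hk).compl hn) ∘ₗ G
  let f : TensorProduct F (Module.Dual F N) (Module.Dual F M) →ₗ[F] Module.Dual F E1 :=
    LinearMap.lcomp F F top ∘ₗ signPair JM JN
  have hf : ∀ ω e, f ω e = signPair JM JN ω (G e ((Sh.base hk).compl hn)) := fun _ _ => rfl
  let ρP := dualRep ρE1 τmk hτmk.2.2.1 hτmk.2.1
  have hP : ∀ h φ e, ρP h φ e = φ (ρE1 (τmk h) e) := fun _ _ _ => rfl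
  have hequiv : ∀ b ω, f (ρT2 b ω) = ρP ((parabolicC F q (n := m + k) [k, m]).val b) (f ω) := by
    intro b
    induction b using parabolicC_induction q hn with
    | hF r => intro ω; simp [Module.algebraMap_end_apply]
    | hX i =>
      intro ω; refine LinearMap.ext fun e => ?_
      have hv : (parabolicC F q (n := m + k) [k, m]).val (parX q [k, m] i) = X F q i := rfl
      rw [hv, hP, hτmk.2.2.2.2.2.1, hf, hf, hG.top_X hn hk,
        adjoint_X hn hk hδm hδk hτm hτk hJMρ hJNρ hρMd hρNd hT1 hT2]
    | hC i =>
      intro ω; refine LinearMap.ext fun e => ?_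
      have hv : (parabolicC F q (n := m + k) [k, m]).val (parC q [k, m] i) = C F q i := rfl
      rw [hv, hP, hτmk.2.2.2.2.1, hf, hf, hG.top_C hn hk,
        adjoint_C hn hk hJM2 hJN2 hδm hδk hτm hτk hJMρ hJNρ hρMd hρNd hT1 hT2]
    | hT i hi' =>
      intro ω; refine LinearMap.ext fun e => ?_
      have hv : (parabolicC F q (n := m + k) [k, m]).val (parT q hn i) = T F q i :=
        parT_coe q hn i hi'
      rw [hv, hP, map_tau_T hτmk, hf, hf, tauT, LinearMap.add_apply, LinearMap.smul_apply,
        Module.End.mul_apply, map_add, map_smul, Pi.add_apply, Pi.smul_apply, hG.top_T hn hk i hi',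
        hG.top_C hn hk, hG.top_C hn hk,
        adjoint_T rfl hn hk hJM2 hδm hδk hτm hτk hJMρ hJNρ hρMd hρNd hT1 hT2 i hi']
    | hmul a b ha hb => intro ω; rw [map_mul, map_mul, map_mul, Module.End.mul_apply, ha, hb]; rfl
    | hadd a b ha hb =>
      intro ω
      rw [map_add, map_add, map_add, LinearMap.add_apply, map_add, ha, hb]; rfl
  obtain ⟨Θ, ⟨hΘ, hΘι⟩, -⟩ := hInd2.2 _ ρP f hequiv
  have hbij : Function.Bijective Θ := by
    refine hG.bijective_dual hG' hn (signPair_injective h2 hJM2 hJN2) ?_ (fun i e' e => ?_)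
      (fun ω e => by rw [hΘι, hf])
    · rw [Module.finrank_tensorProduct, Module.finrank_tensorProduct, Subspace.dual_finrank_eq,
        Subspace.dual_finrank_eq, mul_comm]
    · rw [hΘ, hP, map_tau_T hτmk]; rfl
  refine ⟨(LinearEquiv.ofBijective Θ hbij).symm, fun h φ => ?_⟩
  rw [LinearEquiv.symm_apply_eq, LinearEquiv.ofBijective_apply, hΘ,
    ← LinearEquiv.ofBijective_apply (hf := hbij), LinearEquiv.apply_symm_apply]
  rfl

end HC
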